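/- Let n ≥ 2 and 0 < α < 1. Let Ω ⊂ ℝⁿ be a bounded domain with 0 ∈ ∂Ω and let u solve Δu = f in Ω∩B₁ and u = g on ∂Ω∩B₁. Suppose u ∈ C^{1,α}(0), f ∈ C^{α}(0), g ∈ C^{2,α}(0), ∂Ω ∈ C^{1,α}(0), and u(0) = |Du(0)| = 0 and |Dg(0)| = 0. Then u ∈ C^{2,α}(0): there exist a constant C, depending only on n, α and ‖∂Ω∩B₁‖_{C^{1,α}(0)}, and a homogeneous polynomial P of degree 2 such that |u(x) − P(x)| ≤ C|x|^{2+α}(‖u‖_{L^∞(Ω∩B₁)} + ‖f‖_{C^{α}(0)} + ‖g‖_{C^{2,α}(0)}) for all x ∈ Ω∩B₁, |D²u(0)| ≤ C(‖u‖_{L^∞(Ω∩B₁)} + ‖f‖_{C^{α}(0)} + ‖g‖_{C^{2,α}(0)}), and moreover ΔP = f(0) and P(x′,0) ≡ P_g(x′,0). -/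

import Mathlib

open MvPolynomial Metric Set MeasureTheory Bornology

noncomputable section

/-- `ℝⁿ` with the Euclidean norm. -/
abbrev En (n : ℕ) := EuclideanSpace ℝ (Fin n)

variable {n : ℕ}

/-- Evaluation of a multivariate polynomial at a point of `ℝⁿ`. -/
def peval (P : MvPolynomial (Fin n) ℝ) (x : En n) : ℝ :=
  MvPolynomial.eval (fun i => x i) P

/-- Total degree of a monomial (multi-index). -/
def mdeg (d : Fin n →₀ ℕ) : ℕ := d.sum fun _ e => e

/-- `σ!` for a multi-index `σ`. -/
def mfact (d : Fin n →₀ ℕ) : ℕ := d.prod fun _ e => Nat.factorial e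

/-- The norm `‖P‖ = Σ_σ |a_σ|` of a polynomial `P = Σ_σ (a_σ/σ!) x^σ`. -/
def pnorm (P : MvPolynomial (Fin n) ℝ) : ℝ :=
  ∑ d ∈ P.support, (mfact d : ℝ) * |MvPolynomial.coeff d P|

/-- `|D^i P(0)|`, the Euclidean norm of the `i`-th derivative of `P` at `0`. -/
def derivNorm (i : ℕ) (P : MvPolynomial (Fin n) ℝ) : ℝ :=
  Real.sqrt (∑ d ∈ P.support.filter (fun d => mdeg d = i),
    ((mfact d : ℝ) * MvPolynomial.coeff d P) ^ 2)

/-- Polynomial Laplacian. -/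
def plap (P : MvPolynomial (Fin n) ℝ) : MvPolynomial (Fin n) ℝ :=
  ∑ i, MvPolynomial.pderiv i (MvPolynomial.pderiv i P)

/-- The index of the last coordinate. -/
def lastIdx (n : ℕ) [NeZero n] : Fin n :=
  ⟨n - 1, Nat.sub_lt (Nat.pos_of_ne_zero (NeZero.ne n)) Nat.one_pos⟩

variable [NeZero n]

/-- The last coordinate `x_n`. -/
def xn (x : En n) : ℝ := x (lastIdx n)

/-- `|x′|`, the norm of the first `n-1` coordinates. -/
def xpn (x : En n) : ℝ :=
  Real.sqrt (∑ i ∈ Finset.univ.erase (lastIdx n), (x i) ^ 2)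

/-- Substitution of the polynomial `q` for the last variable `x_n`. -/
def substLast (q P : MvPolynomial (Fin n) ℝ) : MvPolynomial (Fin n) ℝ :=
  MvPolynomial.aeval (fun i => if i = lastIdx n then q else MvPolynomial.X i) P

/-- The pointwise Laplacian of `u` at `x` (sum of pure second derivatives). -/
def lapAt (u : En n → ℝ) (x : En n) : ℝ :=
  ∑ i, fderiv ℝ (fderiv ℝ u) x (EuclideanSpace.single i 1) (EuclideanSpace.single i 1)

/-- `u` is a (classical) solution of `Δu = f` in `Ω ∩ B₁`, `u = g` on `∂Ω ∩ B₁`. -/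
def SolvesDirichlet (Ω : Set (En n)) (u f g : En n → ℝ) : Prop :=
  ContinuousOn u (closure Ω ∩ ball 0 1) ∧
  (∀ x ∈ Ω ∩ ball (0 : En n) 1,
    DifferentiableAt ℝ u x ∧ DifferentiableAt ℝ (fderiv ℝ u) x ∧ lapAt u x = f x) ∧
  (∀ x ∈ frontier Ω ∩ ball (0 : En n) 1, u x = g x)

/-- `u` is a (classical) solution of the oblique derivative problem `Δu = f` in `Ω ∩ B₁`,
`β·Du = g` on `∂Ω ∩ B₁`, with `‖β‖_∞ ≤ 1` and `β·e_n ≥ a₀`; `Du` is the (continuous up to the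
boundary) gradient of `u`. -/
def SolvesOblique (Ω : Set (En n)) (u f g : En n → ℝ) (β Du : En n → En n) (a₀ : ℝ) : Prop :=
  ContinuousOn u (closure Ω ∩ ball 0 1) ∧
  ContinuousOn Du (closure Ω ∩ ball 0 1) ∧
  (∀ x ∈ Ω ∩ ball (0 : En n) 1,
    DifferentiableAt ℝ u x ∧ (∀ i, fderiv ℝ u x (EuclideanSpace.single i 1) = Du x i) ∧
    DifferentiableAt ℝ (fderiv ℝ u) x ∧ lapAt u x = f x) ∧
  (∀ x ∈ frontier Ω ∩ ball (0 : En n) 1,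
    (∑ i, β x i * Du x i) = g x ∧ ‖β x‖ ≤ 1 ∧ a₀ ≤ β x (lastIdx n))

/-- `∂Ω ∈ C^{m,α}(0)` with polynomial `P_Ω = P` and constant `K`. -/
def DomainCmα (m : ℕ) (α K : ℝ) (P : MvPolynomial (Fin n) ℝ) (Ω : Set (En n)) : Prop :=
  P.totalDegree ≤ m ∧ MvPolynomial.coeff 0 P = 0 ∧
  MvPolynomial.pderiv (lastIdx n) P = 0 ∧
  (1 ≤ m → ∀ i, MvPolynomial.coeff (Finsupp.single i 1) P = 0) ∧
  (∀ x : En n, ‖x‖ < 1 → xn x > peval P x + K * (xpn x) ^ ((m : ℝ) + α) → x ∈ Ω) ∧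
  (∀ x : En n, ‖x‖ < 1 → xn x < peval P x - K * (xpn x) ^ ((m : ℝ) + α) → x ∉ Ω)

/-- `∂Ω ∈ C^{1,α}(0)` with constant `K` (the degree-one polynomial is necessarily `0`). -/
def Domain1α (α K : ℝ) (Ω : Set (En n)) : Prop :=
  (∀ x : En n, ‖x‖ < 1 → xn x > K * (xpn x) ^ ((1 : ℝ) + α) → x ∈ Ω) ∧
  (∀ x : En n, ‖x‖ < 1 → xn x < -(K * (xpn x) ^ ((1 : ℝ) + α)) → x ∉ Ω)

/-- `[∂Ω∩B₁]_{C^{0,1}(0)} ≤ δ`. -/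
def DomainLip (δ : ℝ) (Ω : Set (En n)) : Prop :=
  (∀ x : En n, ‖x‖ < 1 → xn x > δ * xpn x → x ∈ Ω) ∧
  (∀ x : En n, ‖x‖ < 1 → xn x < -(δ * xpn x) → x ∉ Ω)

/-- `osc_{B₁} ∂Ω ≤ δ`. -/
def FrontierOscLe (Ω : Set (En n)) (δ : ℝ) : Prop :=
  ∀ x ∈ frontier Ω ∩ ball (0 : En n) 1, ∀ y ∈ frontier Ω ∩ ball (0 : En n) 1,
    xn x - xn y ≤ δ

/-- The `L^n` norm of `f` on a set `S ⊆ ℝⁿ`. -/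
def LnNorm (n : ℕ) (S : Set (En n)) (f : En n → ℝ) : ℝ :=
  (∫ x in S, |f x| ^ (n : ℝ)) ^ ((n : ℝ)⁻¹)

/-- `∂Ω` is `C^{m,α}` at the point `x₀` with constants `K, r₀`: after an isometric change of
coordinates `φ` taking `x₀` to `0`, the boundary is trapped between `P_Ω(x′) ± K|x′|^{m+α}`. -/
def BoundaryPtCmα (m : ℕ) (α K r₀ : ℝ) (Ω : Set (En n)) (x₀ : En n) : Prop :=
  ∃ (φ : En n ≃ᵢ En n) (P : MvPolynomial (Fin n) ℝ), φ x₀ = 0 ∧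
    P.totalDegree ≤ m ∧ MvPolynomial.coeff 0 P = 0 ∧
    MvPolynomial.pderiv (lastIdx n) P = 0 ∧
    (1 ≤ m → ∀ i, MvPolynomial.coeff (Finsupp.single i 1) P = 0) ∧
    (∀ y : En n, ‖y‖ < r₀ → xn y > peval P y + K * (xpn y) ^ ((m : ℝ) + α) → φ.symm y ∈ Ω) ∧
    (∀ y : En n, ‖y‖ < r₀ → xn y < peval P y - K * (xpn y) ^ ((m : ℝ) + α) → φ.symm y ∉ Ω)

/-- `∂Ω ∩ B₁ ∈ C^{m,α}`: pointwise `C^{m,α}` with constants uniform on compact subsets. -/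
def BoundaryCmα (m : ℕ) (α : ℝ) (Ω : Set (En n)) : Prop :=
  ∀ S : Set (En n), IsCompact S → S ⊆ frontier Ω ∩ ball (0 : En n) 1 →
    ∃ K r₀ : ℝ, 0 ≤ K ∧ 0 < r₀ ∧ ∀ x₀ ∈ S, BoundaryPtCmα m α K r₀ Ω x₀

/-- `∂Ω ∩ B₁ ∈ C^∞`. -/
def BoundarySmooth (Ω : Set (En n)) : Prop :=
  ∀ m : ℕ, 1 ≤ m → ∀ α : ℝ, 0 < α → α ≤ 1 → BoundaryCmα m α Ω

/-- `u ∈ C^∞(Ω̄ ∩ B₁)`: near every point of `Ω̄ ∩ B₁`, `u` agrees on `Ω` with a globally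
smooth function. -/
def SmoothUpToBoundary (Ω : Set (En n)) (u : En n → ℝ) : Prop :=
  ∀ x₀ ∈ closure Ω ∩ ball (0 : En n) 1, ∃ ε : ℝ, 0 < ε ∧ ∃ v : En n → ℝ,
    ContDiff ℝ (⊤ : ℕ∞) v ∧ ∀ x ∈ Ω ∩ ball x₀ ε, v x = u x

open MvPolynomial Metric Set MeasureTheory Bornology

namespace PB
open Filter Topology

/-- generalized Laplacian -/
def HasLap {n : ℕ} (w : (Fin n → ℝ) → ℝ) (x : Fin n → ℝ) (L : ℝ) : Prop :=
  Tendsto (fun t : ℝ => ∑ i, (w (x + Pi.single i t) + w (x - Pi.single i t) - 2 * w x) / t ^ 2)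
    (𝓝[>] 0) (𝓝 L)

variable {n : ℕ}

lemma HasLap.add {w v : (Fin n → ℝ) → ℝ} {x : Fin n → ℝ} {L M : ℝ}
    (h1 : HasLap w x L) (h2 : HasLap v x M) : HasLap (fun y => w y + v y) x (L + M) := by
  unfold HasLap at *
  refine (h1.add h2).congr fun t => ?_
  rw [← Finset.sum_add_distrib]
  refine Finset.sum_congr rfl fun i _ => ?_
  ring

lemma HasLap.const_mul {w : (Fin n → ℝ) → ℝ} {x : Fin n → ℝ} {L : ℝ}
    (h1 : HasLap w x L) (c : ℝ) : HasLap (fun y => c * w y) x (c * L) := by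
  unfold HasLap at *
  refine (h1.const_mul c).congr fun t => ?_
  rw [Finset.mul_sum]
  refine Finset.sum_congr rfl fun i _ => ?_
  ring

lemma HasLap.neg {w : (Fin n → ℝ) → ℝ} {x : Fin n → ℝ} {L : ℝ}
    (h1 : HasLap w x L) : HasLap (fun y => - w y) x (-L) := by
  have := h1.const_mul (-1)
  simpa using this

lemma HasLap.sub {w v : (Fin n → ℝ) → ℝ} {x : Fin n → ℝ} {L M : ℝ}
    (h1 : HasLap w x L) (h2 : HasLap v x M) : HasLap (fun y => w y - v y) x (L - M) := by
  have := h1.add h2.neg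
  simpa [sub_eq_add_neg] using this

/-- exact second differences -/
lemma HasLap.of_exact {w : (Fin n → ℝ) → ℝ} {x : Fin n → ℝ} (D : Fin n → ℝ)
    (h : ∀ i t, w (x + Pi.single i t) + w (x - Pi.single i t) - 2 * w x = D i * t ^ 2) :
    HasLap w x (∑ i, D i) := by
  unfold HasLap
  refine tendsto_const_nhds.congr' ?_
  filter_upwards [self_mem_nhdsWithin] with t ht
  have : t ≠ 0 := ne_of_gt ht
  refine Finset.sum_congr rfl fun i _ => ?_
  rw [h]; field_simp

/-- coordinate reflections and translations -/
lemma HasLap.comp {w : (Fin n → ℝ) → ℝ} {x : Fin n → ℝ} {L : ℝ} (σ c : Fin n → ℝ)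
    (hσ : ∀ i, σ i = 1 ∨ σ i = -1)
    (h1 : HasLap w (fun j => σ j * x j + c j) L) :
    HasLap (fun y => w (fun j => σ j * y j + c j)) x L := by
  unfold HasLap at *
  refine h1.congr fun t => ?_
  refine Finset.sum_congr rfl fun i _ => ?_
  congr 2
  have e1 : (fun j => σ j * (x + Pi.single i t : Fin n → ℝ) j + c j)
      = (fun j => σ j * x j + c j) + Pi.single i (σ i * t) := by
    funext j
    by_cases hj : j = i
    · subst hj; simp; ring
    · simp [hj]
  have e2 : (fun j => σ j * (x - Pi.single i t : Fin n → ℝ) j + c j)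
      = (fun j => σ j * x j + c j) - Pi.single i (σ i * t) := by
    funext j
    by_cases hj : j = i
    · subst hj; simp; ring
    · simp [hj]
  beta_reduce
  rw [e1, e2]
  rcases hσ i with h | h <;> rw [h]
  · simp
  · simp only [neg_mul, one_mul, Pi.single_neg, sub_neg_eq_add, ← sub_eq_add_neg]
    ring

lemma HasLap.translate {w : (Fin n → ℝ) → ℝ} {x : Fin n → ℝ} {L : ℝ} (c : Fin n → ℝ)
    (h1 : HasLap w (x + c) L) : HasLap (fun y => w (y + c)) x L := by
  have := HasLap.comp (w := w) (x := x) (L := L) (fun _ => 1) c (fun _ => Or.inl rfl)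
    (by simpa [Pi.add_def] using h1)
  simpa [Pi.add_def] using this

/-- interior max -/
lemma HasLap.nonpos_of_max {w : (Fin n → ℝ) → ℝ} {x : Fin n → ℝ} {L : ℝ}
    (h1 : HasLap w x L) (hm : ∀ᶠ y in 𝓝 x, w y ≤ w x) : L ≤ 0 := by
  refine le_of_tendsto h1 ?_
  have a1 : ∀ i, ∀ᶠ t in 𝓝[>] (0:ℝ), w (x + Pi.single i t) ≤ w x := fun i => by
    have : Tendsto (fun t : ℝ => x + Pi.single i t) (𝓝[>] 0) (𝓝 x) := by
      have hc : Continuous (fun t : ℝ => x + Pi.single i t) :=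
        continuous_const.add (continuous_single (A := fun _ : Fin n => ℝ) i)
      have := hc.tendsto 0
      simp at this
      exact this.mono_left nhdsWithin_le_nhds
    exact this.eventually hm
  have a2 : ∀ i, ∀ᶠ t in 𝓝[>] (0:ℝ), w (x - Pi.single i t) ≤ w x := fun i => by
    have : Tendsto (fun t : ℝ => x - Pi.single i t) (𝓝[>] 0) (𝓝 x) := by
      have hc : Continuous (fun t : ℝ => x - Pi.single i t) :=
        continuous_const.sub (continuous_single (A := fun _ : Fin n => ℝ) i)
      have := hc.tendsto 0
      simp at this
      exact this.mono_left nhdsWithin_le_nhds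
    exact this.eventually hm
  filter_upwards [eventually_all.2 a1, eventually_all.2 a2] with t h1 h2
  refine Finset.sum_nonpos fun i _ => ?_
  refine div_nonpos_of_nonpos_of_nonneg ?_ (sq_nonneg _)
  linarith [h1 i, h2 i]

/-- strict maximum principle -/
lemma mp_strict {K : Set (Fin n → ℝ)} (hK : IsCompact K) {v : (Fin n → ℝ) → ℝ}
    (hv : ContinuousOn v K)
    (H : ∀ x ∈ K, v x ≤ 0 ∨ (K ∈ 𝓝 x ∧ ∃ L, HasLap v x L ∧ 0 < L)) :
    ∀ x ∈ K, v x ≤ 0 := by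
  intro x hx
  obtain ⟨z, hz, hmax⟩ := hK.exists_isMaxOn ⟨x, hx⟩ hv
  rcases H z hz with h | ⟨hn, L, hL, hpos⟩
  · exact (hmax hx).trans h
  · exfalso
    have := hL.nonpos_of_max (by filter_upwards [hn] with y hy using hmax hy)
    linarith

/-- quadratic barrier -/
def bar (m : Fin n) (c : Fin n → ℝ) (k B P Q : ℝ) (y : Fin n → ℝ) : ℝ :=
  k + B * (y m - c m) + P * (y m - c m) ^ 2 + Q * ∑ j ∈ Finset.univ.erase m, (y j - c j) ^ 2

lemma bar_cont (m : Fin n) (c : Fin n → ℝ) (k B P Q : ℝ) : Continuous (bar m c k B P Q) := by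
  unfold bar; fun_prop

lemma bar_lap (m : Fin n) (c : Fin n → ℝ) (k B P Q : ℝ) (x : Fin n → ℝ) :
    HasLap (bar m c k B P Q) x (2 * P + 2 * (n - 1) * Q) := by
  have := HasLap.of_exact (w := bar m c k B P Q) (x := x) (fun i => if i = m then 2 * P else 2 * Q)
    (by
      intro i t
      unfold bar
      have hs : ∀ s : ℝ, ∑ j ∈ Finset.univ.erase m, ((x + Pi.single i s : Fin n → ℝ) j - c j) ^ 2
          = ∑ j ∈ Finset.univ.erase m, (x j - c j) ^ 2
            + if i = m then 0 else (2 * (x i - c i) * s + s ^ 2) := by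
        intro s
        have : ∀ j, ((x + Pi.single i s : Fin n → ℝ) j - c j) ^ 2 = (x j - c j) ^ 2
            + if j = i then (2 * (x i - c i) * s + s ^ 2) else 0 := by
          intro j
          by_cases hj : j = i
          · subst hj; simp; ring
          · simp [hj]
        simp only [this, Finset.sum_add_distrib, Finset.sum_ite_eq']
        congr 1
        by_cases h : i = m <;> simp [h]
      have hneg : x - Pi.single i t = x + Pi.single i (-t) := by
        simp [Pi.single_neg, sub_eq_add_neg]
      rw [hneg, hs, hs]
      by_cases h : i = m
      · subst h; simp; ring
      · have : m ≠ i := fun h' => h h'.symm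
        simp [h, this]; ring)
  convert this using 1
  rw [Finset.sum_ite, Finset.sum_const, Finset.sum_const, Finset.filter_eq' , Finset.filter_ne']
  have : 1 ≤ n := m.pos
  simp [Nat.cast_sub this]; ring

lemma barrier_abs (m : Fin n) (c : Fin n → ℝ) (k B P Q : ℝ)
    {K : Set (Fin n → ℝ)} (hK : IsCompact K) {w : (Fin n → ℝ) → ℝ}
    (hw : ContinuousOn w K)
    (H : ∀ x ∈ K, |w x| ≤ bar m c k B P Q x ∨
      (K ∈ 𝓝 x ∧ ∃ L, HasLap w x L ∧ |L| + 2 * P + 2 * (n - 1) * Q ≤ 0)) :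
    ∀ x ∈ K, |w x| ≤ bar m c k B P Q x := by
  obtain ⟨R, hR⟩ : ∃ R, ∀ x ∈ K, (x m - c m) ^ 2 ≤ R := by
    obtain ⟨R, hR⟩ := (hK.image (f := fun x : Fin n → ℝ => (x m - c m) ^ 2) (by fun_prop)).bddAbove
    exact ⟨R, fun x hx => hR ⟨x, hx, rfl⟩⟩
  -- one sided
  have one : ∀ w : (Fin n → ℝ) → ℝ, ContinuousOn w K →
      (∀ x ∈ K, w x ≤ bar m c k B P Q x ∨
      (K ∈ 𝓝 x ∧ ∃ L, HasLap w x L ∧ -L + 2 * P + 2 * (n - 1) * Q ≤ 0)) →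
      ∀ x ∈ K, w x ≤ bar m c k B P Q x := by
    intro w hw H x hx
    refine le_of_forall_pos_le_add fun ε hε => ?_
    set δ := ε / (|R| + 1) with hδ
    have hδ0 : 0 < δ := by positivity
    have key := mp_strict hK (v := fun y => w y - bar m c (k + δ * R) B (P - δ) Q y)
      (hw.sub (bar_cont _ _ _ _ _ _).continuousOn) (by
        intro y hy
        rcases H y hy with h | ⟨h1, L, hL, h2⟩
        · left
          unfold bar at h ⊢
          nlinarith [hR y hy]
        · right
          refine ⟨h1, _, hL.sub (bar_lap _ _ _ _ _ _ _), ?_⟩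
          linarith) x hx
    have hδR : δ * R ≤ ε := by
      rw [hδ, div_mul_eq_mul_div, div_le_iff₀ (by positivity)]
      nlinarith [le_abs_self R]
    unfold bar at key ⊢
    nlinarith [sq_nonneg (x m - c m)]
  intro x hx
  refine abs_le.2 ⟨?_, ?_⟩
  · have := one (fun y => - w y) hw.neg (by
      intro y hy
      rcases H y hy with h | ⟨h1, L, hL, h2⟩
      · left; linarith [neg_abs_le (w y)]
      · right; exact ⟨h1, _, hL.neg, by linarith [le_abs_self L]⟩) x hx
    linarith
  · exact one w hw (by
      intro y hy
      rcases H y hy with h | ⟨h1, L, hL, h2⟩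
      · left; linarith [le_abs_self (w y)]
      · right; exact ⟨h1, _, hL, by linarith [neg_abs_le L]⟩) x hx

end PB

namespace PB
open Filter Topology Set
variable {n : ℕ}

lemma compact_of_box {F : Set (Fin n → ℝ)} (hF : IsClosed F) {r : ℝ}
    (hb : ∀ x ∈ F, ∀ i, |x i| ≤ r) : IsCompact F := by
  refine IsCompact.of_isClosed_subset (isCompact_Icc (a := fun _ => -r) (b := fun _ => r)) hF ?_
  intro x hx
  exact ⟨fun i => (abs_le.1 (hb x hx i)).1, fun i => (abs_le.1 (hb x hx i)).2⟩

lemma sum_ge_of_side {m : Fin n} {y c : Fin n → ℝ} {j : Fin n} (hj : j ≠ m) {d : ℝ} (hd : 0 ≤ d)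
    (h : d ≤ |y j - c j|) : d ^ 2 ≤ ∑ j ∈ Finset.univ.erase m, (y j - c j) ^ 2 := by
  have h1 : (y j - c j) ^ 2 ≤ ∑ j ∈ Finset.univ.erase m, (y j - c j) ^ 2 :=
    Finset.single_le_sum (f := fun j => (y j - c j) ^ 2) (fun i _ => sq_nonneg _)
      (Finset.mem_erase.2 ⟨hj, Finset.mem_univ _⟩)
  have h2 : d ^ 2 ≤ (y j - c j) ^ 2 := by
    rw [← sq_abs (y j - c j)]; gcongr
  exact h2.trans h1

/-- boundary Lipschitz estimate -/
lemma bdry (l : Fin n) {F : Set (Fin n → ℝ)} (hF : IsClosed F) {w : (Fin n → ℝ) → ℝ}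
    {h r S E : ℝ} (hr : 0 < r) (hh : 0 ≤ h) (hhr : h ≤ r / 2) (hS : 0 ≤ S) (hE : 0 ≤ E)
    (hFb : ∀ x ∈ F, ∀ i, |x i| ≤ r) (hlow : ∀ x ∈ F, -h ≤ x l) (hw : ContinuousOn w F)
    (hSw : ∀ x ∈ F, |w x| ≤ S)
    (H : ∀ x ∈ F, (∀ i, |x i| < r) → |w x| ≤ E ∨
      (F ∈ 𝓝 x ∧ ∃ L, HasLap w x L ∧ r ^ 2 * |L| ≤ E))
    (x : Fin n → ℝ) (hx : x ∈ F) (hx2 : ∀ i, |x i| ≤ r / 2) :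
    |w x| ≤ (8 * n + 1) * S * ((x l + h) / r) + 5 * E := by
  set K : Set (Fin n → ℝ) := F ∩ {y | ∀ j, j ≠ l → |y j - x j| ≤ r / 2} with hKdef
  have hKc : IsClosed K := by
    refine hF.inter ?_
    have : {y : Fin n → ℝ | ∀ j, j ≠ l → |y j - x j| ≤ r / 2}
        = ⋂ j, ⋂ (_ : j ≠ l), {y : Fin n → ℝ | |y j - x j| ≤ r / 2} := by ext y; simp
    rw [this]
    exact isClosed_iInter fun j => isClosed_iInter fun _ =>
      isClosed_le (by fun_prop) continuous_const
  have hK : IsCompact K := compact_of_box hKc (fun y hy => hFb y hy.1)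
  set c : Fin n → ℝ := Function.update x l (-h) with hc
  have hcl : c l = -h := by simp [hc]
  have hcj : ∀ j, j ≠ l → c j = x j := fun j hj => by simp [hc, hj]
  have hn1 : (0:ℝ) ≤ n := Nat.cast_nonneg n
  have hbar : ∀ y, bar l c E (((8 * n + 1) * S + 2 * E) / r) (-(4 * n * S + E) / r ^ 2)
      (4 * S / r ^ 2) y = E + S * ((8 * n + 1) * ((y l + h) / r) - 4 * n * ((y l + h) / r) ^ 2)
        + E * (2 * ((y l + h) / r) - ((y l + h) / r) ^ 2)
        + 4 * S * ((∑ j ∈ Finset.univ.erase l, (y j - c j) ^ 2) / r ^ 2) := by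
    intro y
    unfold bar
    rw [hcl]
    field_simp
    ring
  have hsum0 : ∀ y : Fin n → ℝ, 0 ≤ ∑ j ∈ Finset.univ.erase l, (y j - c j) ^ 2 :=
    fun y => Finset.sum_nonneg fun i _ => sq_nonneg _
  have main := barrier_abs l c E (((8 * n + 1) * S + 2 * E) / r) (-(4 * n * S + E) / r ^ 2)
      (4 * S / r ^ 2) hK (hw.mono inter_subset_left) (by
    intro y hy
    rw [hbar]
    have hτ0 : 0 ≤ (y l + h) / r := div_nonneg (by linarith [hlow y hy.1]) hr.le
    have hτ1 : (y l + h) / r ≤ 3 / 2 := by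
      rw [div_le_iff₀ hr]; linarith [(abs_le.1 (hFb y hy.1 l)).2]
    set τ := (y l + h) / r with hτ
    have p1 : 0 ≤ (8 * n + 1) * τ - 4 * n * τ ^ 2 := by nlinarith [mul_nonneg hn1 hτ0]
    have p2 : 0 ≤ 2 * τ - τ ^ 2 := by nlinarith
    have q1 := mul_nonneg hS p1
    have q2 := mul_nonneg hE p2
    have q3 : 0 ≤ 4 * S * ((∑ j ∈ Finset.univ.erase l, (y j - c j) ^ 2) / r ^ 2) := by
      have := hsum0 y; positivity
    by_cases hside : ∃ j, j ≠ l ∧ r / 2 ≤ |y j - x j|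
    · left
      obtain ⟨j, hj, hj2⟩ := hside
      have h1 := sum_ge_of_side (y := y) (c := c) hj (by positivity : 0 ≤ r / 2)
        (by rw [hcj j hj]; exact hj2)
      have h2 : 1 / 4 ≤ (∑ j ∈ Finset.univ.erase l, (y j - c j) ^ 2) / r ^ 2 := by
        rw [le_div_iff₀ (by positivity)]; linarith
      have := hSw y hy.1
      nlinarith
    push Not at hside
    by_cases htop : r ≤ y l
    · left
      have t1 : 1 ≤ τ := by rw [hτ, le_div_iff₀ hr]; linarith
      have : 1 ≤ (8 * n + 1) * τ - 4 * n * τ ^ 2 := by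
        nlinarith [mul_nonneg hn1 hτ0, mul_nonneg (mul_nonneg hn1 hτ0) (sub_nonneg.2 hτ1)]
      have := hSw y hy.1
      nlinarith
    push Not at htop
    have hin : ∀ i, |y i| < r := by
      intro i
      by_cases hi : i = l
      · subst hi; rw [abs_lt]; exact ⟨by linarith [hlow y hy.1], htop⟩
      · have a := hside i hi
        have b := hx2 i
        rw [abs_lt] at *; rw [abs_le] at b
        constructor <;> linarith
    rcases H y hy.1 hin with h1 | ⟨h1, L, hL, h2⟩
    · left; linarith
    · right
      refine ⟨?_, L, hL, ?_⟩
      · refine inter_mem h1 ?_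
        have : ∀ j, ∀ᶠ z in 𝓝 y, j ≠ l → |z j - x j| ≤ r / 2 := by
          intro j
          by_cases hj : j = l
          · simp [hj]
          · have ho : IsOpen {z : Fin n → ℝ | |z j - x j| < r / 2} :=
              isOpen_lt (by fun_prop) continuous_const
            filter_upwards [ho.mem_nhds (hside j hj)] with z hz _
            exact le_of_lt hz
        exact eventually_all.2 this
      · have : |L| ≤ E / r ^ 2 := by rw [le_div_iff₀ (by positivity)]; linarith
        have e : |L| + 2 * (-(4 * n * S + E) / r ^ 2) + 2 * (n - 1) * (4 * S / r ^ 2)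
          = |L| - E / r ^ 2 - (8 * S + E) / r ^ 2 := by field_simp; ring
        rw [e]
        have : 0 ≤ (8 * S + E) / r ^ 2 := by positivity
        linarith) x ⟨hx, fun j _ => by simp; positivity⟩
  rw [hbar] at main
  have hz : ∑ j ∈ Finset.univ.erase l, (x j - c j) ^ 2 = 0 :=
    Finset.sum_eq_zero fun j hj => by rw [hcj j (Finset.ne_of_mem_erase hj)]; simp
  rw [hz] at main
  have hτ0 : 0 ≤ (x l + h) / r := div_nonneg (by linarith [hlow x hx]) hr.le
  have hτ1 : (x l + h) / r ≤ 1 := by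
    rw [div_le_iff₀ hr]; linarith [(abs_le.1 (hx2 l)).2]
  set τ := (x l + h) / r
  have p1 : 0 ≤ S * (4 * n * τ ^ 2) := by positivity
  have p2 : 0 ≤ E * τ ^ 2 := by positivity
  have p3 : E * τ ≤ E := mul_le_of_le_one_right hE hτ1
  rw [zero_div] at main
  nlinarith

end PB

namespace PB
open Filter Topology Set
variable {n : ℕ}

def FB (l : Fin n) (R : ℝ) : Set (Fin n → ℝ) := {x | (∀ i, |x i| ≤ R) ∧ 0 ≤ x l}

lemma FB_closed (l : Fin n) (R : ℝ) : IsClosed (FB l R) := by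
  have : FB l R = (⋂ i, {x : Fin n → ℝ | |x i| ≤ R}) ∩ {x | 0 ≤ x l} := by
    ext x; simp [FB]
  rw [this]
  exact (isClosed_iInter fun i => isClosed_le (by fun_prop) continuous_const).inter
    (isClosed_le continuous_const (by fun_prop))

lemma FB_mono (l : Fin n) {R R' : ℝ} (h : R' ≤ R) : FB l R' ⊆ FB l R :=
  fun _ hx => ⟨fun i => (hx.1 i).trans h, hx.2⟩

lemma FB_nhds (l : Fin n) {R : ℝ} {x : Fin n → ℝ} (h1 : ∀ i, |x i| < R) (h2 : 0 < x l) :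
    FB l R ∈ 𝓝 x := by
  have a : ∀ᶠ z in 𝓝 x, ∀ i, |z i| ≤ R := eventually_all.2 fun i => by
    have ho : IsOpen {z : Fin n → ℝ | |z i| < R} := isOpen_lt (by fun_prop) continuous_const
    filter_upwards [ho.mem_nhds (h1 i)] with z hz using le_of_lt hz
  have b : ∀ᶠ z in 𝓝 x, 0 ≤ z l := by
    have ho : IsOpen {z : Fin n → ℝ | 0 < z l} := isOpen_lt continuous_const (by fun_prop)
    filter_upwards [ho.mem_nhds h2] with z hz using le_of_lt hz
  filter_upwards [a, b] with z h1 h2 using ⟨h1, h2⟩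

structure Flat (l : Fin n) (R S E : ℝ) (w : (Fin n → ℝ) → ℝ) : Prop where
  cont : ContinuousOn w (FB l R)
  bd : ∀ x ∈ FB l R, |w x| ≤ S
  bot : ∀ x ∈ FB l R, x l = 0 → |w x| ≤ E
  lap : ∀ x, (∀ i, |x i| < R) → 0 < x l → ∃ L, HasLap w x L ∧ R ^ 2 * |L| ≤ E

lemma Flat.S_nonneg {l : Fin n} {R S E : ℝ} {w : (Fin n → ℝ) → ℝ} (h : Flat l R S E w)
    (hR : 0 ≤ R) : 0 ≤ S :=
  (abs_nonneg _).trans (h.bd 0 ⟨fun i => by simpa, by simp⟩)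

lemma Flat.E_nonneg {l : Fin n} {R S E : ℝ} {w : (Fin n → ℝ) → ℝ} (h : Flat l R S E w)
    (hR : 0 ≤ R) : 0 ≤ E :=
  (abs_nonneg _).trans (h.bot 0 ⟨fun i => by simpa, by simp⟩ rfl)

lemma Flat.mono {l : Fin n} {R S E R' S' E' : ℝ} {w : (Fin n → ℝ) → ℝ} (h : Flat l R S E w)
    (hR : R' ≤ R) (hR0 : 0 ≤ R') (hE : E ≤ E') (hS : ∀ x ∈ FB l R', |w x| ≤ S') :
    Flat l R' S' E' w where
  cont := h.cont.mono (FB_mono l hR)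
  bd := hS
  bot := fun x hx h0 => (h.bot x (FB_mono l hR hx) h0).trans hE
  lap := fun x hx h0 => by
    obtain ⟨L, hL, h1⟩ := h.lap x (fun i => (hx i).trans_le hR) h0
    refine ⟨L, hL, le_trans ?_ (h1.trans hE)⟩
    gcongr

lemma flat_L1 {l : Fin n} {R S E : ℝ} {w : (Fin n → ℝ) → ℝ} (hR : 0 < R) (h : Flat l R S E w)
    {x : Fin n → ℝ} (hx : x ∈ FB l (R / 2)) :
    |w x| ≤ (8 * n + 1) * S * (x l / R) + 5 * E := by
  have := bdry l (FB_closed l R) (w := w) (h := 0) hR le_rfl (by positivity)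
    (h.S_nonneg hR.le) (h.E_nonneg hR.le) (fun x hx => hx.1) (fun x hx => by simpa using hx.2)
    h.cont h.bd (by
      intro y hy hy2
      rcases eq_or_lt_of_le hy.2 with h0 | h0
      · left; exact h.bot y hy h0.symm
      · right; exact ⟨FB_nhds l hy2 h0, h.lap y hy2 h0⟩) x (FB_mono l (by linarith) hx) hx.1
  simpa using this

lemma flat_L2 {l : Fin n} {R S E : ℝ} {w : (Fin n → ℝ) → ℝ} (hR : 0 < R) (h : Flat l R S E w)
    {x y : Fin n → ℝ} (hx : x ∈ FB l (R / 4)) (hy : y ∈ FB l (R / 4)) (i : Fin n) (hi : i ≠ l)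
    (hxy : ∀ j, j ≠ i → x j = y j) (hle : x i ≤ y i) :
    |w y - w x| ≤ (4 * n + 4) * S * ((y i - x i) / R) + 4 * E := by
  have hS := h.S_nonneg hR.le
  have hE := h.E_nonneg hR.le
  have hn1 : (0:ℝ) ≤ n := Nat.cast_nonneg n
  set c0 := (x i + y i) / 2 with hc0
  have hxi := abs_le.1 (hx.1 i)
  have hyi := abs_le.1 (hy.1 i)
  set σ : Fin n → ℝ := fun j => if j = i then -1 else 1 with hσ
  set cc : Fin n → ℝ := fun j => if j = i then 2 * c0 else 0 with hcc
  set T : (Fin n → ℝ) → (Fin n → ℝ) := fun z j => σ j * z j + cc j with hT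
  have hTi : ∀ z, T z i = 2 * c0 - z i := fun z => by simp [hT, hσ, hcc]; ring
  have hTj : ∀ z j, j ≠ i → T z j = z j := fun z j hj => by simp [hT, hσ, hcc, hj]
  have hTcont : Continuous T := by
    rw [hT]; fun_prop
  have hTy : T y = x := by
    funext j
    by_cases hj : j = i
    · rw [hj, hTi]; ring
    · rw [hTj _ _ hj, hxy j hj]
  set K : Set (Fin n → ℝ) := {z | (c0 ≤ z i ∧ z i ≤ c0 + R / 4 ∧ 0 ≤ z l) ∧
    ∀ j, j ≠ i → |z j - y j| ≤ R / 4} with hKdef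
  have hKF : ∀ z ∈ K, z ∈ FB l (R / 2) := by
    intro z hz
    refine ⟨fun j => ?_, hz.1.2.2⟩
    by_cases hj : j = i
    · rw [hj, abs_le]; constructor <;> linarith [hz.1.1, hz.1.2.1]
    · have a := abs_le.1 (hz.2 j hj)
      have b := abs_le.1 (hy.1 j)
      rw [abs_le]; constructor <;> linarith
  have hKT : ∀ z ∈ K, T z ∈ FB l (R / 2) := by
    intro z hz
    refine ⟨fun j => ?_, ?_⟩
    · by_cases hj : j = i
      · rw [hj, hTi, abs_le]; constructor <;> linarith [hz.1.1, hz.1.2.1]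
      · rw [hTj z j hj]; exact (hKF z hz).1 j
    · rw [hTj z l hi.symm]; exact hz.1.2.2
  have hKc : IsClosed K := by
    have : K = {z : Fin n → ℝ | c0 ≤ z i} ∩ ({z : Fin n → ℝ | z i ≤ c0 + R / 4} ∩
        ({z : Fin n → ℝ | 0 ≤ z l} ∩
        ⋂ j, ⋂ (_ : j ≠ i), {z : Fin n → ℝ | |z j - y j| ≤ R / 4})) := by
      ext z; simp [hKdef, and_assoc]
    rw [this]
    refine (isClosed_le continuous_const (by fun_prop)).inter
      ((isClosed_le (by fun_prop) continuous_const).inter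
      ((isClosed_le continuous_const (by fun_prop)).inter ?_))
    exact isClosed_iInter fun j => isClosed_iInter fun _ =>
      isClosed_le (by fun_prop) continuous_const
  have hK : IsCompact K := compact_of_box hKc (fun z hz => (hKF z hz).1)
  set c : Fin n → ℝ := Function.update y i c0 with hc
  have hci : c i = c0 := by simp [hc]
  have hcj : ∀ j, j ≠ i → c j = y j := fun j hj => by simp [hc, hj]
  have hbar : ∀ z, bar i c (2 * E) (((8 * n + 8) * S + 2 * E) / R) (-(32 * n * S + 2 * E) / R ^ 2)
      (32 * S / R ^ 2) z = 2 * E + S * ((8 * n + 8) * ((z i - c0) / R)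
          - 32 * n * ((z i - c0) / R) ^ 2)
        + 2 * E * (((z i - c0) / R) - ((z i - c0) / R) ^ 2)
        + 32 * S * ((∑ j ∈ Finset.univ.erase i, (z j - c j) ^ 2) / R ^ 2) := by
    intro z
    unfold bar
    rw [hci]
    field_simp
    ring
  have hRhalf : R / 2 ≤ R := by linarith
  have main := barrier_abs i c (2 * E) (((8 * n + 8) * S + 2 * E) / R)
      (-(32 * n * S + 2 * E) / R ^ 2) (32 * S / R ^ 2) (w := fun z => w z - w (T z)) hK
      ((h.cont.mono fun z hz => FB_mono l hRhalf (hKF z hz)).sub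
        (h.cont.comp hTcont.continuousOn fun z hz => FB_mono l hRhalf (hKT z hz))) (by
    intro z hz
    rw [hbar]
    have b1 := h.bd z (FB_mono l hRhalf (hKF z hz))
    have b2 := h.bd (T z) (FB_mono l hRhalf (hKT z hz))
    have b3 : |w z - w (T z)| ≤ 2 * S := (abs_sub _ _).trans (by linarith)
    have hτ0 : 0 ≤ (z i - c0) / R := div_nonneg (by linarith [hz.1.1]) hR.le
    have hτ1 : (z i - c0) / R ≤ 1 / 4 := by
      rw [div_le_iff₀ hR]; linarith [hz.1.2.1]
    set τ := (z i - c0) / R with hτ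
    have p1 : 0 ≤ (8 * n + 8) * τ - 32 * n * τ ^ 2 := by
      nlinarith [mul_nonneg (mul_nonneg hn1 hτ0) (sub_nonneg.2 hτ1)]
    have p2 : 0 ≤ τ - τ ^ 2 := by nlinarith
    have q1 := mul_nonneg hS p1
    have q2 := mul_nonneg hE p2
    have q3 : 0 ≤ 32 * S * ((∑ j ∈ Finset.univ.erase i, (z j - c j) ^ 2) / R ^ 2) := by
      have : 0 ≤ ∑ j ∈ Finset.univ.erase i, (z j - c j) ^ 2 :=
        Finset.sum_nonneg fun i _ => sq_nonneg _
      positivity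
    by_cases hside : ∃ j, j ≠ i ∧ R / 4 ≤ |z j - y j|
    · left
      obtain ⟨j, hj, hj2⟩ := hside
      have h1 := sum_ge_of_side (y := z) (c := c) hj (by positivity : 0 ≤ R / 4)
        (by rw [hcj j hj]; exact hj2)
      have h2 : 1 / 16 ≤ (∑ j ∈ Finset.univ.erase i, (z j - c j) ^ 2) / R ^ 2 := by
        rw [le_div_iff₀ (by positivity)]; linarith
      nlinarith
    push Not at hside
    by_cases htop : c0 + R / 4 ≤ z i
    · left
      have t1 : τ = 1 / 4 := by
        refine le_antisymm hτ1 ?_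
        rw [hτ, le_div_iff₀ hR]; linarith
      have : (8 * n + 8) * τ - 32 * n * τ ^ 2 = 2 := by rw [t1]; ring
      rw [this] at q1 ⊢
      linarith
    push Not at htop
    by_cases hbot : z i ≤ c0
    · left
      have : T z = z := by
        funext j
        by_cases hj : j = i
        · rw [hj, hTi]; linarith [hz.1.1]
        · rw [hTj _ _ hj]
      rw [this]; simp only [sub_self, abs_zero]; linarith
    push Not at hbot
    by_cases hl : z l = 0
    · left
      have e1 := h.bot z (FB_mono l hRhalf (hKF z hz)) hl
      have e2 := h.bot (T z) (FB_mono l hRhalf (hKT z hz)) (by rw [hTj z l hi.symm, hl])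
      have : |w z - w (T z)| ≤ 2 * E := (abs_sub _ _).trans (by linarith)
      linarith
    · right
      have hl' : 0 < z l := lt_of_le_of_ne hz.1.2.2 (Ne.symm hl)
      obtain ⟨L, hL, hL2⟩ := h.lap z (fun j => ((hKF z hz).1 j).trans_lt (by linarith)) hl'
      obtain ⟨L', hL', hL2'⟩ := h.lap (T z) (fun j => ((hKT z hz).1 j).trans_lt (by linarith))
        (by rw [hTj z l hi.symm]; exact hl')
      refine ⟨?_, L - L', hL.sub (HasLap.comp σ cc (fun j => by
        by_cases hj : j = i <;> simp [hσ, hj]) hL'), ?_⟩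
      · have : ∀ j, ∀ᶠ u in 𝓝 z, j ≠ i → |u j - y j| ≤ R / 4 := by
          intro j
          by_cases hj : j = i
          · simp [hj]
          · have ho : IsOpen {u : Fin n → ℝ | |u j - y j| < R / 4} :=
              isOpen_lt (by fun_prop) continuous_const
            filter_upwards [ho.mem_nhds (hside j hj)] with u hu _
            exact le_of_lt hu
        have o1 : IsOpen {u : Fin n → ℝ | c0 < u i} := isOpen_lt continuous_const (by fun_prop)
        have o2 : IsOpen {u : Fin n → ℝ | u i < c0 + R / 4} :=
          isOpen_lt (by fun_prop) continuous_const
        have o3 : IsOpen {u : Fin n → ℝ | 0 < u l} := isOpen_lt continuous_const (by fun_prop)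
        filter_upwards [eventually_all.2 this, o1.mem_nhds hbot, o2.mem_nhds htop, o3.mem_nhds hl']
          with u u1 u2 u3 u4
        exact ⟨⟨le_of_lt u2, le_of_lt u3, le_of_lt u4⟩, u1⟩
      · have a1 : |L| ≤ E / R ^ 2 := by rw [le_div_iff₀ (by positivity)]; linarith
        have a2 : |L'| ≤ E / R ^ 2 := by rw [le_div_iff₀ (by positivity)]; linarith
        have a3 : |L - L'| ≤ |L| + |L'| := abs_sub _ _
        have e : |L - L'| + 2 * (-(32 * n * S + 2 * E) / R ^ 2) + 2 * (n - 1) * (32 * S / R ^ 2)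
          = |L - L'| - 2 * (E / R ^ 2) - (64 * S + 2 * E) / R ^ 2 := by field_simp; ring
        rw [e]
        have : 0 ≤ (64 * S + 2 * E) / R ^ 2 := by positivity
        linarith) y ⟨⟨by linarith, by linarith, hy.2⟩, fun j _ => by simp; positivity⟩
  rw [hbar, hTy] at main
  have hz : ∑ j ∈ Finset.univ.erase i, (y j - c j) ^ 2 = 0 :=
    Finset.sum_eq_zero fun j hj => by rw [hcj j (Finset.ne_of_mem_erase hj)]; simp
  rw [hz, zero_div] at main
  have hτe : (y i - c0) / R = ((y i - x i) / R) / 2 := by rw [hc0]; field_simp; ring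
  rw [hτe] at main
  have hτ0 : 0 ≤ (y i - x i) / R := div_nonneg (by linarith) hR.le
  have hτ1 : (y i - x i) / R ≤ 1 := by
    rw [div_le_iff₀ hR]; linarith
  set τ := (y i - x i) / R
  have p1 : 0 ≤ S * (n * τ ^ 2) := by positivity
  have p2 : 0 ≤ E * τ ^ 2 := by positivity
  have p3 : E * τ ≤ E := mul_le_of_le_one_right hE hτ1
  nlinarith

/-- tangential differences, all directions -/
lemma flat_L2' {l : Fin n} {R S E d : ℝ} {w : (Fin n → ℝ) → ℝ} (hR : 0 < R) (h : Flat l R S E w)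
    {x y : Fin n → ℝ} (hx : x ∈ FB l (R / 4)) (hy : y ∈ FB l (R / 4)) (hl : x l = y l)
    (hd : ∀ i, |x i - y i| ≤ d) :
    |w x - w y| ≤ n * ((4 * n + 4) * S * (d / R) + 4 * E) := by
  have hS := h.S_nonneg hR.le
  have hE := h.E_nonneg hR.le
  have hn1 : (0:ℝ) ≤ n := Nat.cast_nonneg n
  have hd0 : 0 ≤ d := (abs_nonneg _).trans (hd l)
  have key : ∀ T : Finset (Fin n), |w (fun j => if j ∈ T then x j else y j) - w y|
      ≤ T.card * ((4 * n + 4) * S * (d / R) + 4 * E) := by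
    intro T
    induction T using Finset.induction_on with
    | empty => simp
    | insert i T hi ih =>
      rw [Finset.card_insert_of_notMem hi]
      push_cast
      set z1 : Fin n → ℝ := fun j => if j ∈ insert i T then x j else y j with hz1
      set z0 : Fin n → ℝ := fun j => if j ∈ T then x j else y j with hz0
      have m1 : z1 ∈ FB l (R / 4) := by
        refine ⟨fun j => ?_, ?_⟩
        · simp only [hz1]; split_ifs; exacts [hx.1 j, hy.1 j]
        · simp only [hz1]; split_ifs; exacts [hx.2, hy.2]
      have m0 : z0 ∈ FB l (R / 4) := by
        refine ⟨fun j => ?_, ?_⟩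
        · simp only [hz0]; split_ifs; exacts [hx.1 j, hy.1 j]
        · simp only [hz0]; split_ifs; exacts [hx.2, hy.2]
      have hoff : ∀ j, j ≠ i → z1 j = z0 j := by
        intro j hj; simp [hz1, hz0, hj]
      have e1 : z1 i = x i := by simp [hz1]
      have e0 : z0 i = y i := by simp [hz0, hi]
      have step : |w z1 - w z0| ≤ (4 * n + 4) * S * (d / R) + 4 * E := by
        by_cases hil : i = l
        · have : z1 = z0 := by
            funext j
            by_cases hj : j = i
            · rw [hj, e1, e0, hil, hl]
            · exact hoff j hj
          rw [this]; simp; positivity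
        · have hdi := abs_le.1 (hd i)
          rcases le_total (z0 i) (z1 i) with hle | hle
          · refine (flat_L2 hR h m0 m1 i hil (fun j hj => (hoff j hj).symm) hle).trans ?_
            rw [e1, e0]
            have : (x i - y i) / R ≤ d / R := by gcongr; linarith
            gcongr
          · rw [abs_sub_comm]
            refine (flat_L2 hR h m1 m0 i hil hoff hle).trans ?_
            rw [e1, e0]
            have : (y i - x i) / R ≤ d / R := by gcongr; linarith
            gcongr
      have : w z1 - w y = (w z1 - w z0) + (w z0 - w y) := by ring
      rw [this]
      refine (abs_add_le _ _).trans ?_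
      linarith
  have := key Finset.univ
  simpa using this

/-- difference function is flat -/
lemma flat_diff {l : Fin n} {R S E d : ℝ} {w : (Fin n → ℝ) → ℝ} (hR : 0 < R) (h : Flat l R S E w)
    {τ : Fin n → ℝ} (hτl : τ l = 0) (hτ : ∀ i, |τ i| ≤ d) (hd : d ≤ R / 8) :
    Flat l (R / 8) (n * ((4 * n + 4) * S * (d / R) + 4 * E)) (2 * E)
      (fun x => w (x + τ) - w x) := by
  have mm : ∀ x ∈ FB l (R / 8), x + τ ∈ FB l (R / 4) := by
    intro x hx
    refine ⟨fun i => ?_, by simp [hτl, hx.2]⟩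
    have := hx.1 i; have := hτ i
    exact (abs_add_le _ _).trans (by linarith)
  have h8 : R / 8 ≤ R / 4 := by linarith
  have h4 : R / 4 ≤ R := by linarith
  refine ⟨?_, ?_, ?_, ?_⟩
  · refine ContinuousOn.sub ?_ (h.cont.mono (FB_mono l (h8.trans h4)))
    exact h.cont.comp (by fun_prop) fun x hx => FB_mono l h4 (mm x hx)
  · intro x hx
    refine flat_L2' hR h (mm x hx) (FB_mono l h8 hx) (by simp [hτl]) (fun i => ?_)
    simpa using hτ i
  · intro x hx h0
    have a := h.bot x (FB_mono l (h8.trans h4) hx) h0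
    have b := h.bot (x + τ) (FB_mono l h4 (mm x hx)) (by simp [hτl, h0])
    exact (abs_sub _ _).trans (by linarith)
  · intro x hx h0
    have hx' : x ∈ FB l (R / 8) := ⟨fun i => (hx i).le, h0.le⟩
    obtain ⟨L, hL, hL2⟩ := h.lap x (fun i => (hx i).trans (by linarith)) h0
    obtain ⟨L', hL', hL2'⟩ := h.lap (x + τ)
      (fun i => ((mm x hx').1 i).trans_lt (by linarith)) (by simpa [hτl] using h0)
    refine ⟨L' - L, (hL'.translate τ).sub hL, ?_⟩
    have a3 : |L' - L| ≤ |L'| + |L| := abs_sub _ _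
    have : (R / 8) ^ 2 * |L' - L| ≤ R ^ 2 * (|L'| + |L|) := by gcongr; linarith
    linarith

end PB

namespace PB
open Filter Topology Set
variable {n : ℕ}

lemma flat_L3 (n : ℕ) : ∃ C : ℝ, 1 ≤ C ∧ ∀ (l : Fin n) (R S E d d' : ℝ) (w : (Fin n → ℝ) → ℝ)
    (τ σ x : Fin n → ℝ), 0 < R → Flat l R S E w → τ l = 0 → σ l = 0 → (∀ i, |τ i| ≤ d) →
    (∀ i, |σ i| ≤ d') → d ≤ R / 128 → d' ≤ R / 128 → x ∈ FB l (R / 128) →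
    |w (x + σ + τ) - w (x + σ) - (w (x + τ) - w x)|
      ≤ C * (S * (d / R) * (d' / R) * (x l / R) + E) := by
  set q : ℝ := 4 * n + 4 with hq
  have hn1 : (0:ℝ) ≤ n := Nat.cast_nonneg n
  have hq0 : 0 ≤ q := by positivity
  refine ⟨(8 * n + 1) * 64 * n * (8 * q ^ 2 * n + 32 * q * n + 8) + 20, ?_, ?_⟩
  · have : 0 ≤ (8 * n + 1) * 64 * n * (8 * q ^ 2 * n + 32 * q * n + 8) := by positivity
    linarith
  intro l R S E d d' w τ σ x hR h hτl hσl hτ hσ hd hd' hx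
  have hS := h.S_nonneg hR.le
  have hE := h.E_nonneg hR.le
  have hd0 : 0 ≤ d := (abs_nonneg _).trans (hτ l)
  have hd0' : 0 ≤ d' := (abs_nonneg _).trans (hσ l)
  have f1 := flat_diff hR h hτl hτ (by linarith)
  have f2 := flat_diff (by positivity) f1 hσl hσ (by linarith)
  have f3 := flat_L1 (by positivity) f2 (x := x) (FB_mono l (by linarith) hx)
  refine f3.trans ?_
  rw [← hq]
  have hxl : x l ≤ R / 128 := (abs_le.1 (hx.1 l)).2
  set a := d / R with ha
  set t := x l / R with ht
  have hb : d' / (R / 8) = 8 * (d' / R) := by field_simp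
  have ht' : x l / (R / 8 / 8) = 64 * t := by rw [ht]; field_simp; norm_num
  rw [hb, ht']
  set b := d' / R with hbdef
  have a0 : 0 ≤ a := by positivity
  have b0 : 0 ≤ b := by positivity
  have t0 : 0 ≤ t := div_nonneg hx.2 hR.le
  have b1 : b ≤ 1 := by rw [hbdef, div_le_one hR]; linarith
  have t1 : t ≤ 1 := by rw [ht, div_le_one hR]; linarith
  have bt1 : b * t ≤ 1 := mul_le_one₀ b1 t0 t1
  have e1 : (8 * n + 1) * (n * (q * (n * (q * S * a + 4 * E)) * (8 * b) + 4 * (2 * E))) * (64 * t)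
      + 5 * (2 * (2 * E)) = (8 * n + 1) * 64 * n * (8 * q ^ 2 * n * (S * a * b * t)
        + 32 * q * n * E * (b * t) + 8 * E * t) + 20 * E := by ring
  rw [e1]
  have e2 : 32 * q * n * E * (b * t) ≤ 32 * q * n * E := mul_le_of_le_one_right (by positivity) bt1
  have e3 : 8 * E * t ≤ 8 * E := mul_le_of_le_one_right (by positivity) t1
  have X0 : 0 ≤ S * a * b * t := by positivity
  set X := S * a * b * t
  have e4 : (8 * n + 1) * 64 * n * (8 * q ^ 2 * n * X + 32 * q * n * E * (b * t) + 8 * E * t)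
      ≤ (8 * n + 1) * 64 * n * (8 * q ^ 2 * n * X + 32 * q * n * E + 8 * E) := by
    gcongr
  have e5 : 0 ≤ (8 * n + 1) * 64 * n * (8 * q ^ 2 * n * E + (32 * q * n + 8) * X) + 20 * X := by
    positivity
  nlinarith

lemma lin_lap (l : Fin n) (q : ℝ) (x : Fin n → ℝ) : HasLap (fun y => q * y l) x 0 := by
  have := bar_lap l 0 0 q 0 0 x
  have e : bar l 0 0 q 0 0 = fun y => q * y l := by funext y; simp [bar]
  rw [e] at this; simpa using this

lemma bil_lap (l : Fin n) (b : Fin n → ℝ) (hb : b l = 0) (x : Fin n → ℝ) :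
    HasLap (fun y => (∑ i, b i * y i) * y l) x 0 := by
  have := HasLap.of_exact (w := fun y => (∑ i, b i * y i) * y l) (x := x) (fun _ => 0) (by
    intro i t
    have h1 : ∑ j, b j * (x + Pi.single i t : Fin n → ℝ) j = ∑ j, b j * x j + b i * t := by
      simp [mul_add, Finset.sum_add_distrib, Pi.single_apply]
    have h2 : ∑ j, b j * (x - Pi.single i t : Fin n → ℝ) j = ∑ j, b j * x j - b i * t := by
      simp [mul_sub, Finset.sum_sub_distrib, Pi.single_apply]
    rw [h1, h2]
    by_cases hi : i = l
    · subst hi; rw [hb]; simp; ring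
    · have : l ≠ i := fun h => hi h.symm
      simp [this]; ring)
  simpa using this

lemma le_of_contr {β c x : ℝ} (h : ∀ k : ℕ, x ≤ c + β / 2 ^ k) : x ≤ c := by
  have : Tendsto (fun k : ℕ => c + β / 2 ^ k) atTop (𝓝 (c + 0)) := by
    refine tendsto_const_nhds.add ?_
    have := (tendsto_pow_atTop_nhds_zero_of_lt_one (r := (1/2 : ℝ)) (by norm_num)
      (by norm_num)).const_mul β
    simpa [div_eq_mul_inv] using this
  rw [add_zero] at this
  exact ge_of_tendsto' this h

lemma contr {P : ℝ → Prop} {c β : ℝ} (h : ∀ B, P B → P (B / 2 + c)) (h0 : P (2 * c + β)) :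
    ∀ k : ℕ, P (2 * c + β / 2 ^ k) := by
  intro k
  induction k with
  | zero => simpa using h0
  | succ k ih =>
    convert h _ ih using 1
    rw [pow_succ]; field_simp; ring

/-- normal direction lemma -/
lemma normalLemma (l : Fin n) {ρ κ : ℝ} (hρ : 0 < ρ) {v : (Fin n → ℝ) → ℝ}
    (hv : ContinuousOn v {x | (∀ i, |x i| ≤ n * ρ) ∧ 0 ≤ x l ∧ x l ≤ ρ})
    (hbot : ∀ x : Fin n → ℝ, (∀ i, |x i| ≤ n * ρ) → x l = 0 → |v x| ≤ κ)
    (hdiff : ∀ x : Fin n → ℝ, (∀ i, |x i| ≤ n * ρ) → 0 ≤ x l → x l ≤ ρ →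
      |v x - v (Pi.single l (x l))| ≤ κ)
    (hlap : ∀ x : Fin n → ℝ, (∀ i, |x i| ≤ n * ρ) → 0 < x l → x l < ρ →
      ∃ L, HasLap v x L ∧ ρ ^ 2 * |L| ≤ κ)
    {t : ℝ} (ht0 : 0 ≤ t) (htρ : t ≤ ρ) :
    |v (Pi.single l t) - v (Pi.single l ρ) * (t / ρ)| ≤ 3 * κ := by
  have hn1 : (1:ℝ) ≤ n := by exact_mod_cast l.pos
  have hnρ : ρ ≤ n * ρ := by nlinarith
  set Z : Set (Fin n → ℝ) := {x | (∀ i, |x i| ≤ n * ρ) ∧ 0 ≤ x l ∧ x l ≤ ρ} with hZ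
  set q := v (Pi.single l ρ) / ρ with hq
  set V : (Fin n → ℝ) → ℝ := fun x => v x - q * x l with hVdef
  have hκ0 : 0 ≤ κ := (abs_nonneg _).trans (hbot 0 (fun i => by simp; positivity) rfl)
  have hVc : ContinuousOn V Z := hv.sub (by fun_prop)
  have hsingle : ∀ s, 0 ≤ s → s ≤ ρ → Pi.single l s ∈ Z := by
    intro s h0 h1
    refine ⟨fun i => ?_, by simpa, by simpa⟩
    by_cases hi : i = l
    · subst hi; simp [abs_of_nonneg h0]; linarith
    · simp [hi]; positivity
  -- maximum on axis
  have hc : ContinuousOn (fun s : ℝ => |V (Pi.single l s)|) (Icc 0 ρ) := by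
    refine ContinuousOn.abs (hVc.comp ?_ fun s hs => hsingle s hs.1 hs.2)
    exact (continuous_single (A := fun _ : Fin n => ℝ) l).continuousOn
  obtain ⟨s, hs, hmax⟩ := isCompact_Icc.exists_isMaxOn ⟨0, le_rfl, hρ.le⟩ hc
  set m := |V (Pi.single l s)| with hm
  have hm0 : 0 ≤ m := abs_nonneg _
  have hZc : IsClosed Z := by
    have : Z = (⋂ i, {x : Fin n → ℝ | |x i| ≤ n * ρ}) ∩ ({x | 0 ≤ x l} ∩ {x | x l ≤ ρ}) := by
      ext x; simp [hZ]
    rw [this]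
    exact (isClosed_iInter fun i => isClosed_le (by fun_prop) continuous_const).inter
      ((isClosed_le continuous_const (by fun_prop)).inter
      (isClosed_le (by fun_prop) continuous_const))
  have hZK : IsCompact Z := compact_of_box hZc (fun x hx => hx.1)
  have hbar : ∀ y, bar l 0 κ (m / (n * ρ) + κ / ρ) (-(m / (n * ρ ^ 2) + κ / ρ ^ 2))
      (m / (n * ρ) ^ 2) y = κ + m / n * (y l / ρ - (y l / ρ) ^ 2) + κ * (y l / ρ - (y l / ρ) ^ 2)
      + m * ((∑ j ∈ Finset.univ.erase l, (y j - (0 : Fin n → ℝ) j) ^ 2) / (n * ρ) ^ 2) := by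
    intro y; unfold bar; simp only [Pi.zero_apply]; field_simp; ring
  have main := barrier_abs l 0 κ (m / (n * ρ) + κ / ρ) (-(m / (n * ρ ^ 2) + κ / ρ ^ 2))
      (m / (n * ρ) ^ 2) hZK hVc (by
    intro y hy
    rw [hbar]
    have s0 : 0 ≤ y l / ρ := div_nonneg hy.2.1 hρ.le
    have s1 : y l / ρ ≤ 1 := by rw [div_le_one hρ]; exact hy.2.2
    have p : 0 ≤ y l / ρ - (y l / ρ) ^ 2 := by nlinarith
    have q1 : 0 ≤ m / n * (y l / ρ - (y l / ρ) ^ 2) := by positivity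
    have q2 : 0 ≤ κ * (y l / ρ - (y l / ρ) ^ 2) := by positivity
    have hsum0 : 0 ≤ ∑ j ∈ Finset.univ.erase l, (y j - (0 : Fin n → ℝ) j) ^ 2 :=
      Finset.sum_nonneg fun i _ => sq_nonneg _
    have q3 : 0 ≤ m * ((∑ j ∈ Finset.univ.erase l, (y j - (0 : Fin n → ℝ) j) ^ 2) / (n * ρ) ^ 2) := by
      positivity
    have hVd : |V y - V (Pi.single l (y l))| ≤ κ := by
      have := hdiff y hy.1 hy.2.1 hy.2.2
      simpa [hVdef] using this
    by_cases hside : ∃ j, j ≠ l ∧ n * ρ ≤ |y j|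
    · left
      obtain ⟨j, hj, hj2⟩ := hside
      have h1 := sum_ge_of_side (y := y) (c := 0) hj (by positivity : 0 ≤ n * ρ) (by simpa using hj2)
      have h2 : 1 ≤ (∑ j ∈ Finset.univ.erase l, (y j - (0 : Fin n → ℝ) j) ^ 2) / (n * ρ) ^ 2 := by
        rw [le_div_iff₀ (by positivity)]; linarith
      have h3 : |V (Pi.single l (y l))| ≤ m := hmax ⟨hy.2.1, hy.2.2⟩
      have h4 : |V y| ≤ κ + m := by
        have : V y = (V y - V (Pi.single l (y l))) + V (Pi.single l (y l)) := by ring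
        rw [this]; exact (abs_add_le _ _).trans (by linarith)
      nlinarith
    push Not at hside
    rcases eq_or_lt_of_le hy.2.1 with h0 | h0
    · left
      have := hbot y hy.1 h0.symm
      have e : V y = v y := by simp [hVdef, ← h0]
      rw [e]; linarith
    rcases eq_or_lt_of_le hy.2.2 with h1 | h1
    · left
      have e : V (Pi.single l (y l)) = 0 := by
        rw [h1]; simp only [hVdef, hq, Pi.single_eq_same]; field_simp; ring
      rw [e, sub_zero] at hVd
      linarith
    · right
      obtain ⟨L, hL, hL2⟩ := hlap y hy.1 h0 h1
      refine ⟨?_, L - 0, hL.sub (lin_lap l q y), ?_⟩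
      · have : ∀ j, ∀ᶠ u in 𝓝 y, |u j| ≤ n * ρ := by
          intro j
          have hj : |y j| < n * ρ := by
            by_cases hj : j = l
            · subst hj; rw [abs_of_pos h0]; linarith
            · exact hside j hj
          have ho : IsOpen {u : Fin n → ℝ | |u j| < n * ρ} :=
            isOpen_lt (by fun_prop) continuous_const
          filter_upwards [ho.mem_nhds hj] with u hu
          exact le_of_lt hu
        have o2 : IsOpen {u : Fin n → ℝ | u l < ρ} := isOpen_lt (by fun_prop) continuous_const
        have o3 : IsOpen {u : Fin n → ℝ | 0 < u l} := isOpen_lt continuous_const (by fun_prop)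
        filter_upwards [eventually_all.2 this, o2.mem_nhds h1, o3.mem_nhds h0] with u u1 u2 u3
        exact ⟨u1, le_of_lt u3, le_of_lt u2⟩
      · have a1 : |L| ≤ κ / ρ ^ 2 := by rw [le_div_iff₀ (by positivity)]; linarith
        have e : |L - 0| + 2 * (-(m / (n * ρ ^ 2) + κ / ρ ^ 2)) + 2 * (n - 1) * (m / (n * ρ) ^ 2)
          = |L| - 2 * (κ / ρ ^ 2) - 2 * m / (n * ρ) ^ 2 := by
            rw [sub_zero]; field_simp; ring
        rw [e]
        have : 0 ≤ 2 * m / (n * ρ) ^ 2 := by positivity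
        have : 0 ≤ κ / ρ ^ 2 := by positivity
        linarith)
  have hms := main (Pi.single l s) (hsingle s hs.1 hs.2)
  rw [hbar, ← hm] at hms
  have hz : ∑ j ∈ Finset.univ.erase l, ((Pi.single l s : Fin n → ℝ) j - (0 : Fin n → ℝ) j) ^ 2 = 0 :=
    Finset.sum_eq_zero fun j hj => by simp [Finset.ne_of_mem_erase hj]
  rw [hz, zero_div, mul_zero, add_zero] at hms
  have p4 : (Pi.single l s : Fin n → ℝ) l / ρ - ((Pi.single l s : Fin n → ℝ) l / ρ) ^ 2 ≤ 1 / 4 := by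
    nlinarith [sq_nonneg ((Pi.single l s : Fin n → ℝ) l / ρ - 1 / 2)]
  have p5 : m / n ≤ m := div_le_self hm0 hn1
  have p6 : 0 ≤ m / n := by positivity
  have : m ≤ 3 * κ := by nlinarith
  have h3 : |V (Pi.single l t)| ≤ m := hmax ⟨ht0, htρ⟩
  have e : V (Pi.single l t) = v (Pi.single l t) - v (Pi.single l ρ) * (t / ρ) := by
    simp only [hVdef, hq, Pi.single_eq_same]; ring
  rw [← e]; linarith

lemma hu1 {g : ℝ → ℝ} {ρ κ B : ℝ} (hρ : 0 < ρ)
    (hB : ∀ s, |s| ≤ ρ → |g s| ≤ B)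
    (h : ∀ s t, |s| ≤ ρ → |t| ≤ ρ → |s + t| ≤ ρ → |g (s + t) - g s - g t| ≤ κ) (s : ℝ)
    (hs : |s| ≤ ρ) : |g s - s / ρ * g ρ| ≤ 5 * κ := by
  have hκ : 0 ≤ κ := (abs_nonneg _).trans (h 0 0 (by simpa using hρ.le) (by simpa using hρ.le)
    (by simpa using hρ.le))
  set e : ℝ → ℝ := fun s => g s - s / ρ * g ρ with he
  have hadd : ∀ s t, |s| ≤ ρ → |t| ≤ ρ → |s + t| ≤ ρ → |e (s + t) - e s - e t| ≤ κ := by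
    intro s t h1 h2 h3
    have : e (s + t) - e s - e t = g (s + t) - g s - g t := by simp only [he]; ring
    rw [this]; exact h s t h1 h2 h3
  have heρ : e ρ = 0 := by simp only [he]; field_simp; ring
  have hpos : ∀ s, 0 ≤ s → s ≤ ρ → |e s| ≤ 3 * κ := by
    have hstep : ∀ B, (∀ s, 0 ≤ s → s ≤ ρ → |e s| ≤ B) →
        (∀ s, 0 ≤ s → s ≤ ρ → |e s| ≤ B / 2 + 3 / 2 * κ) := by
      intro B hB
      have half : ∀ s, 0 ≤ s → s ≤ ρ / 2 → |e s| ≤ B / 2 + κ / 2 := by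
        intro s h0 h1
        have a := hadd s s (by rw [abs_of_nonneg h0]; linarith) (by rw [abs_of_nonneg h0]; linarith)
          (by rw [abs_of_nonneg (by linarith)]; linarith)
        have b := hB (s + s) (by linarith) (by linarith)
        rw [abs_le] at *
        constructor <;> linarith
      intro s h0 h1
      rcases le_total s (ρ / 2) with h2 | h2
      · linarith [half s h0 h2]
      · have a := hadd s (ρ - s) (by rw [abs_of_nonneg h0]; linarith)
          (by rw [abs_of_nonneg (by linarith)]; linarith)
          (by rw [abs_of_nonneg (by linarith)]; linarith)
        rw [add_sub_cancel, heρ] at a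
        have b := half (ρ - s) (by linarith) (by linarith)
        rw [abs_le] at *
        constructor <;> linarith
    have h0 : ∀ s, 0 ≤ s → s ≤ ρ → |e s| ≤ 2 * (3 / 2 * κ) + (2 * B) := by
      intro s h0 h1
      have a := hB s (by rw [abs_of_nonneg h0]; exact h1)
      have b := hB ρ (by rw [abs_of_pos hρ])
      have c : |s / ρ * g ρ| ≤ B := by
        rw [abs_mul, abs_of_nonneg (by positivity)]
        have : s / ρ ≤ 1 := by rw [div_le_one hρ]; exact h1
        calc s / ρ * |g ρ| ≤ 1 * |g ρ| := by gcongr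
          _ ≤ B := by linarith
      have := abs_sub (g s) (s / ρ * g ρ)
      simp only [he]; linarith
    intro s s0 s1
    have := le_of_contr (c := 2 * (3 / 2 * κ)) (β := 2 * B) (x := |e s|)
      (fun k => contr (P := fun B => ∀ s, 0 ≤ s → s ≤ ρ → |e s| ≤ B) hstep h0 k s s0 s1)
    linarith
  change |e s| ≤ 5 * κ
  rcases le_total 0 s with h0 | h0
  · linarith [hpos s h0 (by rwa [abs_of_nonneg h0] at hs)]
  · rw [abs_of_nonpos h0] at hs
    have a := hadd s (-s) (by rw [abs_of_nonpos h0]; exact hs)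
      (by rw [abs_of_nonneg (by linarith)]; exact hs) (by simp; exact hρ.le)
    have b := hpos (-s) (by linarith) hs
    have c := hadd 0 0 (by simpa using hρ.le) (by simpa using hρ.le) (by simpa using hρ.le)
    simp only [add_neg_cancel, add_zero] at a c
    rw [abs_le] at *
    constructor <;> linarith

lemma huN (l : Fin n) {G : (Fin n → ℝ) → ℝ} {ρ κ B : ℝ} (hρ : 0 < ρ)
    (hB : ∀ τ : Fin n → ℝ, τ l = 0 → (∀ i, |τ i| ≤ ρ) → |G τ| ≤ B)
    (h : ∀ τ σ : Fin n → ℝ, τ l = 0 → σ l = 0 → (∀ i, |τ i| ≤ ρ) → (∀ i, |σ i| ≤ ρ) →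
      |G (τ + σ) - G τ - G σ| ≤ κ)
    (τ : Fin n → ℝ) (hl : τ l = 0) (hτ : ∀ i, |τ i| ≤ ρ) :
    |G τ - ∑ i, τ i / ρ * G (Pi.single i ρ)| ≤ (6 * n + 1) * κ := by
  have h00 : |G 0| ≤ κ := by
    have := h 0 0 rfl rfl (by simpa using fun _ => hρ.le) (by simpa using fun _ => hρ.le)
    simpa using this
  have hκ : 0 ≤ κ := (abs_nonneg _).trans h00
  have hsb : ∀ (i : Fin n) (s : ℝ), |s| ≤ ρ → ∀ j, |(Pi.single i s : Fin n → ℝ) j| ≤ ρ := by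
    intro i s hs j
    by_cases hj : j = i
    · subst hj; simpa
    · simp [hj]; exact hρ.le
  have hone : ∀ i, |G (Pi.single i (τ i)) - τ i / ρ * G (Pi.single i ρ)| ≤ 5 * κ := by
    intro i
    by_cases hi : i = l
    · subst hi; rw [hl]; simp; linarith
    · have hil : ∀ s : ℝ, (Pi.single i s : Fin n → ℝ) l = 0 := fun s => by
        simp [Ne.symm hi]
      refine hu1 (g := fun s => G (Pi.single i s)) (B := B) hρ (fun s hs => hB _ (hil s) (hsb i s hs))
        ?_ (τ i) (hτ i)
      intro s t hs ht _
      have := h (Pi.single i s) (Pi.single i t) (hil s) (hil t) (hsb i s hs) (hsb i t ht)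
      rwa [← Pi.single_add] at this
  have key : ∀ T : Finset (Fin n), |G (fun j => if j ∈ T then τ j else 0)
      - ∑ i ∈ T, τ i / ρ * G (Pi.single i ρ)| ≤ (6 * T.card + 1) * κ := by
    intro T
    induction T using Finset.induction_on with
    | empty =>
      simp only [Finset.notMem_empty, if_false, Finset.sum_empty, Finset.card_empty]
      have : (fun _ : Fin n => (0:ℝ)) = 0 := rfl
      rw [this]; simpa using h00
    | insert i T hi ih =>
      rw [Finset.card_insert_of_notMem hi, Finset.sum_insert hi]
      have e : (fun j => if j ∈ insert i T then τ j else 0)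
          = (fun j => if j ∈ T then τ j else 0) + Pi.single i (τ i) := by
        funext j
        by_cases hj : j = i
        · subst hj; simp [hi]
        · simp [hj]
      rw [e]
      have a := h (fun j => if j ∈ T then τ j else 0) (Pi.single i (τ i)) (by simp [hl])
        (by
          by_cases hil : i = l
          · subst hil; simp [hl]
          · simp [Ne.symm hil])
        (fun j => by
          by_cases hj : j ∈ T
          · simp [hj, hτ j]
          · simp [hj, hρ.le]) (hsb i _ (hτ i))
      have b := hone i
      push_cast
      rw [abs_le] at *
      constructor <;> linarith
  simpa using key Finset.univ

end PB

namespace PB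
open Filter Topology Set
variable {n : ℕ}

lemma flat_T1 (n : ℕ) : ∃ C : ℝ, 1 ≤ C ∧ ∀ (l : Fin n) (R S E ρ : ℝ) (w : (Fin n → ℝ) → ℝ),
    0 < ρ → 128 * n * ρ ≤ R → Flat l R S E w →
    ∃ (a : ℝ) (b : Fin n → ℝ), b l = 0 ∧ |a| * ρ ≤ S ∧ (∀ i, |b i| * ρ ^ 2 ≤ 2 * S) ∧
      ∀ x ∈ FB l ρ, |w x - a * x l - (∑ i, b i * x i) * x l| ≤ C * (S * (ρ / R) ^ 3 + E) := by
  obtain ⟨C3, hC3, H3⟩ := flat_L3 n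
  refine ⟨(6 * n + 7) * ((n ^ 2 + 2) * C3), ?_, ?_⟩
  · have : (0:ℝ) ≤ n := Nat.cast_nonneg n
    have h1 : (1:ℝ) ≤ (n ^ 2 + 2) * C3 := by nlinarith [sq_nonneg (n:ℝ)]
    nlinarith
  intro l R S E ρ w hρ hρR h
  have hn1 : (1:ℝ) ≤ n := by exact_mod_cast l.pos
  have hR : 0 < R := lt_of_lt_of_le (by positivity) hρR
  have hS := h.S_nonneg hR.le
  have hE := h.E_nonneg hR.le
  have hnρ : n * ρ ≤ R / 128 := by linarith
  have hρn : ρ ≤ n * ρ := by nlinarith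
  have hρ128 : ρ ≤ R / 128 := hρn.trans hnρ
  set X := S * (ρ / R) ^ 3 with hX
  have hX0 : 0 ≤ X := by positivity
  set κ := (n ^ 2 + 2) * C3 * (X + E) with hκ
  have hκ0 : 0 ≤ κ := by positivity
  have hκE : 2 * E ≤ κ := by
    have : 1 * (2:ℝ) ≤ C3 * (n ^ 2 + 2) := by
      apply mul_le_mul hC3 _ (by norm_num) (by linarith); nlinarith
    rw [hκ]
    nlinarith
  have hL3 : ∀ (d d' t : ℝ), 0 ≤ d → 0 ≤ d' → 0 ≤ t → d ≤ n * ρ → d' ≤ n * ρ → t ≤ ρ →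
      C3 * (S * (d / R) * (d' / R) * (t / R) + E) ≤ κ := by
    intro d d' t d0 d0' t0 hd hd' ht
    have : S * (d / R) * (d' / R) * (t / R) ≤ S * (n * ρ / R) * (n * ρ / R) * (ρ / R) := by gcongr
    have e : S * (n * ρ / R) * (n * ρ / R) * (ρ / R) = n ^ 2 * X := by rw [hX]; ring
    rw [hκ]
    have : C3 * (S * (d / R) * (d' / R) * (t / R) + E) ≤ C3 * (n ^ 2 * X + E) :=
      mul_le_mul_of_nonneg_left (by linarith) (by linarith)
    have : 0 ≤ C3 * X := by positivity
    have : 0 ≤ C3 * E := by positivity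
    nlinarith [sq_nonneg (n:ℝ)]
  have hsingle : ∀ s r, 0 ≤ s → s ≤ r → (Pi.single l s : Fin n → ℝ) ∈ FB l r := by
    intro s r h0 h1
    refine ⟨fun i => ?_, by simpa⟩
    by_cases hi : i = l
    · subst hi; simp [abs_of_nonneg h0]; linarith
    · simp [hi]; linarith
  have hsub : ∀ (x : Fin n → ℝ) r, 0 ≤ r → (∀ i, |x i| ≤ r) →
      (x - Pi.single l (x l) : Fin n → ℝ) l = 0 ∧ ∀ i, |(x - Pi.single l (x l) : Fin n → ℝ) i| ≤ r := by
    intro x r hr hx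
    refine ⟨by simp, fun i => ?_⟩
    by_cases hi : i = l
    · subst hi; simpa
    · simpa [hi] using hx i
  have hFB : ∀ {x : Fin n → ℝ}, (∀ i, |x i| ≤ n * ρ) → 0 ≤ x l → x ∈ FB l (R / 128) := by
    intro x hx h0
    exact ⟨fun i => (hx i).trans hnρ, h0⟩
  have hFBR : FB l (R / 128) ⊆ FB l R := FB_mono l (by linarith)
  have hplus : ∀ {x τ : Fin n → ℝ}, x ∈ FB l (R / 128) → τ l = 0 → (∀ i, |τ i| ≤ R / 128) →
      x + τ ∈ FB l R := by
    intro x τ hx h0 hτ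
    refine ⟨fun i => ?_, by simp [h0, hx.2]⟩
    have := hx.1 i; have := hτ i
    exact (abs_add_le _ _).trans (by linarith)
  -- tangential differences
  have hD : ∀ τ : Fin n → ℝ, τ l = 0 → (∀ i, |τ i| ≤ ρ) → ∀ t, 0 ≤ t → t ≤ ρ →
      |(w (Pi.single l t + τ) - w (Pi.single l t))
        - (w (Pi.single l ρ + τ) - w (Pi.single l ρ)) * (t / ρ)| ≤ 3 * κ := by
    intro τ hτl hτ t ht0 ht1
    have hτR : ∀ i, |τ i| ≤ R / 128 := fun i => (hτ i).trans hρ128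
    refine normalLemma l (v := fun y => w (y + τ) - w y) hρ ?_ ?_ ?_ ?_ ht0 ht1
    · refine ContinuousOn.sub ?_ (h.cont.mono fun x hx => hFBR (hFB hx.1 hx.2.1))
      exact h.cont.comp (by fun_prop) fun x hx => hplus (hFB hx.1 hx.2.1) hτl hτR
    · intro x hx h0
      have hx' := hFB hx h0.ge
      have a := h.bot x (hFBR hx') h0
      have b := h.bot (x + τ) (hplus hx' hτl hτR) (by simp [hτl, h0])
      exact (abs_sub _ _).trans (by linarith)
    · intro x hx h0 h1
      obtain ⟨s1, s2⟩ := hsub x _ (by positivity) hx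
      have := H3 l R S E ρ (n * ρ) w τ (x - Pi.single l (x l)) (Pi.single l (x l)) hR h hτl s1 hτ s2
        hρ128 hnρ (hsingle _ _ h0 (h1.trans hρ128))
      rw [add_sub_cancel] at this
      refine this.trans ?_
      simp only [Pi.single_eq_same]
      exact hL3 _ _ _ hρ.le (by positivity) h0 hρn le_rfl h1
    · intro x hx h0 h1
      have hx' := hFB hx h0.le
      obtain ⟨L, hL, hL2⟩ := h.lap x (fun i => (hx'.1 i).trans_lt (by linarith)) h0
      obtain ⟨L', hL', hL2'⟩ := h.lap (x + τ)
        (fun i => (abs_add_le _ _).trans_lt (by linarith [hx'.1 i, hτR i])) (by simpa [hτl] using h0)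
      refine ⟨L' - L, (hL'.translate τ).sub hL, ?_⟩
      have a3 : |L' - L| ≤ |L'| + |L| := abs_sub _ _
      have : ρ ^ 2 * |L' - L| ≤ R ^ 2 * (|L'| + |L|) := by gcongr; linarith
      linarith
  -- axis
  have hA : ∀ t, 0 ≤ t → t ≤ ρ → |w (Pi.single l t) - w (Pi.single l ρ) * (t / ρ)| ≤ 3 * κ := by
    intro t ht0 ht1
    set σ : Fin n → ℝ := fun j => if j = l then 1 else -1 with hσ
    set T : (Fin n → ℝ) → (Fin n → ℝ) := fun y j => σ j * y j + 0 with hT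
    have hTl : ∀ y, T y l = y l := fun y => by simp [hT, hσ]
    have hTa : ∀ y i, |T y i| = |y i| := fun y i => by
      by_cases hi : i = l <;> simp [hT, hσ, hi]
    have hTs : ∀ t, T (Pi.single l t) = Pi.single l t := fun t => by
      funext j
      by_cases hj : j = l
      · subst hj; simp [hT, hσ]
      · simp [hT, hσ, hj]
    have hTF : ∀ {y r}, y ∈ FB l r → T y ∈ FB l r := fun {y r} hy =>
      ⟨fun i => by rw [hTa]; exact hy.1 i, by rw [hTl]; exact hy.2⟩
    have hTc : Continuous T := by rw [hT]; fun_prop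
    have := normalLemma l (v := fun y => (1/2) * (w y + w (T y))) hρ (κ := κ) ?_ ?_ ?_ ?_ ht0 ht1
    · simp only [hTs] at this
      have e : ∀ z : ℝ, (1/2) * (z + z) = z := fun z => by ring
      rwa [e, e] at this
    · refine continuousOn_const.mul (ContinuousOn.add (h.cont.mono fun x hx => hFBR (hFB hx.1 hx.2.1)) ?_)
      exact h.cont.comp hTc.continuousOn fun x hx => hFBR (hTF (hFB hx.1 hx.2.1))
    · intro x hx h0
      have hx' := hFB hx h0.ge
      have a := h.bot x (hFBR hx') h0
      have b := h.bot (T x) (hFBR (hTF hx')) (by rw [hTl, h0])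
      beta_reduce
      rw [abs_le] at *
      constructor <;> linarith
    · intro x hx h0 h1
      obtain ⟨s1, s2⟩ := hsub x _ (by positivity) hx
      have := H3 l R S E (n * ρ) (n * ρ) w (x - Pi.single l (x l)) (x - Pi.single l (x l)) (T x)
        hR h s1 s1 s2 s2 hnρ hnρ (hTF (hFB hx h0))
      have e1 : T x + (x - Pi.single l (x l)) = Pi.single l (x l) := by
        funext j
        by_cases hj : j = l
        · subst hj; simp [hTl]
        · simp [hT, hσ, hj]
      rw [e1, add_sub_cancel] at this
      have k := this.trans (hL3 _ _ _ (by positivity) (by positivity) (by rw [hTl]; exact h0)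
        le_rfl le_rfl (by rw [hTl]; exact h1))
      beta_reduce
      rw [hTs]
      rw [abs_le] at *
      constructor <;> linarith
    · intro x hx h0 h1
      have hx' := hFB hx h0.le
      obtain ⟨L, hL, hL2⟩ := h.lap x (fun i => (hx'.1 i).trans_lt (by linarith)) h0
      obtain ⟨L', hL', hL2'⟩ := h.lap (T x)
        (fun i => by rw [hTa]; exact (hx'.1 i).trans_lt (by linarith)) (by rw [hTl]; exact h0)
      refine ⟨1/2 * (L + L'), (hL.add (hL'.comp σ (fun _ => 0) (fun i => ?_))).const_mul (1/2), ?_⟩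
      · by_cases hi : i = l <;> simp [hσ, hi]
      · have a3 : |1/2 * (L + L')| ≤ |L'| + |L| := by
          rw [abs_mul]
          have := abs_add_le L L'
          norm_num
          linarith [abs_nonneg (L + L')]
        have : ρ ^ 2 * |1/2 * (L + L')| ≤ R ^ 2 * (|L'| + |L|) := by gcongr; linarith
        linarith
  -- additivity
  set G : (Fin n → ℝ) → ℝ := fun τ => w (Pi.single l ρ + τ) - w (Pi.single l ρ) with hG
  have hρF : (Pi.single l ρ : Fin n → ℝ) ∈ FB l (R / 128) := hsingle _ _ hρ.le hρ128
  have hGB : ∀ τ : Fin n → ℝ, τ l = 0 → (∀ i, |τ i| ≤ ρ) → |G τ| ≤ 2 * S := by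
    intro τ h0 hτ
    have a := h.bd _ (hplus hρF h0 fun i => (hτ i).trans hρ128)
    have b := h.bd _ (hFBR hρF)
    exact (abs_sub _ _).trans (by linarith)
  have hN := huN l (G := G) (ρ := ρ) (κ := κ) (B := 2 * S) hρ hGB (by
    intro τ σ h0 h0' hτ hσ
    have := H3 l R S E ρ ρ w σ τ (Pi.single l ρ) hR h h0' h0 hσ hτ hρ128 hρ128 hρF
    have k := this.trans (hL3 _ _ _ hρ.le hρ.le (by simpa using hρ.le) hρn hρn (by simp))
    have e : G (τ + σ) - G τ - G σ = w (Pi.single l ρ + τ + σ) - w (Pi.single l ρ + τ)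
      - (w (Pi.single l ρ + σ) - w (Pi.single l ρ)) := by
      simp only [hG, add_assoc]; ring
    rw [e]; exact k)
  refine ⟨w (Pi.single l ρ) / ρ, fun i => if i = l then 0 else G (Pi.single i ρ) / ρ ^ 2, by simp,
    ?_, ?_, ?_⟩
  · have b := h.bd _ (hFBR hρF)
    rw [abs_div, abs_of_pos hρ, div_mul_cancel₀ _ hρ.ne']; exact b
  · intro i
    by_cases hi : i = l
    · simp [hi]; exact hS
    · simp only [hi, if_false]
      rw [abs_div, abs_of_pos (by positivity : 0 < ρ ^ 2), div_mul_cancel₀ _ (by positivity)]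
      refine hGB _ (by simp [Ne.symm hi]) fun j => ?_
      by_cases hj : j = i
      · subst hj; simp [abs_of_pos hρ]
      · simp [hj, hρ.le]
  · intro x hx
    obtain ⟨s1, s2⟩ := hsub x _ hρ.le hx.1
    set τ := x - Pi.single l (x l) with hτ
    have hxl : x l ≤ ρ := (abs_le.1 (hx.1 l)).2
    have a := hA (x l) hx.2 hxl
    have b := hD τ s1 s2 (x l) hx.2 hxl
    have c := hN τ s1 s2
    have ex : Pi.single l (x l) + τ = x := by rw [hτ, add_sub_cancel]
    rw [ex] at b
    have es : (∑ i, (if i = l then 0 else G (Pi.single i ρ) / ρ ^ 2) * x i) * x l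
        = (∑ i, τ i / ρ * G (Pi.single i ρ)) * (x l / ρ) := by
      rw [Finset.sum_mul, Finset.sum_mul]
      refine Finset.sum_congr rfl fun i _ => ?_
      by_cases hi : i = l
      · subst hi; simp [s1]
      · simp only [hi, if_false]
        have : τ i = x i := by simp [hτ, hi]
        rw [this]; field_simp
    rw [es]
    set s := x l / ρ
    have s0 : 0 ≤ s := div_nonneg hx.2 hρ.le
    have s1 : s ≤ 1 := by rw [div_le_one hρ]; exact hxl
    have c' : |(G τ - ∑ i, τ i / ρ * G (Pi.single i ρ)) * s| ≤ (6 * n + 1) * κ := by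
      rw [abs_mul, abs_of_nonneg s0]
      calc _ ≤ _ * 1 := mul_le_mul_of_nonneg_left s1 (abs_nonneg _)
        _ ≤ _ := by linarith
    have eG : w (Pi.single l ρ + τ) - w (Pi.single l ρ) = G τ := rfl
    rw [eG] at b
    have ea : w (Pi.single l ρ) / ρ * x l = w (Pi.single l ρ) * s := by simp only [s]; ring
    rw [ea]
    have e3 : (6 * n + 7) * ((n ^ 2 + 2) * C3) * (X + E) = (6 * n + 7) * κ := by rw [hκ]; ring
    rw [e3]
    rw [sub_mul] at c'
    rw [abs_le] at *
    constructor <;> linarith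

lemma flat_T (n : ℕ) : ∃ C : ℝ, 1 ≤ C ∧ ∀ (l : Fin n) (R S E ρ : ℝ) (w : (Fin n → ℝ) → ℝ),
    0 < ρ → 256 * n * ρ ≤ R → Flat l R S E w →
    ∃ (a : ℝ) (b : Fin n → ℝ), b l = 0 ∧ |a| * ρ ≤ S ∧ (∀ i, |b i| * ρ ^ 2 ≤ 2 * S) ∧
      ∀ x ∈ FB l ρ, |w x - a * x l - (∑ i, b i * x i) * x l|
        ≤ C * (S * (ρ / R) ^ 3 * (x l / ρ) + E) := by
  obtain ⟨C1, hC1, H1⟩ := flat_T1 n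
  have hn0 : (0:ℝ) ≤ n := Nat.cast_nonneg n
  refine ⟨(8 * n + 1) * (8 * C1) + 5, by nlinarith, ?_⟩
  intro l R S E ρ w hρ hρR h
  have hn1 : (1:ℝ) ≤ n := by exact_mod_cast l.pos
  have hR : 0 < R := lt_of_lt_of_le (by positivity) hρR
  have hS := h.S_nonneg hR.le
  have hE := h.E_nonneg hR.le
  obtain ⟨a, b, hb0, ha, hb, hw⟩ := H1 l R S E (2 * ρ) w (by positivity) (by linarith) h
  have h2R : 2 * ρ ≤ R := by nlinarith
  refine ⟨a, b, hb0, ?_, ?_, ?_⟩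
  · nlinarith [abs_nonneg a]
  · intro i; have := hb i; nlinarith [mul_nonneg (abs_nonneg (b i)) (sq_nonneg ρ)]
  intro x hx
  have hF : Flat l (2 * ρ) (C1 * (S * (2 * ρ / R) ^ 3 + E)) E
      (fun x => w x - a * x l - (∑ i, b i * x i) * x l) := by
    refine ⟨?_, hw, ?_, ?_⟩
    · exact ((h.cont.mono (FB_mono l h2R)).sub (by fun_prop)).sub (by fun_prop)
    · intro y hy h0
      have := h.bot y (FB_mono l h2R hy) h0
      simpa [h0] using this
    · intro y hy h0
      obtain ⟨L, hL, hL2⟩ := h.lap y (fun i => (hy i).trans_le h2R) h0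
      refine ⟨L - 0 - 0, (hL.sub (lin_lap l a y)).sub (bil_lap l b hb0 y), ?_⟩
      rw [sub_zero, sub_zero]
      refine le_trans ?_ hL2
      gcongr
  have := flat_L1 (by positivity) hF (x := x) (by convert hx using 2; ring)
  refine this.trans ?_
  set t := x l / ρ with ht
  have t0 : 0 ≤ t := div_nonneg hx.2 hρ.le
  have t1 : t ≤ 1 := by rw [div_le_one hρ]; exact (abs_le.1 (hx.1 l)).2
  have e1 : x l / (2 * ρ) = t / 2 := by rw [ht]; field_simp
  have e2 : (2 * ρ / R) ^ 3 = 8 * (ρ / R) ^ 3 := by ring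
  rw [e1, e2]
  set X := S * (ρ / R) ^ 3 with hX
  have hX0 : 0 ≤ X := by positivity
  have e3 : (8 * n + 1) * (C1 * (S * (8 * (ρ / R) ^ 3) + E)) * (t / 2) + 5 * E
     = (8 * n + 1) * C1 * (4 * (X * t) + E * t / 2) + 5 * E := by rw [hX]; ring
  rw [e3]
  have p1 : 0 ≤ X * t := by positivity
  have p2 : E * t ≤ E := mul_le_of_le_one_right hE t1
  have p3 : (8 * n + 1) * C1 * (4 * (X * t) + E * t / 2) ≤ (8 * n + 1) * C1 * (8 * (X * t + E)) := by
    gcongr; linarith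
  nlinarith
end PB

namespace PB
open Filter Topology Set
variable {n : ℕ}

def Box (r : ℝ) : Set (Fin n → ℝ) := {x | ∀ i, |x i| ≤ r}

lemma Box_closed (r : ℝ) : IsClosed (Box r : Set (Fin n → ℝ)) := by
  have : (Box r : Set (Fin n → ℝ)) = ⋂ i, {x : Fin n → ℝ | |x i| ≤ r} := by
    ext x; simp [Box]
  rw [this]
  exact isClosed_iInter fun i => isClosed_le (by fun_prop) continuous_const

lemma Box_nhds {r : ℝ} {x : Fin n → ℝ} (h : ∀ i, |x i| < r) : Box r ∈ 𝓝 x := by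
  have : ∀ j, ∀ᶠ u in 𝓝 x, |u j| ≤ r := by
    intro j
    have ho : IsOpen {u : Fin n → ℝ | |u j| < r} := isOpen_lt (by fun_prop) continuous_const
    filter_upwards [ho.mem_nhds (h j)] with u hu
    exact le_of_lt hu
  filter_upwards [eventually_all.2 this] with u hu using hu

lemma sum_bound {b x : Fin n → ℝ} {B d : ℝ} (hb : ∀ i, |b i| ≤ B) (hx : ∀ i, |x i| ≤ d) :
    |∑ i, b i * x i| ≤ n * (B * d) := by
  refine (Finset.abs_sum_le_sum_abs _ _).trans ?_
  have : ∀ i ∈ Finset.univ, |b i * x i| ≤ B * d := fun i _ => by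
    rw [abs_mul]
    exact mul_le_mul (hb i) (hx i) (abs_nonneg _) ((abs_nonneg _).trans (hb i))
  refine (Finset.sum_le_sum this).trans ?_
  simp

set_option maxHeartbeats 2000000 in
lemma step (n : ℕ) : ∃ C : ℝ, 1 ≤ C ∧ ∀ (l : Fin n) (O : Set (Fin n → ℝ)) (w : (Fin n → ℝ) → ℝ)
    (r θ h S E T : ℝ), IsOpen O → 0 < r → 0 < θ → 1024 * n * θ ≤ 1 → 0 < h → 4 * h ≤ θ ^ 2 * r →
    ContinuousOn w (closure O ∩ Box r) →
    (∀ x ∈ closure O, x ∈ Box r → |w x| ≤ S) →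
    (∀ x ∈ closure O, x ∈ Box r → -h ≤ x l) →
    (∀ x ∈ Box r, h < x l → x ∈ O) →
    (∀ x ∈ closure O, x ∈ Box r → x ∉ O → |w x| ≤ E) →
    (∀ x ∈ O, x ∈ Box r → ∃ L, HasLap w x L ∧ r ^ 2 * |L| ≤ E) →
    |w (Pi.single l (θ ^ 2 * r))| ≤ T → S * (h / r) ≤ E →
    ∃ b : Fin n → ℝ, b l = 0 ∧ ∀ x ∈ closure O, x ∈ Box (θ * r) →
      |w x - (∑ i, b i * x i) * x l| ≤ C * (S * θ ^ 3 + T / θ + E / θ) := by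
  obtain ⟨C, hC, HT⟩ := flat_T n
  have hn0 : (0:ℝ) ≤ n := Nat.cast_nonneg n
  refine ⟨(1 + 3 * C) * (64 + 24 * n + 8) + 4 * n + 2, by nlinarith, ?_⟩
  intro l O w r θ h S E T hO hr hθ hθn hh hhθ hwc hwS hlow hup hfr hlap hT hSE
  have hn1 : (1:ℝ) ≤ n := by exact_mod_cast l.pos
  have hθ1 : θ ≤ 1 / 1024 := by nlinarith
  have hh1 : 4 * h ≤ r / 1024 := by nlinarith [mul_pos hθ hr]
  have hrl : (Pi.single l r : Fin n → ℝ) ∈ Box r := fun i => by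
    by_cases hi : i = l
    · subst hi; simp [abs_of_pos hr]
    · simp [hi, hr.le]
  have hrO : (Pi.single l r : Fin n → ℝ) ∈ O := hup _ hrl (by simp; linarith)
  have hS : 0 ≤ S := (abs_nonneg _).trans (hwS _ (subset_closure hrO) hrl)
  have hE : 0 ≤ E := le_trans (by positivity) hSE
  have hT0 : 0 ≤ T := (abs_nonneg _).trans hT
  -- bdry
  have hbd : ∀ x ∈ closure O, x ∈ Box (r / 2) → |w x| ≤ (8 * n + 1) * S * ((x l + h) / r) + 5 * E := by
    intro x hx hx2
    refine bdry l (F := closure O ∩ Box r) (isClosed_closure.inter (Box_closed r)) hr hh.le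
      (by linarith) hS hE (fun y hy => hy.2) (fun y hy => hlow y hy.1 hy.2) hwc
      (fun y hy => hwS y hy.1 hy.2) ?_ x ⟨hx, fun i => (hx2 i).trans (by linarith)⟩ hx2
    intro y hy hy2
    by_cases hyO : y ∈ O
    · right
      exact ⟨Filter.inter_mem (Filter.mem_of_superset (hO.mem_nhds hyO) subset_closure)
        (Box_nhds hy2), hlap y hyO hy.2⟩
    · left; exact hfr y hy.1 hy.2 hyO
  set E' := (24 * n + 8) * E with hE'
  have hE'0 : 0 ≤ E' := by positivity
  have hlowbd : ∀ x ∈ closure O, x ∈ Box (r / 2) → x l ≤ 2 * h → |w x| ≤ E' := by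
    intro x hx hx2 hxl
    refine (hbd x hx hx2).trans ?_
    have : (x l + h) / r ≤ 3 * (h / r) := by
      rw [← mul_div_assoc]; gcongr; linarith
    calc (8 * n + 1) * S * ((x l + h) / r) + 5 * E
        ≤ (8 * n + 1) * S * (3 * (h / r)) + 5 * E := by gcongr
      _ = 3 * (8 * n + 1) * (S * (h / r)) + 5 * E := by ring
      _ ≤ 3 * (8 * n + 1) * E + 5 * E := by gcongr
      _ = E' := by rw [hE']; ring
  -- shifted function
  set c : Fin n → ℝ := Pi.single l (2 * h) with hc
  have hcl : ∀ y : Fin n → ℝ, (y + c) l = y l + 2 * h := fun y => by simp [hc]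
  have hcB : ∀ y ∈ FB l (r / 4), y + c ∈ Box (r / 2) ∧ y + c ∈ O := by
    intro y hy
    have hb : y + c ∈ Box (r / 2) := fun i => by
      have := hy.1 i
      by_cases hi : i = l
      · subst hi
        rw [hcl]
        exact (abs_add_le _ _).trans (by rw [abs_of_pos (by linarith : 0 < 2 * h)]; linarith)
      · simp [hc, hi]; linarith
    refine ⟨hb, hup _ (fun i => (hb i).trans (by linarith)) ?_⟩
    rw [hcl]; linarith [hy.2]
  have hFlat : Flat l (r / 4) S E' (fun y => w (y + c)) := by
    refine ⟨?_, ?_, ?_, ?_⟩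
    · refine hwc.comp (by fun_prop) fun y hy => ⟨subset_closure (hcB y hy).2, fun i => ?_⟩
      exact ((hcB y hy).1 i).trans (by linarith)
    · intro y hy
      exact hwS _ (subset_closure (hcB y hy).2) fun i => ((hcB y hy).1 i).trans (by linarith)
    · intro y hy h0
      exact hlowbd _ (subset_closure (hcB y hy).2) (hcB y hy).1 (by rw [hcl, h0]; linarith)
    · intro y hy h0
      have hy' := hcB y ⟨fun i => (hy i).le, h0.le⟩
      obtain ⟨L, hL, hL2⟩ := hlap _ hy'.2 fun i => (hy'.1 i).trans (by linarith)
      refine ⟨L, hL.translate c, ?_⟩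
      have : (r / 4) ^ 2 * |L| ≤ r ^ 2 * |L| := by gcongr; linarith
      nlinarith
  obtain ⟨a, b, hb0, ha, hb, hw⟩ := HT l (r / 4) S E' (θ * r) _ (by positivity) (by nlinarith) hFlat
  refine ⟨b, hb0, ?_⟩
  have h64 : (θ * r / (r / 4)) ^ 3 = 64 * θ ^ 3 := by field_simp; norm_num
  rw [h64] at hw
  set X := S * θ ^ 3 with hX
  have hX0 : 0 ≤ X := by positivity
  have hEθ : E ≤ E / θ := by rw [le_div_iff₀ hθ]; nlinarith
  have hEθ' : E' ≤ E' / θ := by rw [le_div_iff₀ hθ]; nlinarith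
  have hTθ : 0 ≤ T / θ := by positivity
  have eE' : E' / θ = (24 * n + 8) * (E / θ) := by rw [hE']; ring
  have hhr : S * (h / r) / θ ≤ E / θ := by gcongr
  -- sums
  have hsum : ∀ x ∈ (Box (θ * r) : Set (Fin n → ℝ)), |∑ i, b i * x i| * (2 * h) ≤ 4 * n * (E / θ) := by
    intro x hx
    have : ∀ i, |b i| ≤ 2 * S / (θ * r) ^ 2 := fun i => by
      rw [le_div_iff₀ (by positivity)]; exact hb i
    calc |∑ i, b i * x i| * (2 * h) ≤ n * (2 * S / (θ * r) ^ 2 * (θ * r)) * (2 * h) := by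
          gcongr; exact sum_bound this hx
      _ = 4 * n * (S * (h / r) / θ) := by field_simp; ring
      _ ≤ _ := by gcongr
  -- a
  set t := θ ^ 2 * r - 2 * h with ht
  have ht0 : θ ^ 2 * r / 2 ≤ t := by linarith
  have htp : 0 < t := lt_of_lt_of_le (by positivity) ht0
  have ht1 : t ≤ θ * r := by nlinarith [mul_pos hθ hr]
  have hat := hw (Pi.single l t) ⟨fun i => by
      by_cases hi : i = l
      · subst hi; simpa [abs_of_pos htp] using ht1
      · simp [hi]; positivity, by simpa using htp.le⟩
  have e1 : (Pi.single l t : Fin n → ℝ) + c = Pi.single l (θ ^ 2 * r) := by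
    rw [hc, ← Pi.single_add, ht]; congr 1; ring
  have e2 : ∑ i, b i * (Pi.single l t : Fin n → ℝ) i = 0 := by
    refine Finset.sum_eq_zero fun i _ => ?_
    by_cases hi : i = l
    · subst hi; simp [hb0]
    · simp [hi]
  rw [e2] at hat
  simp only [Pi.single_eq_same, zero_mul, sub_zero] at hat
  rw [e1] at hat
  have hat' : |a| * t ≤ T + C * (S * (64 * θ ^ 3) * (t / (θ * r)) + E') := by
    have : |a * t| ≤ |w (Pi.single l (θ ^ 2 * r))| + |w (Pi.single l (θ ^ 2 * r)) - a * t| := by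
      rw [abs_sub_comm]
      calc |a * t| = |w (Pi.single l (θ ^ 2 * r)) + (a * t - w (Pi.single l (θ ^ 2 * r)))| := by
            congr 1; ring
        _ ≤ _ := abs_add_le _ _
    rw [abs_mul, abs_of_pos htp] at this
    linarith
  have hrt : θ * r / t ≤ 2 / θ := by
    rw [div_le_div_iff₀ htp hθ]; nlinarith
  have haf : |a| * (θ * r) ≤ 2 * (T / θ) + C * (64 * X + 2 * (E' / θ)) := by
    calc |a| * (θ * r) = |a| * t * (θ * r / t) := by field_simp
      _ ≤ (T + C * (S * (64 * θ ^ 3) * (t / (θ * r)) + E')) * (θ * r / t) := by gcongr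
      _ = T * (θ * r / t) + C * (64 * X + E' * (θ * r / t)) := by
          rw [hX]; field_simp
      _ ≤ T * (2 / θ) + C * (64 * X + E' * (2 / θ)) := by gcongr
      _ = _ := by ring
  have hC0 : 0 ≤ C := by linarith
  intro x hx hxB
  set Y := E / θ with hY
  have hY0 : 0 ≤ Y := by positivity
  have hxr2 : x ∈ Box (r / 2) := fun i => (hxB i).trans (by nlinarith)
  have hfin : E' + 4 * n * Y + C * (64 * X + E') + (2 * (T / θ) + C * (64 * X + 2 * (E' / θ)))
      ≤ ((1 + 3 * C) * (64 + 24 * n + 8) + 4 * n + 2) * (X + T / θ + Y) := by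
    have z1 : E' ≤ (24 * n + 8) * Y := by linarith
    have z2 : C * (64 * X + E') ≤ C * (64 * X + (24 * n + 8) * Y) := by gcongr
    rw [eE']
    have q1 : 0 ≤ C * X := by positivity
    have q2 : 0 ≤ C * Y := by positivity
    have q3 : 0 ≤ C * (T / θ) := by positivity
    have q4 : 0 ≤ n * X := by positivity
    have q5 : 0 ≤ n * Y := by positivity
    have q6 : 0 ≤ n * (T / θ) := by positivity
    have q7 : 0 ≤ C * X * n := by positivity
    have q9 : 0 ≤ C * (T / θ) * n := by positivity
    linarith
  refine le_trans ?_ hfin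
  rcases le_total (x l) (2 * h) with hxl | hxl
  · have h1 := hlowbd x hx hxr2 hxl
    have h2 := hlow x hx fun i => (hxr2 i).trans (by linarith)
    have h3 := hsum x hxB
    have h4 : |(∑ i, b i * x i) * x l| ≤ 4 * n * Y := by
      rw [abs_mul]
      refine le_trans ?_ h3
      gcongr
      rw [abs_le]; constructor <;> linarith
    have := abs_sub (w x) ((∑ i, b i * x i) * x l)
    have : 0 ≤ C * (64 * X + E') := by positivity
    have : 0 ≤ (2 * (T / θ) + C * (64 * X + 2 * (E' / θ))) := by positivity
    linarith
  · set y := x - c with hy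
    have hyx : y + c = x := sub_add_cancel x c
    have hyl : y l = x l - 2 * h := by simp [hy, hc]
    have hxB' := hxB l
    have hyF : y ∈ FB l (θ * r) := by
      refine ⟨fun i => ?_, by rw [hyl]; linarith⟩
      by_cases hi : i = l
      · subst hi
        rw [hyl]; rw [abs_le] at hxB' ⊢; constructor <;> linarith
      · have := hxB i
        simpa [hy, hc, hi] using this
    have h1 := hw y hyF
    beta_reduce at h1
    rw [hyx] at h1
    have hs : ∑ i, b i * y i = ∑ i, b i * x i := by
      refine Finset.sum_congr rfl fun i _ => ?_
      by_cases hi : i = l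
      · subst hi; simp [hb0]
      · simp [hy, hc, hi]
    rw [hs] at h1
    have hyl1 : y l ≤ θ * r := (abs_le.1 (hyF.1 l)).2
    have h2 : S * (64 * θ ^ 3) * (y l / (θ * r)) ≤ 64 * X := by
      have : y l / (θ * r) ≤ 1 := by rw [div_le_one (by positivity)]; exact hyl1
      calc _ ≤ S * (64 * θ ^ 3) * 1 := by gcongr
        _ = _ := by rw [hX]; ring
    have h3 : C * (S * (64 * θ ^ 3) * (y l / (θ * r)) + E') ≤ C * (64 * X + E') := by gcongr
    have h4 := hsum x hxB
    have h5 : |a * y l| ≤ |a| * (θ * r) := by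
      rw [abs_mul, abs_of_nonneg hyF.2]; gcongr
    have h6 : |(∑ i, b i * x i) * (2 * h)| ≤ 4 * n * Y := by
      rw [abs_mul, abs_of_pos (by linarith : 0 < 2 * h)]; exact h4
    have e : w x - (∑ i, b i * x i) * x l = (w x - a * y l - (∑ i, b i * x i) * y l) + a * y l
      - (∑ i, b i * x i) * (2 * h) := by rw [hyl]; ring
    rw [e]
    have a1 := abs_sub ((w x - a * y l - (∑ i, b i * x i) * y l) + a * y l) ((∑ i, b i * x i) * (2 * h))
    have a2 := abs_add_le (w x - a * y l - (∑ i, b i * x i) * y l) (a * y l)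
    linarith

end PB

namespace PB
open Filter Topology Set
variable {n : ℕ}

structure Core (l : Fin n) (O : Set (Fin n → ℝ)) (α K N r0 : ℝ) (v : (Fin n → ℝ) → ℝ) : Prop where
  op : IsOpen O
  cont : ContinuousOn v (closure O ∩ Box r0)
  up : ∀ r, 0 < r → r ≤ r0 → ∀ x ∈ Box r, K * r * r ^ α < x l → x ∈ O
  low : ∀ r, 0 < r → r ≤ r0 → ∀ x ∈ closure O, x ∈ Box r → -(K * r * r ^ α) ≤ x l
  lap : ∀ r, 0 < r → r ≤ r0 → ∀ x ∈ O, x ∈ Box r → ∃ L, HasLap v x L ∧ |L| ≤ N * r ^ α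
  fr : ∀ r, 0 < r → r ≤ r0 → ∀ x ∈ closure O, x ∈ Box r → x ∉ O → |v x| ≤ N * r ^ 2 * r ^ α
  bd : ∀ x ∈ closure O, x ∈ Box r0 → |v x| ≤ N

/-- explicit coefficient -/
noncomputable def bk (l : Fin n) (v : (Fin n → ℝ) → ℝ) (r : ℝ) (i : Fin n) : ℝ :=
  if i = l then 0 else (v (Pi.single i r + Pi.single l r) - v (Pi.single l r)) / r ^ 2

lemma bk_l (l : Fin n) (v : (Fin n → ℝ) → ℝ) (r : ℝ) : bk l v r l = 0 := by simp [bk]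

lemma pt1 (l i : Fin n) (hi : i ≠ l) {r : ℝ} (hr : 0 ≤ r) :
    (Pi.single i r + Pi.single l r : Fin n → ℝ) ∈ Box r := by
  intro j
  by_cases h1 : j = i
  · subst h1; simp [hi, abs_of_nonneg hr]
  · by_cases h2 : j = l
    · subst h2; simp [h1, abs_of_nonneg hr]
    · simp [h1, h2, hr]

lemma pt2 (l : Fin n) {r : ℝ} (hr : 0 ≤ r) : (Pi.single l r : Fin n → ℝ) ∈ Box r := by
  intro j
  by_cases h2 : j = l
  · subst h2; simp [abs_of_nonneg hr]
  · simp [h2, hr]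

lemma sum_pt2 (l : Fin n) (b : Fin n → ℝ) (hb : b l = 0) (r : ℝ) :
    ∑ j, b j * (Pi.single l r : Fin n → ℝ) j = 0 := by
  refine Finset.sum_eq_zero fun i _ => ?_
  by_cases hi : i = l
  · subst hi; simp [hb]
  · simp [hi]

lemma sum_pt1 (l i : Fin n) (b : Fin n → ℝ) (hb : b l = 0) (r : ℝ) :
    ∑ j, b j * (Pi.single i r + Pi.single l r : Fin n → ℝ) j = b i * r := by
  have : ∀ j, b j * (Pi.single i r + Pi.single l r : Fin n → ℝ) j
    = b j * (Pi.single i r : Fin n → ℝ) j + b j * (Pi.single l r : Fin n → ℝ) j := fun j => by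
      simp [mul_add]
  simp only [this, Finset.sum_add_distrib, sum_pt2 l b hb]
  simp [Pi.single_apply]

/-- the explicit coefficient is close to any coefficient that works -/
lemma bk_close (l : Fin n) {v : (Fin n → ℝ) → ℝ} {r η : ℝ} (hr : 0 < r) {b : Fin n → ℝ}
    (hb : b l = 0) (hη : 0 ≤ η) {G : Set (Fin n → ℝ)}
    (hG : ∀ x ∈ Box r, x l = r → x ∈ G)
    (h : ∀ x ∈ G, x ∈ Box r → |v x - (∑ i, b i * x i) * x l| ≤ η) (i : Fin n) :
    |bk l v r i - b i| ≤ 2 * η / r ^ 2 := by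
  by_cases hi : i = l
  · subst hi; rw [bk_l, hb]; simp; positivity
  have h1 := h _ (hG _ (pt1 l i hi hr.le) (by simp [Ne.symm hi])) (pt1 l i hi hr.le)
  have h2 := h _ (hG _ (pt2 l hr.le) (by simp)) (pt2 l hr.le)
  rw [sum_pt1 l i b hb] at h1
  rw [sum_pt2 l b hb] at h2
  simp [Ne.symm hi] at h1 h2
  rw [bk, if_neg hi, le_div_iff₀ (by positivity)]
  have : |(v (Pi.single i r + Pi.single l r) - v (Pi.single l r)) / r ^ 2 - b i| * r ^ 2
      = |(v (Pi.single i r + Pi.single l r) - b i * r * r) - v (Pi.single l r)| := by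
    rw [← abs_of_pos (by positivity : 0 < r ^ 2), ← abs_mul, abs_of_pos (by positivity : 0 < r ^ 2)]
    congr 1; field_simp; ring
  rw [this]
  exact (abs_sub _ _).trans (by linarith)

lemma quad_bound (l : Fin n) {b x : Fin n → ℝ} {B r : ℝ} (hb : ∀ i, |b i| ≤ B) (hx : x ∈ Box r) :
    |(∑ i, b i * x i) * x l| ≤ n * B * r ^ 2 := by
  rw [abs_mul]
  calc _ ≤ n * (B * r) * r := by
        apply mul_le_mul (sum_bound hb hx) (hx l) (abs_nonneg _)
        have := (abs_nonneg _).trans (hb l)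
        have := (abs_nonneg _).trans (hx l)
        positivity
    _ = _ := by ring

lemma quad_sub (l : Fin n) (b b' x : Fin n → ℝ) :
    (∑ i, b i * x i) * x l - (∑ i, b' i * x i) * x l = (∑ i, (b - b') i * x i) * x l := by
  rw [← sub_mul, ← Finset.sum_sub_distrib]
  congr 1
  exact Finset.sum_congr rfl fun i _ => by simp [sub_mul]

lemma to_explicit (l : Fin n) {v : (Fin n → ℝ) → ℝ} {r η : ℝ} (hr : 0 < r) {b : Fin n → ℝ}
    (hb : b l = 0) (hη : 0 ≤ η) {G : Set (Fin n → ℝ)}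
    (hG : ∀ x ∈ Box r, x l = r → x ∈ G)
    (h : ∀ x ∈ G, x ∈ Box r → |v x - (∑ i, b i * x i) * x l| ≤ η) :
    ∀ x ∈ G, x ∈ Box r → |v x - (∑ i, bk l v r i * x i) * x l| ≤ (1 + 2 * n) * η := by
  intro x hxG hx
  have h1 := h x hxG hx
  have h2 := quad_bound l (b := b - bk l v r) (fun i => by
    have := bk_close l hr hb hη hG h i
    rw [abs_sub_comm] at this
    exact this) hx
  rw [← quad_sub] at h2
  have e : (n:ℝ) * (2 * η / r ^ 2) * r ^ 2 = 2 * n * η := by field_simp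
  rw [e] at h2
  have : v x - (∑ i, bk l v r i * x i) * x l = (v x - (∑ i, b i * x i) * x l)
    + ((∑ i, b i * x i) * x l - (∑ i, bk l v r i * x i) * x l) := by ring
  rw [this]
  exact (abs_add_le _ _).trans (by linarith)

/-- parameters -/
lemma params (n : ℕ) {α : ℝ} (h0 : 0 < α) (h1 : α < 1) (C K : ℝ) (hC : 1 ≤ C) (hK : 0 < K)
    (R0 : ℝ) (hR0 : 0 < R0) :
    ∃ θ r0 : ℝ, 0 < θ ∧ 0 < r0 ∧ r0 ≤ R0 ∧ r0 ≤ 1 ∧ 1024 * n * θ ≤ 1 ∧ θ ≤ 1 / 2 ∧ θ ^ α ≤ 1 / 2 ∧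
      2 * θ ≤ θ ^ α ∧ C * θ / θ ^ α ≤ 1 / (6 * (1 + 2 * n)) ∧ C * θ ^ α ≤ 1 / (6 * (1 + 2 * n)) ∧
      4 * K * r0 ^ α ≤ θ ^ 2 ∧
      C * (7 * n * K) * r0 ^ α / (θ ^ 5 * θ ^ α) ≤ 1 / (6 * (1 + 2 * n)) := by
  have hn0 : (0:ℝ) ≤ n := Nat.cast_nonneg n
  set lam : ℝ := 1 / (6 * (1 + 2 * n)) with hlam
  have hl : 0 < lam := by positivity
  have T : ∀ β : ℝ, 0 < β → Tendsto (fun t : ℝ => t ^ β) (𝓝[>] 0) (𝓝 0) := by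
    intro β hβ
    have := (Real.continuous_rpow_const hβ.le).tendsto 0
    rw [Real.zero_rpow hβ.ne'] at this
    exact this.mono_left nhdsWithin_le_nhds
  have T1 : Tendsto (fun t : ℝ => t) (𝓝[>] 0) (𝓝 0) := nhdsWithin_le_nhds
  have ev : ∀ (f : ℝ → ℝ) (c : ℝ), Tendsto f (𝓝[>] 0) (𝓝 0) → 0 < c → ∀ᶠ t in 𝓝[>] (0:ℝ), f t ≤ c :=
    fun f c hf hc => hf.eventually (ge_mem_nhds hc)
  have hα' : 0 < 1 - α := by linarith
  have ep : ∀ᶠ t in 𝓝[>] (0:ℝ), 0 < t := self_mem_nhdsWithin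
  obtain ⟨θ, hθ0, a1, a2, a3, a4, a5⟩ := (ep.and
    ((ev _ (1 / (1024 * (n + 1))) T1 (by positivity)).and
    ((ev _ (1 / 2) T1 (by positivity)).and
    ((ev _ (1 / 2) (T α h0) (by positivity)).and
    ((ev _ (min (1 / 2) (lam / C)) (T (1 - α) hα') (by positivity)).and
    (ev _ (lam / C) (T α h0) (by positivity))))))).exists
  have hp : 0 < θ ^ α := Real.rpow_pos_of_pos hθ0 α
  have hmul : θ ^ (1 - α) * θ ^ α = θ := by
    rw [← Real.rpow_add hθ0]; simp
  have hdiv : θ / θ ^ α = θ ^ (1 - α) := by rw [div_eq_iff hp.ne']; exact hmul.symm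
  set c2 := lam * (θ ^ 5 * θ ^ α) / (C * (7 * n * K) + 1) with hc2
  obtain ⟨r0, hr0, b1, b2, b3, b4⟩ := (ep.and
    ((ev _ R0 T1 hR0).and ((ev _ 1 T1 one_pos).and
    ((ev _ (θ ^ 2 / (4 * K)) (T α h0) (by positivity)).and
    (ev _ c2 (T α h0) (by positivity)))))).exists
  refine ⟨θ, r0, hθ0, hr0, b1, b2, ?_, a2, a3, ?_, ?_, ?_, ?_, ?_⟩
  · rw [le_div_iff₀ (by positivity)] at a1; nlinarith
  · have : θ ^ (1 - α) ≤ 1 / 2 := a4.trans (min_le_left _ _)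
    nlinarith
  · rw [mul_div_assoc, hdiv]
    have := a4.trans (min_le_right _ _)
    rw [le_div_iff₀ (by positivity)] at this; linarith
  · rw [le_div_iff₀ (by positivity)] at a5; linarith
  · rw [le_div_iff₀ (by positivity)] at b3; linarith
  · rw [div_le_iff₀ (by positivity)]
    rw [hc2, le_div_iff₀ (by positivity)] at b4
    have : 0 ≤ r0 ^ α := by positivity
    linarith

end PB

namespace PB
open Filter Topology Set
variable {n : ℕ}

lemma Box_mono {r r' : ℝ} (h : r ≤ r') : (Box r : Set (Fin n → ℝ)) ⊆ Box r' :=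
  fun _ hx i => (hx i).trans h

/-- the induction hypothesis -/
def HH (l : Fin n) (O : Set (Fin n → ℝ)) (v : (Fin n → ℝ) → ℝ) (α r0 θ ε A : ℝ) : Prop :=
  ∀ k : ℕ, ∀ x ∈ closure O, x ∈ Box (r0 * θ ^ k) →
    |v x - (∑ i, bk l v (r0 * θ ^ k) i * x i) * x l|
      ≤ A * (r0 * θ ^ k * (r0 * θ ^ k) ^ α * (r0 * θ ^ k + ε))

lemma Core.N_nonneg {l : Fin n} {O : Set (Fin n → ℝ)} {α K N r0 : ℝ} {v : (Fin n → ℝ) → ℝ}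
    (h : Core l O α K N r0 v) (hr0 : 0 < r0) (hK : K * r0 ^ α < 1) : 0 ≤ N := by
  have : (Pi.single l r0 : Fin n → ℝ) ∈ O := h.up r0 hr0 le_rfl _ (pt2 l hr0.le) (by
    simp; nlinarith)
  exact (abs_nonneg _).trans (h.bd _ (subset_closure this) (pt2 l hr0.le))

lemma Core.topmem {l : Fin n} {O : Set (Fin n → ℝ)} {α K N r0 : ℝ} {v : (Fin n → ℝ) → ℝ}
    (h : Core l O α K N r0 v) (hα : 0 < α) (hK0 : 0 < K) (hK : K * r0 ^ α < 1) {r : ℝ} (hr : 0 < r)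
    (hrr : r ≤ r0) : ∀ x ∈ Box r, x l = r → x ∈ O := by
  intro x hx hxl
  refine h.up r hr hrr x hx ?_
  rw [hxl]
  have : r ^ α ≤ r0 ^ α := Real.rpow_le_rpow hr.le hrr hα.le
  have : K * r ^ α < 1 := lt_of_le_of_lt (by gcongr) hK
  nlinarith

set_option maxHeartbeats 2000000 in
lemma core_contr (C : ℝ) (hC : 1 ≤ C) (l : Fin n)
    (hstep : ∀ (O : Set (Fin n → ℝ)) (w : (Fin n → ℝ) → ℝ)
    (r θ h S E T : ℝ), IsOpen O → 0 < r → 0 < θ → 1024 * n * θ ≤ 1 → 0 < h → 4 * h ≤ θ ^ 2 * r →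
    ContinuousOn w (closure O ∩ Box r) →
    (∀ x ∈ closure O, x ∈ Box r → |w x| ≤ S) →
    (∀ x ∈ closure O, x ∈ Box r → -h ≤ x l) →
    (∀ x ∈ Box r, h < x l → x ∈ O) →
    (∀ x ∈ closure O, x ∈ Box r → x ∉ O → |w x| ≤ E) →
    (∀ x ∈ O, x ∈ Box r → ∃ L, HasLap w x L ∧ r ^ 2 * |L| ≤ E) →
    |w (Pi.single l (θ ^ 2 * r))| ≤ T → S * (h / r) ≤ E →
    ∃ b : Fin n → ℝ, b l = 0 ∧ ∀ x ∈ closure O, x ∈ Box (θ * r) →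
      |w x - (∑ i, b i * x i) * x l| ≤ C * (S * θ ^ 3 + T / θ + E / θ))
    {α K θ r0 ε N A : ℝ} (hα0 : 0 < α) (hK : 0 < K) (hθ : 0 < θ) (hr0 : 0 < r0) (hr1 : r0 ≤ 1)
    (q1 : 1024 * n * θ ≤ 1) (q2 : θ ≤ 1 / 2) (q3 : θ ^ α ≤ 1 / 2) (q4 : 2 * θ ≤ θ ^ α)
    (q5 : C * θ / θ ^ α ≤ 1 / (6 * (1 + 2 * n))) (q6 : C * θ ^ α ≤ 1 / (6 * (1 + 2 * n)))
    (q7 : 4 * K * r0 ^ α ≤ θ ^ 2)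
    (q8 : C * (7 * n * K) * r0 ^ α / (θ ^ 5 * θ ^ α) ≤ 1 / (6 * (1 + 2 * n)))
    (hε : 0 < ε) {O : Set (Fin n → ℝ)} {v : (Fin n → ℝ) → ℝ} (hc : Core l O α K N r0 v)
    (hH : HH l O v α r0 θ ε A) :
    HH l O v α r0 θ ε (A / 2 + (1 + 2 * n) *
      (C * (1 + 2 * n * K / r0 ^ 2) / (θ ^ 3 * θ ^ α) + 1 / (r0 ^ 2 * r0 ^ α)) * N) := by
  have hn0 : (0:ℝ) ≤ n := Nat.cast_nonneg n
  have hn1 : (1:ℝ) ≤ n := by exact_mod_cast l.pos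
  set p := θ ^ α with hp
  set s0 := r0 ^ α with hs0
  have hp0 : 0 < p := Real.rpow_pos_of_pos hθ α
  have hs00 : 0 < s0 := Real.rpow_pos_of_pos hr0 α
  have hs01 : s0 ≤ 1 := Real.rpow_le_one hr0.le hr1 hα0.le
  have hKs : K * s0 < 1 := by nlinarith
  have hN : 0 ≤ N := hc.N_nonneg hr0 hKs
  set R : ℕ → ℝ := fun k => r0 * θ ^ k with hR
  set s : ℕ → ℝ := fun k => (R k) ^ α with hs
  set om : ℕ → ℝ := fun k => R k * s k * (R k + ε) with hom
  have hRp : ∀ k, 0 < R k := fun k => by simp only [hR]; positivity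
  have hsp : ∀ k, 0 < s k := fun k => Real.rpow_pos_of_pos (hRp k) α
  have hR1 : ∀ k, R (k + 1) = θ * R k := fun k => by simp only [hR, pow_succ]; ring
  have hs1 : ∀ k, s (k + 1) = p * s k := fun k => by
    simp only [hs]; rw [hR1, Real.mul_rpow hθ.le (hRp k).le]
  have hRz : R 0 = r0 := by simp [hR]
  have hsz : s 0 = s0 := by simp only [hs]; rw [hRz]
  have hRle : ∀ k, R k ≤ r0 := fun k => by
    simp only [hR]; exact mul_le_of_le_one_right hr0.le (pow_le_one₀ hθ.le (by linarith))
  have hsle : ∀ k, s k ≤ s0 := fun k => Real.rpow_le_rpow (hRp k).le (hRle k) hα0.le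
  have homp : ∀ k, 0 < om k := fun k => by
    have := hRp k; have := hsp k; simp only [hom]; positivity
  have hH' : ∀ k, ∀ x ∈ closure O, x ∈ Box (R k) →
    |v x - (∑ i, bk l v (R k) i * x i) * x l| ≤ A * om k := hH
  have htop : ∀ k, ∀ x ∈ Box (R k), x l = R k → x ∈ closure O := fun k x hx hxl =>
    subset_closure (hc.topmem hα0 hK hKs (hRp k) (hRle k) x hx hxl)
  have hAom : ∀ k, 0 ≤ A * om k := fun k => (abs_nonneg _).trans
    (hH' k _ (htop k _ (pt2 l (hRp k).le) (by simp)) (pt2 l (hRp k).le))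
  have hA : 0 ≤ A := nonneg_of_mul_nonneg_left (hAom 0) (homp 0)
  -- initial coefficient
  have hb0 : ∀ i, |bk l v r0 i| ≤ 2 * N / r0 ^ 2 := by
    intro i
    have := bk_close l (v := v) (b := 0) hr0 rfl hN (G := closure O)
      (fun x hx hxl => htop 0 x (by rw [hRz]; exact hx) (by rw [hRz]; exact hxl))
      (fun x hx hx2 => by simpa using hc.bd x hx hx2) i
    simpa using this
  -- coefficient steps
  have hbs : ∀ k i, |bk l v (R (k + 1)) i - bk l v (R k) i| ≤ 2 * (A * om k) / (R (k + 1)) ^ 2 := by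
    intro k i
    refine bk_close l (hRp _) (bk_l _ _ _) (hAom k) (G := closure O) (htop _) ?_ i
    intro x hx hx2
    exact hH' k x hx (Box_mono (by rw [hR1]; nlinarith [hRp k]) hx2)
  have hbb : ∀ k i, |bk l v (R k) i| ≤ 2 * N / r0 ^ 2
      + 2 * A / θ ^ 2 * (2 * (s0 - s k) + ε * (s k / R k)) := by
    intro k
    induction k with
    | zero =>
      intro i
      rw [hRz, hsz]
      have : 0 ≤ 2 * A / θ ^ 2 * (2 * (s0 - s0) + ε * (s0 / r0)) := by
        rw [sub_self]; positivity
      linarith [hb0 i]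
    | succ k ih =>
      intro i
      have h1 := hbs k i
      have h2 := ih i
      have hr := hRp k
      have hsk := hsp k
      have e1 : 2 * (A * om k) / (R (k + 1)) ^ 2 = 2 * A / θ ^ 2 * (s k + ε * (s k / R k)) := by
        rw [hR1]; simp only [hom]; field_simp
      rw [e1] at h1
      have e2 : s (k + 1) / R (k + 1) = p / θ * (s k / R k) := by
        rw [hR1, hs1]; field_simp
      rw [e2, hs1]
      have h3 : 2 ≤ p / θ := by rw [le_div_iff₀ hθ]; exact q4
      have h4 : (2 * (s0 - s k) + ε * (s k / R k)) + (s k + ε * (s k / R k))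
          ≤ 2 * (s0 - p * s k) + ε * (p / θ * (s k / R k)) := by
        have : 0 < ε * (s k / R k) := by positivity
        nlinarith
      have h5 : 0 ≤ 2 * A / θ ^ 2 := by positivity
      have h6 := mul_le_mul_of_nonneg_left h4 h5
      have e : bk l v (R (k + 1)) i = (bk l v (R (k + 1)) i - bk l v (R k) i) + bk l v (R k) i := by
        ring
      rw [e]
      refine (abs_add_le _ _).trans ?_
      rw [mul_add] at h6
      linarith
  set c0 := C * (1 + 2 * n * K / r0 ^ 2) / (θ ^ 3 * p) with hc0
  have hc00 : 0 ≤ c0 := by positivity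
  intro k
  rcases k with _ | k
  · -- scale zero
    intro x hx hxB
    change |v x - (∑ i, bk l v (R 0) i * x i) * x l| ≤ _ * om 0
    change x ∈ Box (R 0) at hxB
    rw [hRz] at hxB ⊢
    have h1 := hc.bd x hx hxB
    have h2 := quad_bound l hb0 hxB
    have e : (n:ℝ) * (2 * N / r0 ^ 2) * r0 ^ 2 = 2 * n * N := by field_simp
    rw [e] at h2
    have h3 := abs_sub (v x) ((∑ i, bk l v r0 i * x i) * x l)
    have h4 : 1 ≤ 1 / (r0 ^ 2 * s0) * om 0 := by
      simp only [hom]; rw [hRz, hsz]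
      rw [div_mul_eq_mul_div, le_div_iff₀ (by positivity)]
      nlinarith [mul_pos (mul_pos hr0 hs00) hε]
    have h5 : (1 + 2 * n) * N ≤ (1 + 2 * n) * N * (1 / (r0 ^ 2 * s0) * om 0) :=
      le_mul_of_one_le_right (by positivity) h4
    have h6 : 0 ≤ A / 2 * om 0 := by have := hAom 0; linarith
    have h7 : 0 ≤ (1 + 2 * n) * c0 * N * om 0 := by have := homp 0; positivity
    calc _ ≤ (1 + 2 * n) * N := by linarith
      _ ≤ _ := h5
      _ ≤ _ := by linarith
  · change ∀ x ∈ closure O, x ∈ Box (R (k + 1)) →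
      |v x - (∑ i, bk l v (R (k + 1)) i * x i) * x l| ≤ _ * om (k + 1)
    have hr := hRp k
    have hsk := hsp k
    have hom0 := homp k
    set B := 2 * N / r0 ^ 2 + 2 * A / θ ^ 2 * (2 * s0 + ε * (s k / R k)) with hB
    have hBb : ∀ i, |bk l v (R k) i| ≤ B := by
      intro i
      refine (hbb k i).trans ?_
      rw [hB]
      gcongr
      linarith
    have hB0 : 0 ≤ B := (abs_nonneg _).trans (hBb l)
    set E := N * R k ^ 2 * s k + n * B * K * R k ^ 2 * s k + A * om k * (K * s k) with hE
    set b0 := bk l v (R k) with hb0def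
    set w : (Fin n → ℝ) → ℝ := fun x => v x - (∑ i, b0 i * x i) * x l with hw
    have t1 : 0 ≤ N * R k ^ 2 * s k := by positivity
    have t2 : 0 ≤ n * B * K * R k ^ 2 * s k := by positivity
    have t3 : 0 ≤ A * om k * (K * s k) := by positivity
    have hKs0 : 0 < K * R k * s k := by positivity
    have hKs4 : 4 * (K * R k * s k) ≤ θ ^ 2 * R k := by
      have : 4 * K * s k ≤ θ ^ 2 := le_trans (by gcongr; exact hsle k) q7
      nlinarith
    obtain ⟨b, hbl, hb⟩ := hstep O w (R k) θ (K * R k * s k) (A * om k) E (A * om (k + 2))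
      hc.op hr hθ q1 hKs0 hKs4
      (by
        refine ContinuousOn.sub ?_ (by fun_prop)
        exact hc.cont.mono (inter_subset_inter_right _ (Box_mono (hRle k))))
      (fun x hx hxB => hH' k x hx hxB)
      (fun x hx hxB => hc.low _ hr (hRle k) x hx hxB)
      (fun x hxB hx => hc.up _ hr (hRle k) x hxB hx)
      (by
        intro x hx hxB hxO
        have h1 := hc.fr _ hr (hRle k) x hx hxB hxO
        have h2 := hc.low _ hr (hRle k) x hx hxB
        have h3 : x l ≤ K * R k * s k := by
          by_contra hcon
          exact hxO (hc.up _ hr (hRle k) x hxB (lt_of_not_ge hcon))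
        have h4 : |(∑ i, b0 i * x i) * x l| ≤ n * (B * R k) * (K * R k * s k) := by
          rw [abs_mul]
          refine mul_le_mul (sum_bound hBb hxB) (abs_le.2 ⟨h2, h3⟩) (abs_nonneg _) (by positivity)
        have h5 := abs_sub (v x) ((∑ i, b0 i * x i) * x l)
        have e : (n:ℝ) * (B * R k) * (K * R k * s k) = n * B * K * R k ^ 2 * s k := by ring
        rw [e] at h4
        have h1' : |v x| ≤ N * R k ^ 2 * s k := h1
        simp only [hw]; linarith)
      (by
        intro x hx hxB
        obtain ⟨L, hL, hL2⟩ := hc.lap _ hr (hRle k) x hx hxB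
        refine ⟨L - 0, hL.sub (bil_lap l b0 (bk_l _ _ _) x), ?_⟩
        rw [sub_zero]
        have : R k ^ 2 * |L| ≤ R k ^ 2 * (N * s k) := by gcongr
        linarith)
      (by
        have e : θ ^ 2 * R k = R (k + 2) := by rw [hR1, hR1]; ring
        rw [e]
        have := hH' (k + 2) _ (htop _ _ (pt2 l (hRp _).le) (by simp)) (pt2 l (hRp _).le)
        rw [sum_pt2 l _ (bk_l _ _ _)] at this
        simp only [hw]
        rw [sum_pt2 l _ (bk_l _ _ _)]
        exact this)
      (by
        have e : A * om k * (K * R k * s k / R k) = A * om k * (K * s k) := by field_simp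
        rw [e]; linarith)
    rw [← hR1] at hb
    -- estimate
    have om1 : om k ≤ om (k + 1) / (θ ^ 2 * p) := by
      rw [le_div_iff₀ (by positivity)]
      simp only [hom]; rw [hR1, hs1]
      have : R k * s k * (R k + ε) * (θ ^ 2 * p) = R k * s k * θ * p * (θ * R k + θ * ε) := by ring
      rw [this]
      have e2 : θ * R k * (p * s k) * (θ * R k + ε) = R k * s k * θ * p * (θ * R k + ε) := by ring
      rw [e2]
      gcongr
      nlinarith
    have om2 : om (k + 2) ≤ θ * p * om (k + 1) := by
      have hr1 := hRp (k + 1)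
      have hsk1 := hsp (k + 1)
      simp only [hom]; rw [show k + 2 = k + 1 + 1 from rfl, hR1 (k + 1), hs1 (k + 1)]
      have : θ * R (k + 1) * (p * s (k + 1)) * (θ * R (k + 1) + ε)
        ≤ θ * R (k + 1) * (p * s (k + 1)) * (R (k + 1) + ε) := by
        gcongr; nlinarith
      linarith
    have hEb : E ≤ ((1 + 2 * n * K / r0 ^ 2) * N + 7 * n * K / θ ^ 2 * s0 * A) * om k := by
      have g1 : R k ^ 2 * s k ≤ om k := by
        simp only [hom]; nlinarith [mul_pos (mul_pos hr hsk) hε]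
      have g2 : R k ^ 2 * s k * (2 * s0 + ε * (s k / R k)) ≤ 3 * s0 * om k := by
        have e : R k ^ 2 * s k * (ε * (s k / R k)) = R k * s k * ε * s k := by field_simp
        have g3 : R k * s k * ε * s k ≤ om k * s0 := by
          have : R k * s k * ε ≤ om k := by
            simp only [hom]; nlinarith [mul_pos (mul_pos hr hsk) hr]
          exact mul_le_mul this (hsle k) hsk.le hom0.le
        rw [mul_add, e]
        nlinarith
      have g4 : n * B * K * R k ^ 2 * s k = 2 * n * K / r0 ^ 2 * N * (R k ^ 2 * s k)
          + 2 * n * K / θ ^ 2 * A * (R k ^ 2 * s k * (2 * s0 + ε * (s k / R k))) := by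
        rw [hB]; ring
      have g5 : 2 * n * K / r0 ^ 2 * N * (R k ^ 2 * s k) ≤ 2 * n * K / r0 ^ 2 * N * om k := by gcongr
      have g6 : 2 * n * K / θ ^ 2 * A * (R k ^ 2 * s k * (2 * s0 + ε * (s k / R k)))
        ≤ 2 * n * K / θ ^ 2 * A * (3 * s0 * om k) := by gcongr
      have g7 : N * R k ^ 2 * s k ≤ N * om k := by
        rw [mul_assoc]; gcongr
      have g8 : A * om k * (K * s k) ≤ A * om k * (n * K / θ ^ 2 * s0) := by
        apply mul_le_mul_of_nonneg_left _ (hAom k)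
        have : 1 ≤ n / θ ^ 2 := by
          rw [le_div_iff₀ (by positivity)]
          nlinarith
        calc K * s k ≤ K * s0 := by gcongr; exact hsle k
          _ ≤ K * s0 * (n / θ ^ 2) := le_mul_of_one_le_right (by positivity) this
          _ = _ := by ring
      rw [hE, g4]
      have e : ((1 + 2 * n * K / r0 ^ 2) * N + 7 * n * K / θ ^ 2 * s0 * A) * om k
        = N * om k + (2 * n * K / r0 ^ 2 * N * om k + 2 * n * K / θ ^ 2 * A * (3 * s0 * om k))
          + A * om k * (n * K / θ ^ 2 * s0) := by ring
      rw [e]; linarith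
    set η := (A / (2 * (1 + 2 * n)) + c0 * N) * om (k + 1) with hη
    have hom1 := homp (k + 1)
    have hη0 : 0 ≤ η := by positivity
    have hfin : C * (A * om k * θ ^ 3 + A * om (k + 2) / θ + E / θ) ≤ η := by
      have f1 : C * (A * om k * θ ^ 3) ≤ A * (C * θ / p) * om (k + 1) := by
        calc C * (A * om k * θ ^ 3) ≤ C * (A * (om (k + 1) / (θ ^ 2 * p)) * θ ^ 3) := by gcongr
          _ = _ := by field_simp
      have f2 : C * (A * om (k + 2) / θ) ≤ A * (C * p) * om (k + 1) := by
        calc C * (A * om (k + 2) / θ) ≤ C * (A * (θ * p * om (k + 1)) / θ) := by gcongr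
          _ = _ := by field_simp
      have f3 : C * (E / θ) ≤ (c0 * N + A * (C * (7 * n * K) * s0 / (θ ^ 5 * p))) * om (k + 1) := by
        calc C * (E / θ) ≤ C * ((((1 + 2 * n * K / r0 ^ 2) * N + 7 * n * K / θ ^ 2 * s0 * A)
              * (om (k + 1) / (θ ^ 2 * p))) / θ) := by
                gcongr
                refine hEb.trans ?_
                gcongr
          _ = _ := by rw [hc0]; field_simp
      have f4 : A * (C * θ / p) ≤ A * (1 / (6 * (1 + 2 * n))) := by gcongr
      have f5 : A * (C * p) ≤ A * (1 / (6 * (1 + 2 * n))) := by gcongr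
      have f6 : A * (C * (7 * n * K) * s0 / (θ ^ 5 * p)) ≤ A * (1 / (6 * (1 + 2 * n))) := by gcongr
      have e : A / (2 * (1 + 2 * n)) = 3 * (A * (1 / (6 * (1 + 2 * n)))) := by field_simp; ring
      rw [hη, e]
      have f7 : (A * (C * θ / p) + A * (C * p) + (c0 * N + A * (C * (7 * n * K) * s0 / (θ ^ 5 * p))))
        * om (k + 1) ≤ (3 * (A * (1 / (6 * (1 + 2 * n)))) + c0 * N) * om (k + 1) := by
        apply mul_le_mul_of_nonneg_right _ hom1.le; linarith
      linarith
    have hb' : ∀ x ∈ closure O, x ∈ Box (R (k + 1)) →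
        |v x - (∑ i, (b0 + b) i * x i) * x l| ≤ η := by
      intro x hx hxB
      refine le_trans ?_ ((hb x hx hxB).trans hfin)
      simp only [hw]
      apply le_of_eq
      congr 1
      have : ∑ i, (b0 + b) i * x i = ∑ i, b0 i * x i + ∑ i, b i * x i := by
        rw [← Finset.sum_add_distrib]
        exact Finset.sum_congr rfl fun i _ => by simp [add_mul]
      rw [this]; ring
    have := to_explicit l (v := v) (b := b0 + b) (hRp (k + 1)) (by
      simp [hbl, hb0def, bk_l]) hη0 (htop (k + 1)) hb'
    intro x hx hxB
    refine (this x hx hxB).trans ?_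
    have e : (1 + 2 * n) * η = (A / 2 + (1 + 2 * n) * c0 * N) * om (k + 1) := by
      rw [hη]; field_simp
    rw [e]
    apply mul_le_mul_of_nonneg_right _ hom1.le
    have : 0 ≤ (1 + 2 * n) * (1 / (r0 ^ 2 * s0)) * N := by positivity
    linarith

end PB

namespace PB
open Filter Topology Set
variable {n : ℕ}

set_option maxHeartbeats 1000000 in
lemma core_thm (n : ℕ) {α : ℝ} (hα0 : 0 < α) (hα1 : α < 1) (K : ℝ) (hK : 0 < K) (R0 : ℝ)
    (hR0 : 0 < R0) :
    ∃ r0 C : ℝ, 0 < r0 ∧ r0 ≤ R0 ∧ r0 ≤ 1 ∧ 0 < C ∧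
      ∀ (l : Fin n) (O : Set (Fin n → ℝ)) (v : (Fin n → ℝ) → ℝ) (N : ℝ), Core l O α K N r0 v →
      (∃ Ku, ∀ r, 0 < r → r ≤ r0 → ∀ x ∈ closure O, x ∈ Box r → |v x| ≤ Ku * (r * r ^ α)) →
      ∃ b : Fin n → ℝ, b l = 0 ∧ (∀ i, |b i| ≤ C * N) ∧
        ∀ r, 0 < r → r ≤ r0 → ∀ x ∈ closure O, x ∈ Box r →
          |v x - (∑ i, b i * x i) * x l| ≤ C * N * (r ^ 2 * r ^ α) := by
  obtain ⟨C, hC, hstep⟩ := step n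
  obtain ⟨θ, r0, hθ, hr0, hrR, hr1, q1, q2, q3, q4, q5, q6, q7, q8⟩ :=
    params n hα0 hα1 C K hC hK R0 hR0
  have hn0 : (0:ℝ) ≤ n := Nat.cast_nonneg n
  set p := θ ^ α with hp
  set s0 := r0 ^ α with hs0
  have hp0 : 0 < p := Real.rpow_pos_of_pos hθ α
  have hs00 : 0 < s0 := Real.rpow_pos_of_pos hr0 α
  have hs01 : s0 ≤ 1 := Real.rpow_le_one hr0.le hr1 hα0.le
  have hKs : K * s0 < 1 := by nlinarith
  set c1 := (1 + 2 * n) * (C * (1 + 2 * n * K / r0 ^ 2) / (θ ^ 3 * p) + 1 / (r0 ^ 2 * s0)) with hc1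
  have hc10 : 0 < c1 := by positivity
  set C1 := 4 * c1 + n * (16 * c1 / θ ^ 2) with hC1
  have hC10 : 0 < C1 := by positivity
  refine ⟨r0, C1 / (θ ^ 2 * p) + (2 / r0 ^ 2 + 16 * c1 / θ ^ 2), hr0, hrR, hr1, by positivity, ?_⟩
  intro l O v N hc hKu
  obtain ⟨Ku, hKu⟩ := hKu
  have hN : 0 ≤ N := hc.N_nonneg hr0 hKs
  set R : ℕ → ℝ := fun k => r0 * θ ^ k with hR
  set s : ℕ → ℝ := fun k => (R k) ^ α with hs
  have hRp : ∀ k, 0 < R k := fun k => by simp only [hR]; positivity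
  have hsp : ∀ k, 0 < s k := fun k => Real.rpow_pos_of_pos (hRp k) α
  have hR1 : ∀ k, R (k + 1) = θ * R k := fun k => by simp only [hR, pow_succ]; ring
  have hs1 : ∀ k, s (k + 1) = p * s k := fun k => by
    simp only [hs]; rw [hR1, Real.mul_rpow hθ.le (hRp k).le]
  have hRz : R 0 = r0 := by simp [hR]
  have hsz : s 0 = s0 := by simp only [hs]; rw [hRz]
  have hRle : ∀ k, R k ≤ r0 := fun k => by
    simp only [hR]; exact mul_le_of_le_one_right hr0.le (pow_le_one₀ hθ.le (by linarith))
  have htop : ∀ k, ∀ x ∈ Box (R k), x l = R k → x ∈ closure O := fun k x hx hxl =>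
    subset_closure (hc.topmem hα0 hK hKs (hRp k) (hRle k) x hx hxl)
  have hsk : ∀ k, s k ≤ s0 / 2 ^ k := by
    intro k
    induction k with
    | zero => simp [hsz]
    | succ k ih =>
      rw [hs1, pow_succ]
      have := hsp k
      calc p * s k ≤ 1 / 2 * (s0 / 2 ^ k) := by gcongr
        _ = _ := by field_simp
  -- all epsilons
  have key : ∀ ε, 0 < ε → HH l O v α r0 θ ε (2 * (c1 * N)) := by
    intro ε hε
    have hA0 : HH l O v α r0 θ ε ((1 + 2 * n) * |Ku| / ε) := by
      intro k x hx hxB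
      change |v x - (∑ i, bk l v (R k) i * x i) * x l| ≤ _ * (R k * s k * (R k + ε))
      have h1 := hRp k
      have h2 := hsp k
      have := to_explicit l (v := v) (b := 0) (η := |Ku| * (R k * s k)) (hRp k) rfl (by positivity)
        (htop k) (by
          intro y hy hyB
          have := hKu (R k) (hRp k) (hRle k) y hy hyB
          simp only [Pi.zero_apply, zero_mul, Finset.sum_const_zero, sub_zero]
          refine this.trans ?_
          change Ku * (R k * s k) ≤ _
          gcongr
          exact le_abs_self _) x hx hxB
      refine this.trans ?_
      rw [div_mul_eq_mul_div, le_div_iff₀ hε]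
      have : 0 ≤ (1 + 2 * n) * |Ku| * (R k * s k * R k) := by positivity
      linarith
    intro k x hx hxB
    set om := r0 * θ ^ k * (r0 * θ ^ k) ^ α * (r0 * θ ^ k + ε) with hom
    have := le_of_contr (c := 2 * (c1 * N) * om) (β := ((1 + 2 * n) * |Ku| / ε - 2 * (c1 * N)) * om)
      (x := |v x - (∑ i, bk l v (r0 * θ ^ k) i * x i) * x l|) (fun j => by
        have := contr (P := HH l O v α r0 θ ε) (c := c1 * N)
          (β := (1 + 2 * n) * |Ku| / ε - 2 * (c1 * N)) (fun A hA =>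
            core_contr C hC l (hstep l) hα0 hK hθ hr0 hr1 q1 q2 q3 q4 q5 q6 q7 q8 hε hc hA)
          (by convert hA0 using 1; ring) j k x hx hxB
        refine this.trans (le_of_eq ?_)
        rw [← hom]; ring)
    exact this
  have key2 : ∀ k, ∀ x ∈ closure O, x ∈ Box (R k) →
      |v x - (∑ i, bk l v (R k) i * x i) * x l| ≤ 4 * c1 * N * (R k ^ 2 * s k) := by
    intro k x hx hxB
    refine (key (R k) (hRp k) k x hx hxB).trans (le_of_eq ?_)
    change 2 * (c1 * N) * (R k * s k * (R k + R k)) = _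
    ring
  have hbs : ∀ k i, |bk l v (R k) i - bk l v (R (k + 1)) i| ≤ 8 * c1 * N / θ ^ 2 * s k := by
    intro k i
    have h1 := hRp k
    have h2 := hsp k
    have := bk_close l (η := 4 * c1 * N * (R k ^ 2 * s k)) (hRp (k + 1)) (bk_l l v (R k))
      (by positivity) (G := closure O) (htop _)
      (fun x hx hx2 => key2 k x hx (Box_mono (by rw [hR1]; nlinarith [hRp k]) hx2)) i
    rw [abs_sub_comm]
    refine this.trans (le_of_eq ?_)
    rw [hR1]; field_simp; ring
  have hlim : ∀ i, ∃ b, ∀ k, |bk l v (R k) i - b| ≤ 16 * c1 * N / θ ^ 2 * s k := by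
    intro i
    set D := 8 * c1 * N / θ ^ 2 with hD
    have hD0 : 0 ≤ D := by positivity
    have hg : ∀ m k, dist (bk l v (R (m + k)) i) (bk l v (R (m + (k + 1))) i)
        ≤ 2 * (D * s m) / 2 / 2 ^ k := by
      intro m k
      rw [Real.dist_eq]
      refine (hbs (m + k) i).trans ?_
      have : s (m + k) ≤ s m / 2 ^ k := by
        induction k with
        | zero => simp
        | succ k ih =>
          rw [← add_assoc, hs1, pow_succ]
          have := hsp (m + k)
          calc p * s (m + k) ≤ 1 / 2 * (s m / 2 ^ k) := by gcongr
            _ = _ := by field_simp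
      calc D * s (m + k) ≤ D * (s m / 2 ^ k) := by gcongr
        _ = _ := by field_simp
    have hcs : CauchySeq fun k => bk l v (R k) i := by
      apply cauchySeq_of_le_geometric_two (C := 2 * (D * s 0))
      intro k
      simpa using hg 0 k
    obtain ⟨b, hb⟩ := cauchySeq_tendsto_of_complete hcs
    refine ⟨b, fun m => ?_⟩
    have := dist_le_of_le_geometric_two_of_tendsto₀ (f := fun k => bk l v (R (m + k)) i)
      (C := 2 * (D * s m)) (fun k => hg m k)
      (a := b) (by
        have := (tendsto_add_atTop_iff_nat m).2 hb
        simpa [add_comm] using this)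
    rw [Real.dist_eq] at this
    simp only [add_zero] at this
    refine this.trans (le_of_eq ?_)
    rw [hD]; ring
  choose b hb using hlim
  have hb0 : ∀ i, |bk l v r0 i| ≤ 2 * N / r0 ^ 2 := by
    intro i
    have := bk_close l (v := v) (b := 0) hr0 rfl hN (G := closure O)
      (fun x hx hxl => htop 0 x (by rw [hRz]; exact hx) (by rw [hRz]; exact hxl))
      (fun x hx hx2 => by simpa using hc.bd x hx hx2) i
    simpa using this
  refine ⟨b, ?_, ?_, ?_⟩
  · have : ∀ k : ℕ, |b l| ≤ 0 + (16 * c1 * N / θ ^ 2 * s0) / 2 ^ k := by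
      intro k
      have h := hb l k
      rw [bk_l, zero_sub, abs_neg] at h
      rw [zero_add, mul_div_assoc]
      refine h.trans ?_
      gcongr
      exact hsk k
    have := le_of_contr this
    simpa using le_antisymm this (abs_nonneg _)
  · intro i
    have h := hb i 0
    rw [hRz, hsz] at h
    have h2 := hb0 i
    have h3 : 16 * c1 * N / θ ^ 2 * s0 ≤ 16 * c1 * N / θ ^ 2 * 1 := by gcongr
    have h4 : 0 ≤ C1 / (θ ^ 2 * p) * N := by positivity
    have e : b i = bk l v r0 i - (bk l v r0 i - b i) := by ring
    rw [e]
    refine (abs_sub _ _).trans ?_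
    calc _ ≤ 2 * N / r0 ^ 2 + 16 * c1 * N / θ ^ 2 * 1 + C1 / (θ ^ 2 * p) * N := by linarith
      _ = _ := by ring
  · intro r hr hrr x hx hxB
    obtain ⟨k, hk1, hk2⟩ := exists_nat_pow_near_of_lt_one (x := r / r0) (y := θ) (by positivity)
      (by rwa [div_le_one hr0]) hθ (by linarith)
    rw [lt_div_iff₀ hr0] at hk1
    rw [div_le_iff₀ hr0] at hk2
    have hk1' : θ * R k ≤ r := by rw [← hR1]; simp only [hR]; linarith
    have hk2' : r ≤ R k := by simp only [hR]; linarith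
    have hRk := hRp k
    have hsk := hsp k
    have hps : p * s k ≤ r ^ α := by
      rw [← hs1]; simp only [hs]; rw [hR1]
      exact Real.rpow_le_rpow (by positivity) hk1' hα0.le
    have hxB' : x ∈ Box (R k) := Box_mono hk2' hxB
    have h1 := key2 k x hx hxB'
    have h2 := quad_bound l (b := bk l v (R k) - b) (fun i => hb i k) hxB'
    rw [← quad_sub] at h2
    have e : v x - (∑ i, b i * x i) * x l = (v x - (∑ i, bk l v (R k) i * x i) * x l)
      + ((∑ i, bk l v (R k) i * x i) * x l - (∑ i, b i * x i) * x l) := by ring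
    rw [e]
    refine (abs_add_le _ _).trans ((add_le_add h1 h2).trans ?_)
    have hra : 0 < r ^ α := Real.rpow_pos_of_pos hr α
    have h5 : R k ^ 2 * s k ≤ r ^ 2 * r ^ α / (θ ^ 2 * p) := by
      rw [le_div_iff₀ (by positivity)]
      calc R k ^ 2 * s k * (θ ^ 2 * p) = (θ * R k) ^ 2 * (p * s k) := by ring
        _ ≤ _ := by gcongr
    have h6 : 0 ≤ (2 / r0 ^ 2 + 16 * c1 / θ ^ 2) * N * (r ^ 2 * r ^ α) := by positivity
    calc _ = C1 * N * (R k ^ 2 * s k) := by rw [hC1]; ring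
      _ ≤ C1 * N * (r ^ 2 * r ^ α / (θ ^ 2 * p)) := by gcongr
      _ = C1 / (θ ^ 2 * p) * N * (r ^ 2 * r ^ α) := by ring
      _ ≤ _ := by linarith

end PB

namespace PB
open Filter Topology Set
variable {n : ℕ}

lemma second_diff {h h' : ℝ → ℝ} {L : ℝ} (h1 : ∀ᶠ t in 𝓝 (0:ℝ), HasDerivAt h (h' t) t)
    (h2 : HasDerivAt h' L 0) :
    Tendsto (fun t => (h t + h (-t) - 2 * h 0) / t ^ 2) (𝓝[>] 0) (𝓝 L) := by
  have hneg : Tendsto (fun t : ℝ => -t) (𝓝 0) (𝓝 0) := by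
    simpa using (continuous_neg (G := ℝ)).tendsto 0
  have h1' := hneg.eventually h1
  have hc : ContinuousAt h 0 := h1.self_of_nhds.continuousAt
  apply HasDerivAt.lhopital_zero_nhdsGT (f' := fun t => h' t - h' (-t)) (g' := fun t => 2 * t)
  · apply nhdsWithin_le_nhds
    filter_upwards [h1, h1'] with t ht ht'
    have : HasDerivAt (fun t => h (-t)) (h' (-t) * (-1)) t :=
      ht'.comp t (hasDerivAt_neg t)
    have := (ht.add this).sub_const (2 * h 0)
    exact this.congr_deriv (by ring)
  · filter_upwards with t
    have := hasDerivAt_pow 2 t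
    simpa using this
  · filter_upwards [self_mem_nhdsWithin] with t ht
    have : 0 < t := ht
    positivity
  · apply tendsto_nhdsWithin_of_tendsto_nhds
    have h3 : Tendsto (fun t => h (-t)) (𝓝 0) (𝓝 (h 0)) := hc.tendsto.comp hneg
    have := (hc.tendsto.add h3).sub_const (2 * h 0)
    convert this using 2
    ring
  · apply tendsto_nhdsWithin_of_tendsto_nhds
    simpa using (continuous_pow (M := ℝ) 2).tendsto 0
  · have s1 := hasDerivAt_iff_tendsto_slope_zero.1 h2
    have s2 := s1.mono_left (nhdsWithin_mono (0:ℝ) (s := Ioi 0) (fun t (ht : 0 < t) => ht.ne'))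
    have hneg' : Tendsto (fun t : ℝ => -t) (𝓝[>] 0) (𝓝[≠] 0) := by
      apply tendsto_nhdsWithin_iff.2
      refine ⟨tendsto_nhdsWithin_of_tendsto_nhds hneg, ?_⟩
      filter_upwards [self_mem_nhdsWithin] with t ht
      have : 0 < t := ht
      simp [this.ne']
    have s3 := s1.comp hneg'
    have := (s2.add s3).const_mul (1/2)
    have e : 1 / 2 * (L + L) = L := by ring
    rw [e] at this
    refine this.congr' ?_
    filter_upwards [self_mem_nhdsWithin] with t ht
    have : 0 < t := ht
    simp only [Function.comp, zero_add, smul_eq_mul]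
    field_simp
    ring

lemma hasLap_of_lapAt [NeZero n] {u : En n → ℝ} {x : Fin n → ℝ} {U : Set (En n)} (hU : IsOpen U)
    (hx : WithLp.toLp 2 x ∈ U) (hd : ∀ y ∈ U, DifferentiableAt ℝ u y)
    (hd2 : DifferentiableAt ℝ (fderiv ℝ u) (WithLp.toLp 2 x)) :
    HasLap (fun y => u (WithLp.toLp 2 y)) x (lapAt u (WithLp.toLp 2 x)) := by
  unfold HasLap lapAt
  apply tendsto_finsetSum
  intro i _
  set X : En n := WithLp.toLp 2 x with hX
  set e : En n := EuclideanSpace.single i 1 with he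
  have hline : ∀ t : ℝ, HasDerivAt (fun t : ℝ => X + t • e) e t := by
    intro t
    simpa using ((hasDerivAt_id t).smul_const e).const_add X
  have hcont : ContinuousAt (fun t : ℝ => X + t • e) 0 := (hline 0).continuousAt
  have := second_diff (h := fun t => u (X + t • e)) (h' := fun t => fderiv ℝ u (X + t • e) e)
    (L := fderiv ℝ (fderiv ℝ u) X e e) (by
      have : ∀ᶠ t in 𝓝 (0:ℝ), X + t • e ∈ U := hcont (by
        have : X + (0:ℝ) • e = X := by simp
        simp only [this]; exact hU.mem_nhds hx)
      filter_upwards [this] with t ht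
      exact (hd _ ht).hasFDerivAt.comp_hasDerivAt t (hline t)) (by
      have h0 : X + (0:ℝ) • e = X := by simp
      have h1 : HasFDerivAt (fderiv ℝ u) (fderiv ℝ (fderiv ℝ u) X) (X + (0:ℝ) • e) := by
        rw [h0]; exact hd2.hasFDerivAt
      have h2 := h1.comp_hasDerivAt (0:ℝ) (hline 0)
      exact (ContinuousLinearMap.apply ℝ ℝ e).hasFDerivAt.comp_hasDerivAt (0:ℝ) h2)
  refine this.congr fun t => ?_
  have e1 : X + t • e = WithLp.toLp 2 (x + Pi.single i t) := by
    ext j; simp [hX, he, Pi.single_apply]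
  have e2 : X + (-t) • e = WithLp.toLp 2 (x - Pi.single i t) := by
    ext j; simp [hX, he, Pi.single_apply, sub_eq_add_neg]
  have e3 : X + (0:ℝ) • e = X := by simp
  rw [e1, e2, e3]

end PB

namespace PB
open Filter Topology Set MvPolynomial
variable {n : ℕ}

lemma pnorm_nonneg (P : MvPolynomial (Fin n) ℝ) : 0 ≤ pnorm P :=
  Finset.sum_nonneg fun _ _ => by positivity

lemma mfact_pos (d : Fin n →₀ ℕ) : 1 ≤ mfact d :=
  Nat.one_le_iff_ne_zero.2 (Finset.prod_ne_zero_iff.2 fun _ _ => Nat.factorial_ne_zero _)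

lemma pnorm_eq (P : MvPolynomial (Fin n) ℝ) {S : Finset (Fin n →₀ ℕ)} (h : P.support ⊆ S) :
    pnorm P = ∑ d ∈ S, (mfact d : ℝ) * |coeff d P| := by
  refine Finset.sum_subset h fun d _ hd => ?_
  rw [notMem_support_iff.1 hd]; simp

lemma coeff_le_pnorm (P : MvPolynomial (Fin n) ℝ) (d : Fin n →₀ ℕ) : |coeff d P| ≤ pnorm P := by
  by_cases hd : d ∈ P.support
  · have h1 : (mfact d : ℝ) * |coeff d P| ≤ pnorm P :=
      Finset.single_le_sum (f := fun d => (mfact d : ℝ) * |coeff d P|)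
        (fun _ _ => by positivity) hd
    have h2 : (1:ℝ) ≤ mfact d := by exact_mod_cast mfact_pos d
    nlinarith [abs_nonneg (coeff d P)]
  · rw [notMem_support_iff.1 hd]; simpa using pnorm_nonneg P

lemma sum_coeff_le_pnorm (P : MvPolynomial (Fin n) ℝ) :
    ∑ d ∈ P.support, |coeff d P| ≤ pnorm P := by
  refine Finset.sum_le_sum fun d _ => ?_
  have h2 : (1:ℝ) ≤ mfact d := by exact_mod_cast mfact_pos d
  nlinarith [abs_nonneg (coeff d P)]

lemma pnorm_add_le (P Q : MvPolynomial (Fin n) ℝ) : pnorm (P + Q) ≤ pnorm P + pnorm Q := by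
  classical
  set S := (P + Q).support ∪ P.support ∪ Q.support with hS
  rw [pnorm_eq (P + Q) (S := S) (by intro d hd; simp only [hS, Finset.mem_union]; tauto),
    pnorm_eq P (S := S) (by intro d hd; simp only [hS, Finset.mem_union]; tauto),
    pnorm_eq Q (S := S) (by intro d hd; simp only [hS, Finset.mem_union]; tauto),
    ← Finset.sum_add_distrib]
  refine Finset.sum_le_sum fun d _ => ?_
  rw [coeff_add, ← mul_add]
  gcongr
  exact abs_add_le _ _

lemma pnorm_zero : pnorm (0 : MvPolynomial (Fin n) ℝ) = 0 := by simp [pnorm]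

lemma pnorm_sum_le {ι : Type*} (S : Finset ι) (p : ι → MvPolynomial (Fin n) ℝ) :
    pnorm (∑ d ∈ S, p d) ≤ ∑ d ∈ S, pnorm (p d) := by
  classical
  induction S using Finset.induction_on with
  | empty => simp [pnorm_zero]
  | insert a s ha ih =>
    rw [Finset.sum_insert ha, Finset.sum_insert ha]
    exact (pnorm_add_le _ _).trans (by linarith)

/-- elementary quadratic monomial -/
noncomputable def qm (c : ℝ) (i j : Fin n) : MvPolynomial (Fin n) ℝ := C c * X i * X j

lemma qm_eq (c : ℝ) (i j : Fin n) :
    qm c i j = monomial (Finsupp.single i 1 + Finsupp.single j 1) c := by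
  rw [qm, C_mul_X_eq_monomial, X, monomial_mul, mul_one]

lemma pnorm_qm (c : ℝ) (i j : Fin n) : pnorm (qm c i j) ≤ 2 * |c| := by
  classical
  rw [qm_eq, pnorm_eq _ (support_monomial_subset), Finset.sum_singleton, coeff_monomial, if_pos rfl]
  gcongr
  by_cases h : i = j
  · subst h
    rw [← Finsupp.single_add, mfact, Finsupp.prod_single_index (by simp)]
    simp
  · rw [mfact, Finsupp.prod_add_index_of_disjoint, Finsupp.prod_single_index (by simp),
      Finsupp.prod_single_index (by simp)]
    · simp
    · exact (Finsupp.support_single_disjoint one_ne_zero one_ne_zero).2 h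

lemma derivNorm_le (P : MvPolynomial (Fin n) ℝ) (i : ℕ) : derivNorm i P ≤ pnorm P := by
  unfold derivNorm
  apply Real.sqrt_le_iff.2 ⟨pnorm_nonneg P, ?_⟩
  calc _ ≤ ∑ d ∈ P.support, ((mfact d : ℝ) * coeff d P) ^ 2 :=
        Finset.sum_le_sum_of_subset_of_nonneg (Finset.filter_subset _ _) fun _ _ _ => sq_nonneg _
    _ = ∑ d ∈ P.support, ((mfact d : ℝ) * |coeff d P|) ^ 2 :=
        Finset.sum_congr rfl fun d _ => by rw [mul_pow, mul_pow, sq_abs]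
    _ ≤ _ := Finset.sum_sq_le_sq_sum_of_nonneg fun _ _ => by positivity

lemma qm_hom (c : ℝ) (i j : Fin n) : (qm c i j).IsHomogeneous 2 :=
  ((isHomogeneous_C _ c).mul (isHomogeneous_X ℝ i)).mul (isHomogeneous_X ℝ j)

lemma qm_plap (c : ℝ) (i j : Fin n) : plap (qm c i j) = C (if i = j then 2 * c else 0) := by
  classical
  unfold plap qm
  by_cases h : i = j
  · subst h
    rw [Finset.sum_eq_single i]
    · simp [pderiv_X, two_mul, mul_add]
    · intro k _ hk
      simp [pderiv_mul, pderiv_X, Pi.single_apply, hk, hk.symm]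
    · simp
  · rw [Finset.sum_eq_zero]
    · simp [h]
    · intro k _
      by_cases h1 : k = i
      · subst h1
        simp [pderiv_mul, pderiv_X, Pi.single_apply, h, Ne.symm h]
      · by_cases h2 : j = k
        · simp [pderiv_X, Pi.single_apply, h2, Ne.symm h1]
        · simp [pderiv_X, Pi.single_apply, h2, Ne.symm h1]

lemma plap_add (P Q : MvPolynomial (Fin n) ℝ) : plap (P + Q) = plap P + plap Q := by
  simp [plap, Finset.sum_add_distrib]

lemma plap_sum {ι : Type*} (S : Finset ι) (p : ι → MvPolynomial (Fin n) ℝ) :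
    plap (∑ d ∈ S, p d) = ∑ d ∈ S, plap (p d) := by
  simp only [plap, map_sum]
  exact Finset.sum_comm

lemma qm_subst [NeZero n] (c : ℝ) (i j : Fin n) :
    substLast 0 (qm c i j) = if i = lastIdx n ∨ j = lastIdx n then 0 else qm c i j := by
  unfold substLast qm
  by_cases h1 : i = lastIdx n <;> by_cases h2 : j = lastIdx n <;> simp [h1, h2, algebraMap_eq]

lemma subst_add [NeZero n] (P Q : MvPolynomial (Fin n) ℝ) :
    substLast 0 (P + Q) = substLast 0 P + substLast 0 Q := by simp [substLast]

lemma subst_sum [NeZero n] {ι : Type*} (S : Finset ι) (p : ι → MvPolynomial (Fin n) ℝ) :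
    substLast 0 (∑ d ∈ S, p d) = ∑ d ∈ S, substLast 0 (p d) := by simp [substLast]

lemma peval_add (P Q : MvPolynomial (Fin n) ℝ) (x : En n) :
    peval (P + Q) x = peval P x + peval Q x := by simp [peval]

lemma peval_sum {ι : Type*} (S : Finset ι) (p : ι → MvPolynomial (Fin n) ℝ) (x : En n) :
    peval (∑ d ∈ S, p d) x = ∑ d ∈ S, peval (p d) x := by simp [peval]

lemma qm_peval (c : ℝ) (i j : Fin n) (x : En n) : peval (qm c i j) x = c * x i * x j := by
  simp [peval, qm]

lemma two_index {d : Fin n →₀ ℕ} (hd : mdeg d = 2) :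
    ∃ i j, d = Finsupp.single i 1 + Finsupp.single j 1 := by
  classical
  have hm : (Finsupp.toMultiset d).card = 2 := by
    rw [Finsupp.card_toMultiset]; exact hd
  obtain ⟨i, j, h⟩ := Multiset.card_eq_two.1 hm
  refine ⟨i, j, ?_⟩
  apply Multiset.toFinsupp.symm.injective
  change Finsupp.toMultiset d = Finsupp.toMultiset _
  rw [h, map_add, Finsupp.toMultiset_single, Finsupp.toMultiset_single]
  simp

lemma one_index {d : Fin n →₀ ℕ} (hd : mdeg d = 1) : ∃ i, d = Finsupp.single i 1 := by
  classical
  have hm : (Finsupp.toMultiset d).card = 1 := by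
    rw [Finsupp.card_toMultiset]; exact hd
  obtain ⟨i, h⟩ := Multiset.card_eq_one.1 hm
  refine ⟨i, ?_⟩
  apply Multiset.toFinsupp.symm.injective
  change Finsupp.toMultiset d = Finsupp.toMultiset _
  rw [h, Finsupp.toMultiset_single]
  simp

lemma zero_index {d : Fin n →₀ ℕ} (hd : mdeg d = 0) : d = 0 := by
  classical
  have hm : (Finsupp.toMultiset d).card = 0 := by
    rw [Finsupp.card_toMultiset]; exact hd
  have := Multiset.card_eq_zero.1 hm
  exact Multiset.toFinsupp.symm.injective (by change Finsupp.toMultiset d = Finsupp.toMultiset 0; rw [this]; simp)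

lemma quadRep [NeZero n] {P : MvPolynomial (Fin n) ℝ} (h2 : P.totalDegree ≤ 2) (h0 : coeff 0 P = 0)
    (h1 : ∀ i, coeff (Finsupp.single i 1) P = 0) :
    ∃ i j : (Fin n →₀ ℕ) → Fin n, P = ∑ d ∈ P.support, qm (coeff d P) (i d) (j d) := by
  have : ∀ d : Fin n →₀ ℕ, ∃ i j : Fin n, d ∈ P.support → monomial d (coeff d P) =
      qm (coeff d P) i j := by
    intro d
    by_cases hd : d ∈ P.support
    · have hle : mdeg d ≤ 2 := (le_totalDegree hd).trans h2
      have hne := mem_support_iff.1 hd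
      have : mdeg d = 2 := by
        rcases Nat.lt_or_ge (mdeg d) 2 with h | h
        · exfalso
          have : mdeg d = 0 ∨ mdeg d = 1 := by omega
          rcases this with h | h
          · rw [zero_index h] at hne; exact hne h0
          · obtain ⟨i, hi⟩ := one_index h
            rw [hi] at hne; exact hne (h1 i)
        · omega
      obtain ⟨i, j, hij⟩ := two_index this
      exact ⟨i, j, fun _ => by rw [qm_eq, ← hij]⟩
    · exact ⟨lastIdx n, lastIdx n, fun h => absurd h hd⟩
  choose i j hij using this
  refine ⟨i, j, ?_⟩
  conv_lhs => rw [as_sum P]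
  exact Finset.sum_congr rfl fun d hd => hij d hd

lemma qm_lap (c : ℝ) (i j : Fin n) (x : Fin n → ℝ) :
    HasLap (fun y => peval (qm c i j) (WithLp.toLp 2 y)) x (if i = j then 2 * c else 0) := by
  simp only [qm_peval]
  by_cases h : i = j
  · subst h
    have := HasLap.of_exact (w := fun y => c * y i * y i) (x := x)
      (fun k => if k = i then 2 * c else 0) (by
        intro k t
        by_cases hk : k = i
        · subst hk; simp; ring
        · simp [hk, Ne.symm hk]; ring)
    simpa using this
  · have := (bil_lap j (Pi.single i c) (by simp [Ne.symm h]) x)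
    simp only [h, if_false]
    convert this using 2
    simp [Pi.single_apply, ite_mul]

lemma sum_lap {ι : Type*} (S : Finset ι) (w : ι → (Fin n → ℝ) → ℝ) (L : ι → ℝ) (x : Fin n → ℝ)
    (h : ∀ d ∈ S, HasLap (w d) x (L d)) :
    HasLap (fun y => ∑ d ∈ S, w d y) x (∑ d ∈ S, L d) := by
  classical
  induction S using Finset.induction_on with
  | empty =>
    have := HasLap.of_exact (w := fun _ : Fin n → ℝ => (0:ℝ)) (x := x) (fun _ => 0) (by simp)
    simpa using this
  | insert a s ha ih =>
    simp only [Finset.sum_insert ha]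
    exact (h a (by simp)).add (ih fun d hd => h d (by simp [hd]))

end PB

namespace PB
open Filter Topology Set MvPolynomial
variable {n : ℕ}

lemma qm_zero (i j : Fin n) : qm 0 i j = 0 := by simp [qm]

lemma abs_sum3 {ι : Type*} (S : Finset ι) (c y z : ι → ℝ) {A r h : ℝ} (hA : ∑ d ∈ S, |c d| ≤ A)
    (hr : 0 ≤ r) (hh : 0 ≤ h) (hb : ∀ d ∈ S, c d = 0 ∨ |y d * z d| ≤ r * h) :
    |∑ d ∈ S, c d * y d * z d| ≤ A * (r * h) := by
  refine (Finset.abs_sum_le_sum_abs _ _).trans ?_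
  calc _ ≤ ∑ d ∈ S, |c d| * (r * h) := by
        refine Finset.sum_le_sum fun d hd => ?_
        rcases hb d hd with h0 | h0
        · simp [h0]
        · rw [mul_assoc, abs_mul]; gcongr
    _ = (∑ d ∈ S, |c d|) * (r * h) := by rw [Finset.sum_mul]
    _ ≤ _ := by gcongr

lemma polyPart [NeZero n] {Pg : MvPolynomial (Fin n) ℝ} (h2 : Pg.totalDegree ≤ 2)
    (h0 : coeff 0 Pg = 0) (h1 : ∀ i, coeff (Finsupp.single i 1) Pg = 0) (f0 : ℝ) :
    ∃ Q : MvPolynomial (Fin n) ℝ, Q.IsHomogeneous 2 ∧ plap Q = C f0 ∧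
      substLast 0 Q = substLast 0 Pg ∧ pnorm Q ≤ 4 * pnorm Pg + |f0| ∧
      (∀ x, HasLap (fun y => peval Q (WithLp.toLp 2 y)) x f0) ∧
      (∀ (x : En n) (r : ℝ), (∀ i, |x i| ≤ r) → |peval Q x| ≤ (2 * pnorm Pg + |f0|) * r ^ 2) ∧
      (∀ (x : En n) (r h : ℝ), (∀ i, |x i| ≤ r) → |x (lastIdx n)| ≤ h →
        |peval Pg x - peval Q x| ≤ (2 * pnorm Pg + |f0|) * (r * h)) := by
  classical
  obtain ⟨i, j, hP⟩ := quadRep h2 h0 h1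
  set S := Pg.support with hS
  set l := lastIdx n with hl
  set c0 : (Fin n →₀ ℕ) → ℝ := fun d => coeff d Pg with hc0
  set c' : (Fin n →₀ ℕ) → ℝ := fun d => if i d = l ∨ j d = l then 0 else c0 d with hc'
  have hc'le : ∀ d, |c' d| ≤ |c0 d| := by
    intro d; simp only [hc']; split_ifs
    · simp
    · exact le_rfl
  have hS0 : ∑ d ∈ S, |c0 d| ≤ pnorm Pg := sum_coeff_le_pnorm Pg
  have hS1 : ∑ d ∈ S, |c' d| ≤ pnorm Pg := (Finset.sum_le_sum fun d _ => hc'le d).trans hS0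
  set a := ∑ d ∈ S, (if i d = j d then 2 * c' d else 0) with ha
  have hale : |a| ≤ 2 * pnorm Pg := by
    refine (Finset.abs_sum_le_sum_abs _ _).trans ?_
    calc _ ≤ ∑ d ∈ S, 2 * |c' d| := by
          refine Finset.sum_le_sum fun d _ => ?_
          split_ifs
          · rw [abs_mul]; simp
          · simp
      _ ≤ _ := by rw [← Finset.mul_sum]; gcongr
  set c := (f0 - a) / 2 with hc
  have hcle : |c| ≤ pnorm Pg + |f0| / 2 := by
    rw [hc, abs_div, abs_two]
    have := abs_sub f0 a
    linarith
  have hcle' : |c| ≤ pnorm Pg + |f0| := by linarith [abs_nonneg f0]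
  have hPe : ∀ x : En n, peval Pg x = ∑ d ∈ S, c0 d * x (i d) * x (j d) := by
    intro x
    conv_lhs => rw [hP]
    rw [peval_sum]
    exact Finset.sum_congr rfl fun d _ => qm_peval _ _ _ _
  have hQe : ∀ x : En n, peval (∑ d ∈ S, qm (c' d) (i d) (j d) + qm c l l) x
      = ∑ d ∈ S, c' d * x (i d) * x (j d) + c * x l * x l := by
    intro x
    rw [peval_add, peval_sum, qm_peval]
    congr 1
    exact Finset.sum_congr rfl fun d _ => qm_peval _ _ _ _
  refine ⟨∑ d ∈ S, qm (c' d) (i d) (j d) + qm c l l, ?_, ?_, ?_, ?_, ?_, ?_, ?_⟩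
  · exact (IsHomogeneous.sum _ _ _ fun d _ => qm_hom _ _ _).add (qm_hom _ _ _)
  · rw [plap_add, plap_sum]
    simp only [qm_plap]
    rw [← map_sum, ← ha, if_pos trivial, ← map_add]
    congr 1; rw [hc]; ring
  · rw [subst_add, subst_sum]
    conv_rhs => rw [hP, subst_sum]
    simp only [qm_subst]
    rw [if_pos (Or.inl hl), add_zero]
    refine Finset.sum_congr rfl fun d _ => ?_
    by_cases h : i d = l ∨ j d = l
    · rw [if_pos h, if_pos h]
    · rw [if_neg h, if_neg h]
      simp only [hc', if_neg h, hc0]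
  · refine (pnorm_add_le _ _).trans ?_
    have e1 : pnorm (∑ d ∈ S, qm (c' d) (i d) (j d)) ≤ 2 * pnorm Pg := by
      refine (pnorm_sum_le _ _).trans ?_
      calc _ ≤ ∑ d ∈ S, 2 * |c' d| := Finset.sum_le_sum fun d _ => pnorm_qm _ _ _
        _ ≤ _ := by rw [← Finset.mul_sum]; gcongr
    have e2 := pnorm_qm c l l
    linarith
  · intro x
    simp only [peval_add, peval_sum]
    have := (sum_lap S _ _ x fun d _ => qm_lap (c' d) (i d) (j d) x).add (qm_lap c l l x)
    convert this using 1
    rw [if_pos rfl, ← ha, hc]; ring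
  · intro x r hx
    have hr : 0 ≤ r := (abs_nonneg _).trans (hx l)
    rw [hQe]
    refine (abs_add_le _ _).trans ?_
    have e1 := abs_sum3 S c' (fun d => x (i d)) (fun d => x (j d)) hS1 hr hr (fun d _ => Or.inr (by
      rw [abs_mul]; exact mul_le_mul (hx _) (hx _) (abs_nonneg _) hr))
    have e2 : |c * x l * x l| ≤ (pnorm Pg + |f0|) * (r * r) := by
      rw [mul_assoc, abs_mul, abs_mul]
      have := pnorm_nonneg Pg
      gcongr <;> exact hx l
    calc _ ≤ pnorm Pg * (r * r) + (pnorm Pg + |f0|) * (r * r) := add_le_add e1 e2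
      _ = _ := by ring
  · intro x r h hx hxl
    have hr : 0 ≤ r := (abs_nonneg _).trans (hx l)
    have hh : 0 ≤ h := (abs_nonneg _).trans hxl
    have e : peval Pg x - peval (∑ d ∈ S, qm (c' d) (i d) (j d) + qm c l l) x
        = ∑ d ∈ S, (c0 d - c' d) * x (i d) * x (j d) - c * x l * x l := by
      rw [hQe, hPe, ← sub_sub, ← Finset.sum_sub_distrib]
      congr 1
      exact Finset.sum_congr rfl fun d _ => by ring
    rw [e]
    refine (abs_sub _ _).trans ?_
    have e1 := abs_sum3 S (fun d => c0 d - c' d) (fun d => x (i d)) (fun d => x (j d))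
      (A := pnorm Pg) (by
        refine le_trans (Finset.sum_le_sum fun d _ => ?_) hS0
        simp only [hc']; split_ifs
        · simp
        · simp) hr hh (fun d _ => by
      by_cases hd : i d = l ∨ j d = l
      · right
        rw [abs_mul]
        rcases hd with hd | hd
        · rw [hd, mul_comm]; exact mul_le_mul (hx _) hxl (abs_nonneg _) hr
        · rw [hd]; exact mul_le_mul (hx _) hxl (abs_nonneg _) hr
      · left; simp only [hc', if_neg hd, sub_self])
    have e2 : |c * x l * x l| ≤ (pnorm Pg + |f0|) * (r * h) := by
      rw [mul_assoc, abs_mul, abs_mul]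
      have := pnorm_nonneg Pg
      gcongr
      exact hx l
    calc _ ≤ pnorm Pg * (r * h) + (pnorm Pg + |f0|) * (r * h) := add_le_add e1 e2
      _ = _ := by ring

end PB

namespace PB
open Filter Topology Set MvPolynomial Metric
variable {n : ℕ}

lemma coord_le (x : En n) (i : Fin n) : |x i| ≤ ‖x‖ := by
  have := PiLp.norm_apply_le x i
  simpa using this

lemma norm_le_box (hn : 1 ≤ n) {x : En n} {r : ℝ} (hr : ∀ i, |x i| ≤ r) : ‖x‖ ≤ n * r := by
  have h0 : 0 ≤ r := (abs_nonneg _).trans (hr ⟨0, hn⟩)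
  rw [EuclideanSpace.norm_eq]
  apply Real.sqrt_le_iff.2 ⟨by positivity, ?_⟩
  have hn1 : (1:ℝ) ≤ n := by exact_mod_cast hn
  calc ∑ i, ‖x i‖ ^ 2 ≤ ∑ _i : Fin n, r ^ 2 := by
        refine Finset.sum_le_sum fun i _ => ?_
        rw [Real.norm_eq_abs]
        have := hr i
        gcongr
    _ = n * r ^ 2 := by simp
    _ ≤ _ := by
        have : 0 ≤ (n:ℝ) * r ^ 2 := by positivity
        nlinarith

lemma xpn_le [NeZero n] (x : En n) : xpn x ≤ ‖x‖ := by
  rw [EuclideanSpace.norm_eq, xpn]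
  apply Real.sqrt_le_sqrt
  calc _ ≤ ∑ i, (x i) ^ 2 :=
        Finset.sum_le_sum_of_subset_of_nonneg (Finset.erase_subset _ _) fun _ _ _ => sq_nonneg _
    _ = _ := by simp

lemma xpn_cont [NeZero n] : Continuous (xpn : En n → ℝ) := by
  unfold xpn; fun_prop

lemma peval_cont (P : MvPolynomial (Fin n) ℝ) :
    Continuous (fun x : Fin n → ℝ => peval P (WithLp.toLp 2 x)) := by
  have : (fun x : Fin n → ℝ => peval P (WithLp.toLp 2 x)) = fun x => MvPolynomial.eval x P := by
    funext x; simp [peval]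
  rw [this]
  exact MvPolynomial.continuous_eval P

lemma le_on_closure {E : Type*} [TopologicalSpace E] {A B : Set E} (hB : IsOpen B) {F G : E → ℝ}
    (hF : ContinuousOn F (closure A ∩ B)) (hG : ContinuousOn G (closure A ∩ B))
    (h : ∀ x ∈ A ∩ B, F x ≤ G x) : ∀ x ∈ closure A ∩ B, F x ≤ G x := by
  intro x hx
  have hs : A ∩ B ⊆ closure A ∩ B := inter_subset_inter_left _ subset_closure
  exact ContinuousWithinAt.closure_le (hB.closure_inter hx) ((hF x hx).mono hs)
    ((hG x hx).mono hs) h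

lemma rpow_nr (hn : 1 ≤ n) {α r y : ℝ} (k : ℕ) (hα0 : 0 < α) (hα1 : α < 1) (hr : 0 < r) (hy0 : 0 ≤ y)
    (hy : y ≤ n * r) : y ^ ((k : ℝ) + α) ≤ n ^ (k + 1) * (r ^ k * r ^ α) := by
  have hn1 : (1:ℝ) ≤ n := by exact_mod_cast hn
  have hn0 : (0:ℝ) < n := by linarith
  calc y ^ ((k : ℝ) + α) ≤ (n * r) ^ ((k : ℝ) + α) := Real.rpow_le_rpow hy0 hy (by positivity)
    _ = (n:ℝ) ^ ((k : ℝ) + α) * (r ^ ((k : ℝ) + α)) := Real.mul_rpow hn0.le hr.le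
    _ ≤ (n:ℝ) ^ (((k + 1 : ℕ)) : ℝ) * (r ^ ((k : ℝ) + α)) := by
        gcongr
        push_cast; linarith
    _ = _ := by rw [Real.rpow_natCast, Real.rpow_add hr, Real.rpow_natCast]

end PB

/-- Lemma 2.1: boundary pointwise `C^{2,α}` regularity for the Dirichlet
problem when `u(0) = |Du(0)| = 0` and `|Dg(0)| = 0`. -/
theorem stmt_7 (n : ℕ) [NeZero n] (hn : 2 ≤ n) (α : ℝ) (hα0 : 0 < α) (hα1 : α < 1) (M : ℝ) :
    ∃ C : ℝ, 0 < C ∧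
      ∀ (Ω : Set (En n)) (u f g : En n → ℝ)
        (Pu Pf Pg : MvPolynomial (Fin n) ℝ) (Ku Kf Kg KΩ Mu : ℝ),
        IsOpen Ω → IsConnected Ω → IsBounded Ω → (0 : En n) ∈ frontier Ω →
        SolvesDirichlet Ω u f g →
        -- `∂Ω ∈ C^{1,α}(0)` with `‖∂Ω∩B₁‖_{C^{1,α}(0)} ≤ M`
        0 ≤ KΩ → Domain1α α KΩ Ω → KΩ ≤ M →
        -- `u ∈ C^{1,α}(0)` with `u(0) = |Du(0)| = 0`
        Pu.totalDegree ≤ 1 →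
        (∀ x ∈ Ω ∩ ball (0 : En n) 1, |u x - peval Pu x| ≤ Ku * ‖x‖ ^ ((1 : ℝ) + α)) →
        (∀ d : Fin n →₀ ℕ, mdeg d ≤ 1 → MvPolynomial.coeff d Pu = 0) →
        -- `f ∈ C^{α}(0)` (the polynomial `Pf` is the constant `f(0)`)
        Pf.totalDegree ≤ 0 → 0 ≤ Kf →
        (∀ x ∈ Ω ∩ ball (0 : En n) 1, |f x - peval Pf x| ≤ Kf * ‖x‖ ^ α) →
        -- `g ∈ C^{2,α}(0)` with `|Dg(0)| = 0`
        Pg.totalDegree ≤ 2 → 0 ≤ Kg →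
        (∀ x ∈ frontier Ω ∩ ball (0 : En n) 1,
          |g x - peval Pg x| ≤ Kg * ‖x‖ ^ ((2 : ℝ) + α)) →
        (∀ i, MvPolynomial.coeff (Finsupp.single i 1) Pg = 0) →
        -- `‖u‖_{L^∞(Ω∩B₁)} ≤ Mu`
        0 ≤ Mu → (∀ x ∈ Ω ∩ ball (0 : En n) 1, |u x| ≤ Mu) →
        -- conclusion: `u ∈ C^{2,α}(0)` with homogeneous quadratic `P`
        ∃ P : MvPolynomial (Fin n) ℝ, P.IsHomogeneous 2 ∧
          (∀ x ∈ Ω ∩ ball (0 : En n) 1,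
            |u x - peval P x| ≤
              C * ‖x‖ ^ ((2 : ℝ) + α) * (Mu + (pnorm Pf + Kf) + (pnorm Pg + Kg))) ∧
          derivNorm 2 P ≤ C * (Mu + (pnorm Pf + Kf) + (pnorm Pg + Kg)) ∧
          plap P = MvPolynomial.C (MvPolynomial.coeff 0 Pf) ∧
          substLast 0 P = substLast 0 Pg := by
  classical
  have hn1 : 1 ≤ n := by omega
  have hnr : (1:ℝ) ≤ n := by exact_mod_cast hn1
  have hn0 : (0:ℝ) < n := by linarith
  set l := lastIdx n with hl
  set K : ℝ := (|M| + 1) * n ^ 2 with hKdef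
  have hK : 0 < K := by positivity
  obtain ⟨r0, C, hr0, hrR, hr1, hC, hcore⟩ := PB.core_thm n hα0 hα1 K hK (1 / (2 * n)) (by positivity)
  set D : ℝ := n ^ 3 + 2 * K + 3 + n with hD
  have hD0 : 0 < D := by positivity
  have hrp : 0 < r0 ^ ((2:ℝ) + α) := Real.rpow_pos_of_pos hr0 _
  set C2 : ℝ := (3 + n * (C * D)) / r0 ^ ((2:ℝ) + α) with hC2
  have hC20 : 0 < C2 := by positivity
  refine ⟨C * D + C2 + (4 + 2 * n * (C * D)), by positivity, ?_⟩
  intro Ω u f g Pu Pf Pg Ku Kf Kg KΩ Mu hop _hconn _hbdd h0fr hsol hKΩ hdom hKM hPu hu hPu0 hPf hKf hf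
    hPg hKg hg hPg1 hMu huM
  obtain ⟨hucont, hulap, hug⟩ := hsol
  obtain ⟨hdup, hdlow⟩ := hdom
  set N0 := Mu + (pnorm Pf + Kf) + (pnorm Pg + Kg) with hN0
  have hpf := PB.pnorm_nonneg Pf
  have hpg := PB.pnorm_nonneg Pg
  have hN00 : 0 ≤ N0 := by positivity
  set f0 := MvPolynomial.coeff 0 Pf with hf0
  have hf0le : |f0| ≤ pnorm Pf := PB.coeff_le_pnorm Pf 0
  have hKM' : KΩ ≤ |M| + 1 := by linarith [le_abs_self M]
  -- polynomials
  have hPuz : Pu = 0 := by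
    ext d
    rw [MvPolynomial.coeff_zero]
    by_contra hd
    exact hd (hPu0 d ((MvPolynomial.le_totalDegree (MvPolynomial.mem_support_iff.2 hd)).trans hPu))
  have hPfe : ∀ x, peval Pf x = f0 := by
    intro x
    have := MvPolynomial.totalDegree_eq_zero_iff_eq_C.1 (Nat.le_zero.1 hPf)
    rw [this]; simp [peval, hf0]
  have hu' : ∀ x ∈ Ω ∩ ball (0 : En n) 1, |u x| ≤ Ku * ‖x‖ ^ ((1 : ℝ) + α) := by
    intro x hx
    have := hu x hx
    rw [hPuz] at this
    simpa [peval] using this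
  have hucl : ∀ x ∈ closure Ω ∩ ball (0 : En n) 1, |u x| ≤ Ku * ‖x‖ ^ ((1 : ℝ) + α) := by
    apply PB.le_on_closure isOpen_ball hucont.abs _ hu'
    refine Continuous.continuousOn ?_
    exact continuous_const.mul (continuous_norm.rpow_const fun _ => Or.inr (by positivity))
  have huMcl : ∀ x ∈ closure Ω ∩ ball (0 : En n) 1, |u x| ≤ Mu :=
    PB.le_on_closure isOpen_ball hucont.abs continuousOn_const huM
  have hlowcl : ∀ x ∈ closure Ω ∩ ball (0 : En n) 1, -(KΩ * (xpn x) ^ ((1 : ℝ) + α)) ≤ xn x := by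
    apply PB.le_on_closure isOpen_ball
    · refine Continuous.continuousOn ?_
      exact (continuous_const.mul (PB.xpn_cont.rpow_const fun _ => Or.inr (by positivity))).neg
    · refine Continuous.continuousOn ?_
      unfold xn; fun_prop
    · intro x hx
      by_contra hlt
      exact hdlow x (by simpa using hx.2) (not_le.1 hlt) hx.1
  have h0cl : (0 : En n) ∈ closure Ω ∩ ball (0 : En n) 1 := ⟨frontier_subset_closure h0fr, by simp⟩
  have hu0 : u 0 = 0 := by
    have := hucl 0 h0cl
    rw [norm_zero, Real.zero_rpow (by positivity), mul_zero] at this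
    exact abs_nonpos_iff.1 this
  have hPg0 : MvPolynomial.coeff 0 Pg = 0 := by
    have h1 := hg 0 ⟨h0fr, by simp⟩
    rw [norm_zero, Real.zero_rpow (by positivity), mul_zero, ← hug 0 ⟨h0fr, by simp⟩, hu0] at h1
    have h2 := abs_nonpos_iff.1 h1
    have h3 : peval Pg 0 = MvPolynomial.coeff 0 Pg := by
      simp [peval, MvPolynomial.constantCoeff_eq]
    rw [h3] at h2
    linarith
  obtain ⟨Q, hQh, hQl, hQs, hQn, hQlap, hQb, hQd⟩ := PB.polyPart hPg hPg0 hPg1 f0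
  have hBle : 2 * pnorm Pg + |f0| ≤ 2 * N0 := by rw [hN0]; linarith
  -- transport
  set O : Set (Fin n → ℝ) := {x | (WithLp.toLp 2 x : En n) ∈ Ω} with hO
  have hOcl : ∀ x : Fin n → ℝ, x ∈ closure O ↔ (WithLp.toLp 2 x : En n) ∈ closure Ω := by
    intro x
    have := (PiLp.homeomorph 2 (fun _ : Fin n => ℝ)).symm.preimage_closure Ω
    exact (Set.ext_iff.1 this x).symm
  have hTc : Continuous (fun x : Fin n → ℝ => (WithLp.toLp 2 x : En n)) :=
    (PiLp.homeomorph 2 (fun _ : Fin n => ℝ)).symm.continuous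
  have hnb : ∀ (x : Fin n → ℝ) (r : ℝ), x ∈ PB.Box r → ‖(WithLp.toLp 2 x : En n)‖ ≤ n * r :=
    fun x r hx => PB.norm_le_box hn1 (x := WithLp.toLp 2 x) hx
  have hball : ∀ (x : Fin n → ℝ) (r : ℝ), r ≤ r0 → x ∈ PB.Box r →
      (WithLp.toLp 2 x : En n) ∈ ball (0 : En n) 1 := by
    intro x r hr hx
    have h1 := hnb x r hx
    have h2 : n * r ≤ n * (1 / (2 * n)) := by gcongr; linarith
    have h3 : (n:ℝ) * (1 / (2 * n)) = 1 / 2 := by field_simp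
    rw [mem_ball_zero_iff]; linarith
  set v : (Fin n → ℝ) → ℝ := fun x => u (WithLp.toLp 2 x) - peval Q (WithLp.toLp 2 x) with hv
  have hxp : ∀ (x : Fin n → ℝ) (r : ℝ), 0 < r → x ∈ PB.Box r →
      KΩ * (xpn (WithLp.toLp 2 x : En n)) ^ ((1 : ℝ) + α) ≤ K * r * r ^ α := by
    intro x r hr hx
    have := PB.rpow_nr hn1 1 hα0 hα1 hr (Real.sqrt_nonneg _)
      ((PB.xpn_le (WithLp.toLp 2 x : En n)).trans (hnb x r hx))
    simp only [Nat.cast_one, pow_one] at this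
    have hra : 0 < r ^ α := Real.rpow_pos_of_pos hr α
    calc _ ≤ (|M| + 1) * (n ^ (1 + 1) * (r * r ^ α)) := by
          apply mul_le_mul hKM' this (Real.rpow_nonneg (Real.sqrt_nonneg _) _) (by positivity)
      _ = _ := by rw [hKdef]; ring
  have hup : ∀ r, 0 < r → r ≤ r0 → ∀ x ∈ PB.Box r, K * r * r ^ α < x l → x ∈ O := by
    intro r hr hrr x hx hxl
    refine hdup _ (by simpa using hball x r hrr hx) ?_
    exact lt_of_le_of_lt (hxp x r hr hx) hxl
  have hlow : ∀ r, 0 < r → r ≤ r0 → ∀ x ∈ closure O, x ∈ PB.Box r → -(K * r * r ^ α) ≤ x l := by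
    intro r hr hrr x hx hxB
    have h1 := hlowcl _ ⟨(hOcl x).1 hx, hball x r hrr hxB⟩
    have h2 := hxp x r hr hxB
    have h3 : xn (WithLp.toLp 2 x : En n) = x l := rfl
    rw [h3] at h1
    linarith
  have hQb' : ∀ (x : Fin n → ℝ) (r : ℝ), x ∈ PB.Box r →
      |peval Q (WithLp.toLp 2 x : En n)| ≤ 2 * N0 * r ^ 2 := by
    intro x r hx
    refine (hQb (WithLp.toLp 2 x) r hx).trans ?_
    gcongr
  have hCore : PB.Core l O α K (D * N0) r0 v := by
    refine ⟨hop.preimage hTc, ?_, hup, hlow, ?_, ?_, ?_⟩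
    · refine ContinuousOn.sub ?_ (PB.peval_cont Q).continuousOn
      exact hucont.comp hTc.continuousOn fun x hx => ⟨(hOcl x).1 hx.1, hball x r0 le_rfl hx.2⟩
    · intro r hr hrr x hx hxB
      have hb := hball x r hrr hxB
      have hmem : (WithLp.toLp 2 x : En n) ∈ Ω ∩ ball (0 : En n) 1 := ⟨hx, hb⟩
      have h1 := PB.hasLap_of_lapAt (u := u) (hop.inter isOpen_ball) hmem
        (fun y hy => (hulap y hy).1) (hulap _ hmem).2.1
      refine ⟨_, h1.sub (hQlap x), ?_⟩
      rw [(hulap _ hmem).2.2, ← hPfe (WithLp.toLp 2 x)]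
      refine (hf _ hmem).trans ?_
      have h2 := PB.rpow_nr hn1 0 hα0 hα1 hr (norm_nonneg _) (hnb x r hxB)
      simp only [Nat.cast_zero, zero_add, pow_one, pow_zero, one_mul] at h2
      have hra : 0 < r ^ α := Real.rpow_pos_of_pos hr α
      have h3 : Kf ≤ N0 := by rw [hN0]; linarith
      have h4 : (n:ℝ) ≤ D := by
        have : (0:ℝ) < n ^ 3 := by positivity
        rw [hD]; linarith
      calc _ ≤ N0 * (D * r ^ α) := by
            apply mul_le_mul h3 (h2.trans _) (Real.rpow_nonneg (norm_nonneg _) _) hN00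
            gcongr
        _ = _ := by ring
    · intro r hr hrr x hx hxB hxO
      have hb := hball x r hrr hxB
      have hcl := (hOcl x).1 hx
      have hfr : (WithLp.toLp 2 x : En n) ∈ frontier Ω ∩ ball (0 : En n) 1 := by
        refine ⟨?_, hb⟩
        rw [hop.frontier_eq]; exact ⟨hcl, hxO⟩
      have hra : 0 < r ^ α := Real.rpow_pos_of_pos hr α
      have h1 := hg _ hfr
      rw [← hug _ hfr] at h1
      have h2 := PB.rpow_nr hn1 2 hα0 hα1 hr (norm_nonneg _) (hnb x r hxB)
      simp only [Nat.cast_ofNat] at h2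
      have hxl : |x l| ≤ K * r * r ^ α := by
        rw [abs_le]
        refine ⟨hlow r hr hrr x hx hxB, ?_⟩
        by_contra hlt
        exact hxO (hup r hr hrr x hxB (not_le.1 hlt))
      have h3 := hQd (WithLp.toLp 2 x) r _ hxB hxl
      have h4 : (2 * pnorm Pg + |f0|) * (r * (K * r * r ^ α)) ≤ 2 * N0 * (r * (K * r * r ^ α)) := by
        gcongr
      have h5 : Kg ≤ N0 := by rw [hN0]; linarith
      have h6 : Kg * ‖(WithLp.toLp 2 x : En n)‖ ^ ((2:ℝ) + α) ≤ N0 * (n ^ (2 + 1) * (r ^ 2 * r ^ α)) :=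
        mul_le_mul h5 h2 (Real.rpow_nonneg (norm_nonneg _) _) hN00
      have e : v x = (u (WithLp.toLp 2 x) - peval Pg (WithLp.toLp 2 x)) +
        (peval Pg (WithLp.toLp 2 x) - peval Q (WithLp.toLp 2 x)) := by simp only [hv]; ring
      rw [e]
      refine (abs_add_le _ _).trans ?_
      have h7 : 0 ≤ (3 + n) * N0 * r ^ 2 * r ^ α := by positivity
      calc _ ≤ N0 * (n ^ (2 + 1) * (r ^ 2 * r ^ α)) + 2 * N0 * (r * (K * r * r ^ α))
            + (3 + n) * N0 * r ^ 2 * r ^ α := by linarith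
        _ = _ := by rw [hD]; ring
    · intro x hx hxB
      have h1 := huMcl _ ⟨(hOcl x).1 hx, hball x r0 le_rfl hxB⟩
      have h2 := hQb' x r0 hxB
      have h3 : 2 * N0 * r0 ^ 2 ≤ 2 * N0 * 1 := by
        gcongr; exact pow_le_one₀ hr0.le hr1
      have h4 : Mu ≤ N0 := by rw [hN0]; linarith
      have h5 : 0 ≤ (n ^ 3 + 2 * K + n) * N0 := by positivity
      calc |v x| ≤ |u (WithLp.toLp 2 x)| + |peval Q (WithLp.toLp 2 x)| := abs_sub _ _
        _ ≤ 3 * N0 + (n ^ 3 + 2 * K + n) * N0 := by linarith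
        _ = _ := by rw [hD]; ring
  obtain ⟨b, hbl, hbb, hbv⟩ := hcore l O v (D * N0) hCore (by
    refine ⟨|Ku| * n ^ 2 + 2 * N0, ?_⟩
    intro r hr hrr x hx hxB
    have hra : 0 < r ^ α := Real.rpow_pos_of_pos hr α
    have h1 := hucl _ ⟨(hOcl x).1 hx, hball x r hrr hxB⟩
    have h2 := hQb' x r hxB
    have h3 := PB.rpow_nr hn1 1 hα0 hα1 hr (norm_nonneg _) (hnb x r hxB)
    simp only [Nat.cast_one, pow_one] at h3
    have h4 : Ku * ‖(WithLp.toLp 2 x : En n)‖ ^ ((1:ℝ) + α) ≤ |Ku| * (n ^ (1 + 1) * (r * r ^ α)) :=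
      mul_le_mul (le_abs_self _) h3 (Real.rpow_nonneg (norm_nonneg _) _) (abs_nonneg _)
    have h5 : r ≤ r ^ α := by
      have := Real.rpow_le_rpow_of_exponent_ge hr (hrr.trans hr1) hα1.le
      simpa using this
    have h6 : 2 * N0 * r ^ 2 ≤ 2 * N0 * (r * r ^ α) := by rw [sq]; gcongr
    calc |v x| ≤ |u (WithLp.toLp 2 x)| + |peval Q (WithLp.toLp 2 x)| := abs_sub _ _
      _ ≤ |Ku| * (n ^ (1 + 1) * (r * r ^ α)) + 2 * N0 * (r * r ^ α) := by linarith
      _ = _ := by ring)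
  -- conclusion
  have hPe : ∀ x : En n, peval (Q + ∑ i, PB.qm (b i) i l) x = peval Q x + (∑ i, b i * x i) * x l := by
    intro x
    rw [PB.peval_add, PB.peval_sum, Finset.sum_mul]
    simp only [PB.qm_peval]
  have hCD : 0 < C * D := by positivity
  refine ⟨Q + ∑ i, PB.qm (b i) i l, ?_, ?_, ?_, ?_, ?_⟩
  · exact hQh.add (MvPolynomial.IsHomogeneous.sum _ _ _ fun d _ => PB.qm_hom _ _ _)
  · intro x hx
    set y : Fin n → ℝ := fun i => x i with hy
    have hyx : (WithLp.toLp 2 y : En n) = x := by ext i; rfl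
    have hyO : y ∈ O := by change (WithLp.toLp 2 y : En n) ∈ Ω; rw [hyx]; exact hx.1
    have hyB : y ∈ PB.Box ‖x‖ := fun i => PB.coord_le x i
    have hx0 : x ≠ 0 := by
      rintro rfl
      rw [hop.frontier_eq] at h0fr
      exact h0fr.2 hx.1
    have hxn : 0 < ‖x‖ := norm_pos_iff.2 hx0
    have hx1 : ‖x‖ < 1 := by simpa using hx.2
    have hpw : ‖x‖ ^ ((2:ℝ) + α) = ‖x‖ ^ 2 * ‖x‖ ^ α := by
      rw [Real.rpow_add hxn]; norm_num
    have hpp : 0 < ‖x‖ ^ ((2:ℝ) + α) := Real.rpow_pos_of_pos hxn _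
    rw [hPe]
    rcases le_or_gt ‖x‖ r0 with hle | hgt
    · have := hbv ‖x‖ hxn hle y (subset_closure hyO) hyB
      simp only [hv] at this
      rw [hyx, ← hpw] at this
      have e : u x - (peval Q x + (∑ i, b i * x i) * x l)
        = u x - peval Q x - (∑ i, b i * y i) * y l := by simp only [hy]; ring
      rw [e]
      refine this.trans ?_
      have : 0 ≤ (C2 + (4 + 2 * n * (C * D))) * (‖x‖ ^ ((2:ℝ) + α) * N0) := by positivity
      linarith
    · have h1 := huM x hx
      have h2 := hQb' y ‖x‖ hyB
      rw [hyx] at h2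
      have h3 : |(∑ i, b i * x i) * x l| ≤ n * (C * (D * N0)) * ‖x‖ ^ 2 := PB.quad_bound l hbb hyB
      have hsq : ‖x‖ ^ 2 ≤ 1 := pow_le_one₀ hxn.le hx1.le
      have h4 : 2 * N0 * ‖x‖ ^ 2 ≤ 2 * N0 * 1 := by gcongr
      have h5 : n * (C * (D * N0)) * ‖x‖ ^ 2 ≤ n * (C * (D * N0)) * 1 := by gcongr
      have h6 : Mu ≤ N0 := by rw [hN0]; linarith
      have h7 : |u x - (peval Q x + (∑ i, b i * x i) * x l)| ≤ (3 + n * (C * D)) * N0 := by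
        have a1 := abs_sub (u x) (peval Q x + (∑ i, b i * x i) * x l)
        have a2 := abs_add_le (peval Q x) ((∑ i, b i * x i) * x l)
        linarith
      have h8 : r0 ^ ((2:ℝ) + α) ≤ ‖x‖ ^ ((2:ℝ) + α) :=
        Real.rpow_le_rpow hr0.le hgt.le (by positivity)
      have h9 : (3 + n * (C * D)) * N0 ≤ C2 * ‖x‖ ^ ((2:ℝ) + α) * N0 := by
        apply mul_le_mul_of_nonneg_right _ hN00
        rw [hC2, div_mul_eq_mul_div, le_div_iff₀ hrp]
        gcongr
      have : 0 ≤ (C * D + (4 + 2 * n * (C * D))) * (‖x‖ ^ ((2:ℝ) + α) * N0) := by positivity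
      linarith
  · refine (PB.derivNorm_le _ _).trans ((PB.pnorm_add_le _ _).trans ?_)
    have h1 : pnorm (∑ i, PB.qm (b i) i l) ≤ n * (2 * (C * (D * N0))) := by
      refine (PB.pnorm_sum_le _ _).trans ?_
      calc _ ≤ ∑ _i : Fin n, 2 * (C * (D * N0)) := by
            refine Finset.sum_le_sum fun i _ => (PB.pnorm_qm _ _ _).trans ?_
            have := hbb i
            linarith
        _ = _ := by simp
    have h2 : pnorm Q ≤ 4 * N0 := by rw [hN0]; linarith
    have : 0 ≤ (C * D + C2) * N0 := by positivity
    linarith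
  · rw [PB.plap_add, PB.plap_sum, hQl]
    rw [Finset.sum_eq_zero, add_zero]
    intro i _
    rw [PB.qm_plap]
    by_cases hi : i = l
    · rw [if_pos hi, hi, hbl]; simp
    · rw [if_neg hi]; simp
  · rw [PB.subst_add, PB.subst_sum, hQs]
    rw [Finset.sum_eq_zero, add_zero]
    intro i _
    rw [PB.qm_subst, if_pos (Or.inr hl)]
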